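/- arXiv:1202.2279 — 8 statements merged into one kernel-verified Lean document; each statement's English description precedes it below -/
import Mathlib

section
/- Assume hypotheses (H), and assume moreover that for each j ∈ {1,…,k} the vector e_j has the form e_j = (0,…,0,1,0,…,0, e′_j), where the 1 is in the j-th position and e′_j ∈ ℝ^{p−k}. Then: (1) no nontrivial ℚ-linear combination of e′_1,…,e′_k belongs to ℚ^{p−k}; and (2) for every ε > 0 there exists Q_0 such that for every Q ≥ Q_0, for all integers λ_1,…,λ_k, not all zero, with |λ_j| ≤ Q^{τ_j} for every j, and for every S ∈ ℤ^{p−k}, one has ‖λ_1e′_1 + … + λ_ke′_k − S‖ ≥ Q^{−1−ε}, where ‖·‖ is a fixed norm on ℝ^{p−k}. -/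
/-!
For every `n` the number `∑ j, λ_j L_n(e_j) - ∑ m, ℓ_{k+m,n} (∑ j, λ_j e'_j - S)_m` is an integer.
Write `|λ_j| = exp (β_j Y)` with `Y = log Q`, and `Q_n = exp (x Y)`. Up to factors `exp (o(Y))` the
term `λ_j L_n(e_j)` has size `exp ((β_j - τ_j x) Y)` and, if the claimed lower bound fails, the
terms of the second sum are at most `exp ((x - 1 - ε) Y)`. Slightly to the left of the point where
the increasing line `x - 1 - ε` meets the upper envelope of the decreasing lines `β_j - τ_j x`, that
envelope is negative, lies above the increasing line and, the slopes being distinct, is attained by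
a single line. For such `x` one term dominates all others and is small, so the integer above is
nonzero of absolute value less than `1`, a contradiction.

Compactness of the box `0 ≤ β ≤ τ` makes the margins in this comparison uniform. Every large `x Y`
is, up to a factor `1 + o(1)`, some `log Q_n` with all `cos (n ω_j + φ_j)` bounded away from `0`:
by recurrence of rotations such `n` occur with bounded gaps, and `log Q_{n+1} / log Q_n → 1`.
-/

open Filter Topology Real

variable {ι κ : Type*}

/-! ### Recurrence and choice of indices -/

theorem exists_bounded_gap_iterate_mem_of_isometry {X : Type*} [PseudoMetricSpace X]
    [CompactSpace X] {T : X → X} (hT : Isometry T) {x : X} {U : Set X} (hU : U ∈ 𝓝 x) :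
    ∃ G : ℕ, ∀ N : ℕ, ∃ n, N ≤ n ∧ n ≤ N + G ∧ T^[n] x ∈ U := by
  have hiter (m : ℕ) (y z : X) : dist (T^[m] y) (T^[m] z) = dist y z := by
    induction m with
    | zero => rfl
    | succ m ih => rw [Function.iterate_succ_apply', Function.iterate_succ_apply', hT.dist_eq, ih]
  obtain ⟨δ, hδ, hball⟩ := Metric.mem_nhds_iff.1 hU
  have htb : TotallyBounded (Set.range fun n => T^[n] x) :=
    isCompact_univ.totallyBounded.subset (Set.subset_univ _)
  obtain ⟨t, htsub, htfin, hcover⟩ := Metric.finite_approx_of_totallyBounded htb δ hδ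
  have hvisit : ∀ y ∈ t, ∃ n, T^[n] x = y := fun y hy => htsub hy
  choose! time htime using hvisit
  obtain ⟨G, hG⟩ := (htfin.image time).bddAbove
  refine ⟨G, fun N => ?_⟩
  obtain ⟨y, hy, hdist⟩ := Set.mem_iUnion₂.1 (hcover ⟨N + G, rfl⟩)
  have hm : time y ≤ G := hG ⟨y, hy, rfl⟩
  refine ⟨N + G - time y, by omega, by omega, hball ?_⟩
  have hsplit : T^[N + G] x = T^[time y] (T^[N + G - time y] x) := by
    rw [← Function.iterate_add_apply, Nat.add_sub_cancel' (by omega)]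
  rw [Metric.mem_ball] at hdist ⊢
  rwa [← hiter (time y), htime y hy, ← hsplit]

theorem exists_bounded_gap_lt_abs_cos [Finite ι] {ω φ : ι → ℝ} {n₀ : ℕ}
    (h : ∀ j, cos (n₀ * ω j + φ j) ≠ 0) :
    ∃ c > 0, ∃ G : ℕ, ∀ N : ℕ, ∃ n, N ≤ n ∧ n ≤ N + G ∧ ∀ j, c < |cos (n * ω j + φ j)| := by
  have := Fintype.ofFinite ι
  have : Fact (0 < 2 * π) := ⟨two_pi_pos⟩
  have : CompactSpace Angle := inferInstanceAs (CompactSpace (AddCircle (2 * π)))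
  obtain ⟨c, hc, hc0⟩ : ∃ c, (∀ j, c < |cos (n₀ * ω j + φ j)|) ∧ 0 < c :=
    ((eventually_all.2 fun j => eventually_lt_nhds (abs_pos.2 (h j))).filter_mono
      nhdsWithin_le_nhds |>.and (self_mem_nhdsWithin (s := Set.Ioi 0))).exists
  let angle (n : ℕ) : ι → Angle := fun j => ((n * ω j + φ j : ℝ) : Angle)
  let U : Set (ι → Angle) := {y | ∀ j, c < |(y j).cos|}
  have hU : U ∈ 𝓝 (angle n₀) :=
    eventually_all.2 fun j => (Angle.continuous_cos.comp
      (continuous_apply j)).abs.continuousAt.eventually_const_lt (hc j)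
  let T : (ι → Angle) → ι → Angle := fun y => (fun j => (ω j : Angle)) + y
  have hT (n : ℕ) : T^[n] (angle n₀) = angle (n + n₀) := by
    ext j
    simp only [T, add_left_iterate, angle, Pi.add_apply, Pi.smul_apply, ← Angle.coe_nsmul,
      ← Angle.coe_add]
    push_cast
    ring_nf
  obtain ⟨G, hG⟩ := exists_bounded_gap_iterate_mem_of_isometry (isometry_add_left _ : Isometry T) hU
  refine ⟨c, hc0, G + n₀, fun N => ?_⟩
  obtain ⟨n, hn, hn', hmem⟩ := hG N
  rw [hT n] at hmem
  exact ⟨n + n₀, by omega, by omega, hmem⟩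

theorem tendsto_comp_div_of_le_add {q : ℕ → ℝ} (hq : Tendsto q atTop atTop)
    (hratio : Tendsto (fun n => q (n + 1) / q n) atTop (𝓝 1)) {g : ℕ → ℕ} {G : ℕ}
    (hg : ∀ n, n ≤ g n ∧ g n ≤ n + G) : Tendsto (fun n => q (g n) / q n) atTop (𝓝 1) := by
  have hshift (r : ℕ) : Tendsto (fun n => q (n + r) / q n) atTop (𝓝 1) := by
    induction r with
    | zero =>
      refine tendsto_const_nhds.congr' ?_
      filter_upwards [hq.eventually_ne_atTop 0] with n hn
      exact (div_self hn).symm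
    | succ r ih =>
      rw [← mul_one (1 : ℝ)]
      refine ((hratio.comp (tendsto_add_atTop_nat r)).mul ih).congr' ?_
      filter_upwards [(hq.comp (tendsto_add_atTop_nat r)).eventually_ne_atTop 0] with n hn
      exact div_mul_div_cancel₀ hn
  refine tendsto_def.2 fun s hs => ?_
  filter_upwards [(Finset.range (G + 1)).eventually_all.2 fun r _ => (hshift r).eventually_mem hs]
    with n hn
  obtain ⟨hle, hgap⟩ := hg n
  have hmem := hn (g n - n) (Finset.mem_range.2 (by omega))
  rwa [Nat.add_sub_cancel' hle] at hmem

theorem exists_tendsto_comp_div_id {q : ℕ → ℝ} (hq : Tendsto q atTop atTop)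
    (hratio : Tendsto (fun n => q (n + 1) / q n) atTop (𝓝 1)) :
    ∃ N : ℝ → ℕ, Tendsto N atTop atTop ∧ Tendsto (fun A => q (N A) / A) atTop (𝓝 1) := by
  let N (A : ℝ) : ℕ := sInf {n | A ≤ q n}
  have hle (A : ℝ) : A ≤ q (N A) := Nat.sInf_mem (hq.eventually_ge_atTop A).exists
  have hlt {A : ℝ} {m : ℕ} (hm : m < N A) : q m < A := not_le.1 (Nat.notMem_of_lt_sInf hm)
  have hN : Tendsto N atTop atTop := by
    refine tendsto_atTop.2 fun m => ?_
    filter_upwards [(Finset.range m).eventually_all.2 fun i _ => eventually_gt_atTop (q i)]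
      with A hA
    by_contra! hlt
    exact (hA _ (Finset.mem_range.2 hlt)).not_ge (hle A)
  have hpred : Tendsto (fun A => N A - 1) atTop atTop := (tendsto_sub_atTop_nat 1).comp hN
  refine ⟨N, hN, tendsto_of_tendsto_of_tendsto_of_le_of_le' tendsto_const_nhds
    (hratio.comp hpred) ?_ ?_⟩
  · filter_upwards [eventually_gt_atTop 0] with A hA
    exact (one_le_div hA).2 (hle A)
  · filter_upwards [hN.eventually_ge_atTop 1, (hq.comp hpred).eventually_gt_atTop 0] with A hNA hpos
    simp only [Function.comp_apply, Nat.sub_add_cancel hNA] at hpos ⊢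
    have hpredlt : q (N A - 1) < A := hlt (by omega)
    exact div_le_div_of_nonneg_left (hpos.le.trans (hpredlt.le.trans (hle A))) hpos hpredlt.le

theorem tendsto_log_abs_div_log {α : Type*} {l : Filter α} {Q ε w L : α → ℝ} {τ c C : ℝ}
    (hQ : Tendsto Q l atTop) (hε : Tendsto ε l (𝓝 0)) (hc : 0 < c) (hcw : ∀ᶠ x in l, c ≤ |w x|)
    (hwC : ∀ᶠ x in l, |w x| ≤ C) (hL : ∀ᶠ x in l, |L x| = Q x ^ (τ + ε x) * |w x|) :
    Tendsto (fun x => log |L x| / log (Q x)) l (𝓝 τ) := by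
  have hlogQ : Tendsto (fun x => log (Q x)) l atTop := tendsto_log_atTop.comp hQ
  have hw : Tendsto (fun x => log |w x| / log (Q x)) l (𝓝 0) :=
    tendsto_bdd_div_atTop_nhds_zero (b := log c) (B := log C)
      (hcw.mono fun x hx => log_le_log hc hx)
      (by filter_upwards [hcw, hwC] with x hx hx' using log_le_log (hc.trans_le hx) hx') hlogQ
  have hlim := (hε.const_add τ).add hw
  simp only [add_zero] at hlim
  refine hlim.congr' ?_
  filter_upwards [hL, hcw, hQ.eventually_gt_atTop 0, hlogQ.eventually_gt_atTop 0]
    with x hx hw hQx hlog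
  rw [hx, log_mul (rpow_pos_of_pos hQx _).ne' (hc.trans_le hw).ne', log_rpow hQx]
  field_simp

theorem tendsto_log_succ_div_log {Q : ℕ → ℝ} {M : ℝ} (hmono : Monotone Q)
    (hQ : Tendsto Q atTop atTop)
    (hM : ∀ᶠ n : ℕ in atTop, log (Q (n + 1)) ≤ (1 + M / n) * log (Q n)) :
    Tendsto (fun n => log (Q (n + 1)) / log (Q n)) atTop (𝓝 1) := by
  have hlim : Tendsto (fun n : ℕ => 1 + M / (n : ℝ)) atTop (𝓝 1) := by
    simpa only [add_zero] using (tendsto_const_div_atTop_nhds_zero_nat M).const_add 1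
  refine tendsto_of_tendsto_of_tendsto_of_le_of_le' tendsto_const_nhds hlim ?_ ?_
  · filter_upwards [hQ.eventually_gt_atTop 1] with n hn
    rw [one_le_div (log_pos hn)]
    exact log_le_log (one_pos.trans hn) (hmono n.le_succ)
  · filter_upwards [hM, hQ.eventually_gt_atTop 1] with n hn hQn
    exact (div_le_iff₀ (log_pos hQn)).2 hn

/-! ### Dominant lines -/

/-- The affine function `x ↦ b j - τ j * x` is dominant at the abscissa `x`, with margin `μ`, if
there it exceeds by `μ` the other functions `b i - τ i * x` and the error line `x - C`, while
staying below `-μ`. The abscissa must lie in `(μ, C)`, so that `x * Y` is comparable to `Y`. -/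
def IsDominantLine (τ : ι → ℝ) (C x : ℝ) (j : ι) (μ : ℝ) (b : ι → ℝ) : Prop :=
  μ < x ∧ x < C ∧ (∀ i, i ≠ j → b i - τ i * x + μ < b j - τ j * x) ∧
    x - C + μ < b j - τ j * x ∧ b j - τ j * x + μ < 0

theorem IsDominantLine.mono {τ b : ι → ℝ} {C x μ ν : ℝ} {j : ι}
    (h : IsDominantLine τ C x j ν b) (hμν : μ ≤ ν) : IsDominantLine τ C x j μ b := by
  obtain ⟨hx, hxC, hlines, hC, hneg⟩ := h
  exact ⟨by linarith, hxC, fun i hij => by linarith [hlines i hij], by linarith, by linarith⟩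

theorem isOpen_setOf_isDominantLine [Finite ι] (τ : ι → ℝ) (C x : ℝ) (j : ι) :
    IsOpen {p : ℝ × (ι → ℝ) | IsDominantLine τ C x j p.1 p.2} := by
  simp only [IsDominantLine, Set.ofPred_and, Set.ofPred_forall]
  refine .inter ?_ (.inter isOpen_const (.inter ?_ (.inter ?_ ?_)))
  · exact isOpen_lt (by fun_prop) (by fun_prop)
  · exact isOpen_iInter_of_finite fun i => isOpen_iInter_of_finite fun _ =>
      isOpen_lt (by fun_prop) (by fun_prop)
  · exact isOpen_lt (by fun_prop) (by fun_prop)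
  · exact isOpen_lt (by fun_prop) (by fun_prop)

theorem eventually_injective_lines [Finite ι] {τ : ι → ℝ} (hτ : Function.Injective τ)
    (b : ι → ℝ) (X : ℝ) :
    ∀ᶠ x in 𝓝[≠] X, Function.Injective fun j => b j - τ j * x := by
  have hpair (i j : ι) : ∀ᶠ x in 𝓝[≠] X, b i - τ i * x = b j - τ j * x → i = j := by
    filter_upwards [nhdsNE_le_cofinite X (eventually_cofinite_ne ((b i - b j) / (τ i - τ j)))]
      with x hx heq
    by_contra hij
    refine hx ((eq_div_iff (sub_ne_zero.2 (hτ.ne hij))).2 ?_)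
    linear_combination -heq
  exact (eventually_all.2 fun i => eventually_all.2 (hpair i)).mono fun x hx i j => hx i j

theorem exists_isDominantLine_zero [Finite ι] [Nonempty ι] {τ : ι → ℝ} (hτ : ∀ j, 0 < τ j)
    (hinj : Function.Injective τ) {C : ℝ} (hC : 1 < C) {b : ι → ℝ} (hb : b ∈ Set.Icc 0 τ) :
    ∃ x j, IsDominantLine τ C x j 0 b := by
  let cross (j : ι) : ℝ := (b j + C) / (1 + τ j)
  obtain ⟨j₀, hj₀⟩ := Finite.exists_max cross
  have hb0 (j : ι) : 0 ≤ b j := hb.1 j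
  have hbτ (j : ι) : b j ≤ τ j := hb.2 j
  have hcross (j : ι) : (1 + τ j) * cross j = b j + C :=
    mul_div_cancel₀ _ (by linarith [hτ j])
  have hpos : 0 < cross j₀ := div_pos (by linarith [hb0 j₀]) (by linarith [hτ j₀])
  have hltC : cross j₀ < C := by nlinarith [hcross j₀, hbτ j₀, hτ j₀]
  have hneg (j : ι) : b j - τ j * cross j₀ < 0 := by nlinarith [hcross j, hj₀ j, hτ j]
  have hev : ∀ᶠ x in 𝓝[<] cross j₀, (0 < x ∧ ∀ j, b j - τ j * x < 0) ∧
      (Function.Injective fun j => b j - τ j * x) ∧ x < cross j₀ := by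
    refine .and (nhdsWithin_le_nhds ?_) (.and ?_ self_mem_nhdsWithin)
    · exact (eventually_gt_nhds hpos).and (eventually_all.2 fun j =>
        (by fun_prop : Continuous fun x => b j - τ j * x).continuousAt.eventually_lt_const (hneg j))
    · exact nhdsLT_le_nhdsNE _ (eventually_injective_lines hinj b _)
  obtain ⟨x, ⟨hx0, hxneg⟩, hxinj, hxlt⟩ := hev.exists
  obtain ⟨j, hj⟩ := Finite.exists_max fun j => b j - τ j * x
  refine ⟨x, j, hx0, hxlt.trans hltC, fun i hij => ?_, ?_, by simpa only [add_zero] using hxneg j⟩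
  · rw [add_zero]
    exact (hj i).lt_of_ne (hxinj.ne hij)
  · nlinarith [hj j₀, hcross j₀, hτ j₀]

theorem exists_pos_forall_isDominantLine [Finite ι] [Nonempty ι] {τ : ι → ℝ} (hτ : ∀ j, 0 < τ j)
    (hinj : Function.Injective τ) {C : ℝ} (hC : 1 < C) :
    ∃ μ > 0, ∀ b ∈ Set.Icc 0 τ, ∃ x j, IsDominantLine τ C x j μ b := by
  refine (isCompact_Icc (a := 0) (b := τ)).induction_on
    (p := fun s => ∃ μ > 0, ∀ b ∈ s, ∃ x j, IsDominantLine τ C x j μ b) ?_ ?_ ?_ ?_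
  · exact ⟨1, one_pos, fun b hb => hb.elim⟩
  · rintro s t hst ⟨μ, hμ, h⟩
    exact ⟨μ, hμ, fun b hb => h b (hst hb)⟩
  · rintro s t ⟨μ, hμ, hs⟩ ⟨ν, hν, ht⟩
    refine ⟨min μ ν, lt_min hμ hν, fun b hb => ?_⟩
    obtain hb | hb := hb
    · obtain ⟨x, j, hxj⟩ := hs b hb
      exact ⟨x, j, hxj.mono (min_le_left μ ν)⟩
    · obtain ⟨x, j, hxj⟩ := ht b hb
      exact ⟨x, j, hxj.mono (min_le_right μ ν)⟩
  · intro b hb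
    obtain ⟨x, j, hxj⟩ := exists_isDominantLine_zero hτ hinj hC hb
    have hnhds := ((isOpen_setOf_isDominantLine τ C x j).mem_nhds hxj : _ ∈ 𝓝 ((0 : ℝ), b))
    obtain ⟨μ, hev, hμ⟩ := ((Eventually.curry_nhds hnhds).filter_mono nhdsWithin_le_nhds |>.and
      (self_mem_nhdsWithin (s := Set.Ioi 0))).exists
    exact ⟨_, mem_nhdsWithin_of_mem_nhds hev, μ, hμ, fun b' hb' => ⟨x, j, hb'⟩⟩

/-! ### The integer combination -/

theorem intCast_ne_sum_of_dominant {σ : Type*} [Fintype σ] {T : σ → ℝ} {j : σ} {θ : ℝ}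
    (hTj : T j ≠ 0) (hT : ∀ i, i ≠ j → |T i| ≤ θ * |T j|) (hTθ : |T j| ≤ θ)
    (hθ : (Fintype.card σ + 1) * θ < 1) (N : ℤ) : (N : ℝ) ≠ ∑ i, T i := by
  classical
  intro hN
  have hθ0 : 0 ≤ θ := (abs_nonneg _).trans hTθ
  have hrest : |N - T j| ≤ Fintype.card σ * θ * |T j| := by
    rw [hN, ← Finset.sum_erase_eq_sub (Finset.mem_univ j), mul_assoc, ← nsmul_eq_mul]
    calc |∑ i ∈ Finset.univ.erase j, T i| ≤ ∑ i ∈ Finset.univ.erase j, |T i| :=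
          Finset.abs_sum_le_sum_abs _ _
      _ ≤ (Finset.univ.erase j).card • (θ * |T j|) :=
          Finset.sum_le_card_nsmul _ _ _ fun i hi => hT i (Finset.ne_of_mem_erase hi)
      _ ≤ Fintype.card σ • (θ * |T j|) :=
          nsmul_le_nsmul_left (by positivity) (Finset.card_le_univ _)
  have hpos : 0 < |T j| := abs_pos.2 hTj
  have hne : N ≠ 0 := by
    rintro rfl
    rw [Int.cast_zero, zero_sub, abs_neg] at hrest
    nlinarith
  have hlt : |(N : ℝ)| < 1 := by
    have hTj1 : |T j| ≤ 1 := by nlinarith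
    have hcard : Fintype.card σ * θ * |T j| ≤ Fintype.card σ * θ :=
      mul_le_of_le_one_right (by positivity) hTj1
    linarith [abs_sub_abs_le_abs_sub (N : ℝ) (T j)]
  exact hne (Int.abs_lt_one_iff.1 (by exact_mod_cast hlt))

theorem sum_mul_form_sub_sum_mul [Fintype ι] [Fintype κ] (a lam : ι → ℤ) (b S : κ → ℤ)
    (v : ι → κ → ℝ) :
    ∑ j, lam j * (a j + ∑ m, b m * v j m) - ∑ m, b m * (∑ j, lam j * v j m - S m) =
      ((∑ j, lam j * a j + ∑ m, b m * S m : ℤ) : ℝ) := by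
  push_cast
  simp only [mul_add, mul_sub, Finset.sum_add_distrib, Finset.sum_sub_distrib, Finset.mul_sum]
  rw [Finset.sum_comm (f := fun m j => (b m : ℝ) * (lam j * v j m))]
  simp only [mul_left_comm (b _ : ℝ)]
  ring

theorem exists_sum_ratCast_ne [Finite κ] [Fintype ι] {v : ι → κ → ℝ}
    (h : ∀ lam : ι → ℤ, lam ≠ 0 → ∀ S : κ → ℤ, ∃ m, ∑ j, lam j * v j m ≠ S m)
    {q : ι → ℚ} (hq : q ≠ 0) (r : κ → ℚ) : ∃ m, ∑ j, q j * v j m ≠ r m := by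
  obtain ⟨⟨d, hd⟩, hint⟩ := IsLocalization.exist_integer_multiples_of_finite
    (nonZeroDivisors ℤ) (Sum.elim q r)
  choose z hz using hint
  simp only [eq_intCast, zsmul_eq_mul] at hz
  have hd0 : (d : ℚ) ≠ 0 := Int.cast_ne_zero.2 (nonZeroDivisors.ne_zero hd)
  have hlam (j : ι) : (z (.inl j) : ℚ) = d * q j := hz (.inl j)
  have hS (m : κ) : (z (.inr m) : ℚ) = d * r m := hz (.inr m)
  obtain ⟨j, hj⟩ := Function.ne_iff.1 hq
  have hne : z (.inl j) ≠ 0 := by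
    rw [← Int.cast_ne_zero (α := ℚ), hlam j]
    exact mul_ne_zero hd0 hj
  obtain ⟨m, hm⟩ := h (z ∘ .inl) (Function.ne_iff.2 ⟨j, hne⟩) (z ∘ .inr)
  refine ⟨m, fun heq => hm ?_⟩
  have hlam' (j : ι) : (z (.inl j) : ℝ) = d * q j := by exact_mod_cast hlam j
  have hS' : (z (.inr m) : ℝ) = d * r m := by exact_mod_cast hS m
  simp only [Function.comp_apply, hlam', hS', mul_assoc, ← Finset.mul_sum, heq]

/-- A measure of linear independence of the vectors `v j` modulo `κ → ℤ`: for large `Y`, nonzero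
integer combinations with coefficients at most `exp (τ j * Y)` stay at sup-norm distance at least
`exp (-C * Y)` from all integer vectors. The paper's parameter `Q` is `exp Y`. -/
def HasIndependenceMeasure [Fintype ι] (τ : ι → ℝ) (v : ι → κ → ℝ) (C : ℝ) : Prop :=
  ∀ᶠ Y in atTop, ∀ lam : ι → ℤ, lam ≠ 0 → (∀ j, |(lam j : ℝ)| ≤ exp (τ j * Y)) →
    ∀ S : κ → ℤ, ∃ m, exp (-C * Y) ≤ |∑ j, lam j * v j m - S m|

theorem eventually_exp_le_abs_and_abs_le_exp {f : ℝ → ℝ} {s ρ : ℝ} (hs : s ≠ 0) (hρ : 0 < ρ)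
    (hf : Tendsto (fun A => log |f A| / A) atTop (𝓝 s)) :
    ∀ᶠ A in atTop, exp ((s - ρ) * A) ≤ |f A| ∧ |f A| ≤ exp ((s + ρ) * A) := by
  -- As `log 0 = 0`, the nonzero limit `s` also keeps `f A` away from `0`.
  filter_upwards [hf.eventually_ne hs, hf.eventually (Icc_mem_nhds (sub_lt_self s hρ)
    (lt_add_of_pos_right s hρ)), eventually_gt_atTop 0] with A hne hlog hA
  have hpos : 0 < |f A| := (abs_nonneg _).lt_of_ne fun h => hne (by rw [← h, log_zero, zero_div])
  rwa [← le_log_iff_exp_le hpos, ← log_le_iff_le_exp hpos, ← le_div_iff₀ hA, ← div_le_iff₀ hA]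

theorem intCast_ne_sum_add_sum_of_isDominantLine [Fintype ι] [Fintype κ] {τ β T : ι → ℝ}
    {R : κ → ℝ} {C x ρ Y : ℝ} {j : ι} (hρ : 0 < ρ) (hY : 0 < Y)
    (hdom : IsDominantLine τ C x j (3 * ρ) β)
    (hT : ∀ i, exp ((β i - τ i * x - ρ) * Y) ≤ |T i| ∧ |T i| ≤ exp ((β i - τ i * x + ρ) * Y))
    (hR : ∀ m, |R m| ≤ exp ((x - C + ρ) * Y))
    (hcard : (Fintype.card (ι ⊕ κ) + 1) * exp (-(ρ * Y)) < 1) (N : ℤ) :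
    (N : ℝ) ≠ ∑ i, T i + ∑ m, R m := by
  obtain ⟨-, -, hlines, herror, hneg⟩ := hdom
  have hdominated {t : ℝ} (ht : t + 2 * ρ ≤ β j - τ j * x) :
      exp (t * Y) ≤ exp (-(ρ * Y)) * |T j| := by
    calc exp (t * Y) ≤ exp (-(ρ * Y)) * exp ((β j - τ j * x - ρ) * Y) := by
          rw [← exp_add, exp_le_exp]
          nlinarith
      _ ≤ exp (-(ρ * Y)) * |T j| := by gcongr; exact (hT j).1
  have hTi (i : ι) (hij : i ≠ j) : |T i| ≤ exp (-(ρ * Y)) * |T j| :=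
    (hT i).2.trans (hdominated (by linarith [hlines i hij]))
  have hRm (m : κ) : |R m| ≤ exp (-(ρ * Y)) * |T j| := (hR m).trans (hdominated (by linarith))
  have hTj : |T j| ≤ exp (-(ρ * Y)) :=
    (hT j).2.trans (exp_le_exp.2 (by nlinarith [mul_pos hρ hY]))
  have hne := intCast_ne_sum_of_dominant (T := Sum.elim T R) (j := .inl j)
    (abs_pos.1 ((exp_pos _).trans_le (hT j).1)) ?_ hTj hcard N
  · simpa only [Fintype.sum_sum_type, Sum.elim_inl, Sum.elim_inr] using hne
  · rintro (i | m) hne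
    · exact hTi i fun h => hne (congrArg _ h)
    · exact hRm m

theorem exists_exp_le_abs_of_isDominantLine [Fintype ι] [Fintype κ] {τ β : ι → ℝ} {a lam : ι → ℤ}
    {b S : κ → ℤ} {v : ι → κ → ℝ} {C x ρ Y : ℝ} {j : ι} (hρ : 0 < ρ) (hY : 0 < Y)
    (hlam : ∀ i, |(lam i : ℝ)| = exp (β i * Y)) (hdom : IsDominantLine τ C x j (3 * ρ) β)
    (hform : ∀ i, exp ((-τ i * x - ρ) * Y) ≤ |a i + ∑ m, b m * v i m| ∧
      |a i + ∑ m, b m * v i m| ≤ exp ((-τ i * x + ρ) * Y))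
    (hb : ∀ m, |(b m : ℝ)| ≤ exp ((x + ρ) * Y))
    (hcard : (Fintype.card (ι ⊕ κ) + 1) * exp (-(ρ * Y)) < 1) :
    ∃ m, exp (-C * Y) ≤ |∑ i, lam i * v i m - S m| := by
  by_contra! hsmall
  refine intCast_ne_sum_add_sum_of_isDominantLine (T := fun i => lam i * (a i + ∑ m, b m * v i m))
    (R := fun m => -(b m * (∑ i, lam i * v i m - S m))) hρ hY hdom (fun i => ?_) (fun m => ?_) hcard
    (∑ i, lam i * a i + ∑ m, b m * S m) ?_
  · have hexp (s : ℝ) : exp ((β i - τ i * x + s) * Y) =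
        |(lam i : ℝ)| * exp ((-τ i * x + s) * Y) := by
      rw [hlam, ← exp_add]
      ring_nf
    simp only [sub_eq_add_neg _ ρ, hexp, abs_mul] at hform ⊢
    constructor <;> gcongr
    exacts [(hform i).1, (hform i).2]
  · calc |-(b m * (∑ i, lam i * v i m - S m))| = |(b m : ℝ)| * |∑ i, lam i * v i m - S m| := by
          rw [abs_neg, abs_mul]
      _ ≤ exp ((x + ρ) * Y) * exp (-C * Y) := by gcongr; exacts [hb m, (hsmall m).le]
      _ = exp ((x - C + ρ) * Y) := by rw [← exp_add]; ring_nf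
  · rw [Finset.sum_neg_distrib, ← sub_eq_add_neg, sum_mul_form_sub_sum_mul]

theorem eventually_exists_exp_le_of_forall_ne_zero [Fintype ι] [Nonempty ι] [Fintype κ]
    {τ : ι → ℝ} (hτ : ∀ j, 0 < τ j) (hinj : Function.Injective τ) {a : ℝ → ι → ℤ} {b : ℝ → κ → ℤ}
    {v : ι → κ → ℝ}
    (hform : ∀ j, Tendsto (fun A => log |a A j + ∑ m, b A m * v j m| / A) atTop (𝓝 (-τ j)))
    (hb : ∀ δ > 0, ∀ᶠ A in atTop, ∀ m, |(b A m : ℝ)| ≤ exp ((1 + δ) * A)) {C : ℝ} (hC : 1 < C) :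
    ∀ᶠ Y in atTop, ∀ lam : ι → ℤ, (∀ j, lam j ≠ 0) → (∀ j, |(lam j : ℝ)| ≤ exp (τ j * Y)) →
      ∀ S : κ → ℤ, ∃ m, exp (-C * Y) ≤ |∑ j, lam j * v j m - S m| := by
  obtain ⟨μ, hμ, hdom⟩ := exists_pos_forall_isDominantLine hτ hinj hC
  let ρ := μ / 3
  have hρ : 0 < ρ := by positivity
  have hδ : 0 < ρ / C := by positivity
  obtain ⟨A₀, hA₀⟩ := eventually_atTop.1 <| (eventually_all.2 fun j =>
    eventually_exp_le_abs_and_abs_le_exp (neg_ne_zero.2 (hτ j).ne') hδ (hform j)).and (hb _ hδ)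
  have hexp : Tendsto (fun Y => (Fintype.card (ι ⊕ κ) + 1) * exp (-(ρ * Y))) atTop (𝓝 0) := by
    rw [← mul_zero (Fintype.card (ι ⊕ κ) + 1 : ℝ)]
    exact (tendsto_exp_neg_atTop_nhds_zero.comp (tendsto_id.const_mul_atTop hρ)).const_mul _
  filter_upwards [hexp.eventually_lt_const one_pos, eventually_gt_atTop 0,
    eventually_ge_atTop (A₀ / μ)] with Y hcard hY hYA lam hlam hlamY S
  let β (j : ι) : ℝ := log |(lam j : ℝ)| / Y
  have hlampos (j : ι) : 0 < |(lam j : ℝ)| := abs_pos.2 (Int.cast_ne_zero.2 (hlam j))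
  have hβ : β ∈ Set.Icc 0 τ := by
    refine ⟨fun j => div_nonneg (log_nonneg ?_) hY.le, fun j => (div_le_iff₀ hY).2 ?_⟩
    · exact_mod_cast Int.one_le_abs (hlam j)
    · exact (log_le_iff_le_exp (hlampos j)).2 (hlamY j)
  obtain ⟨x, j, hxj⟩ := hdom β hβ
  have hA : A₀ ≤ x * Y := by
    rw [div_le_iff₀ hμ] at hYA
    nlinarith [hxj.1]
  have hδx : ρ / C * (x * Y) ≤ ρ * Y := by
    calc ρ / C * (x * Y) ≤ ρ / C * (C * Y) := by gcongr; exact hxj.2.1.le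
      _ = ρ * Y := by field_simp
  obtain ⟨hform', hb'⟩ := hA₀ _ hA
  refine exists_exp_le_abs_of_isDominantLine (a := a (x * Y)) (b := b (x * Y)) hρ hY (fun i => ?_)
    (hxj.mono (by simp only [ρ]; linarith)) (fun i => ⟨?_, ?_⟩) (fun m => ?_) hcard
  · rw [div_mul_cancel₀ _ hY.ne', exp_log (hlampos i)]
  · exact (exp_le_exp.2 (by linarith)).trans (hform' i).1
  · exact (hform' i).2.trans (exp_le_exp.2 (by linarith))
  · exact (hb' m).trans (exp_le_exp.2 (by linarith))

theorem hasIndependenceMeasure_of_tendsto [Fintype ι] [Fintype κ]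
    {τ : ι → ℝ} (hτ : ∀ j, 0 < τ j) (hinj : Function.Injective τ) {a : ℝ → ι → ℤ} {b : ℝ → κ → ℤ}
    {v : ι → κ → ℝ}
    (hform : ∀ j, Tendsto (fun A => log |a A j + ∑ m, b A m * v j m| / A) atTop (𝓝 (-τ j)))
    (hb : ∀ δ > 0, ∀ᶠ A in atTop, ∀ m, |(b A m : ℝ)| ≤ exp ((1 + δ) * A)) {C : ℝ} (hC : 1 < C) :
    HasIndependenceMeasure τ v C := by
  classical
  have hsupport (J : {J : Finset ι // J.Nonempty}) := by
    have := J.2.to_subtype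
    exact eventually_exists_exp_le_of_forall_ne_zero (ι := J.1) (fun j => hτ j)
      (hinj.comp Subtype.val_injective) (fun j => hform j) hb hC
  filter_upwards [eventually_all.2 hsupport] with Y hY lam hlam hlamY S
  let J : Finset ι := {j | lam j ≠ 0}
  have hJ : J.Nonempty := by
    obtain ⟨j, hj⟩ := Function.ne_iff.1 hlam
    exact ⟨j, Finset.mem_filter.2 ⟨Finset.mem_univ j, hj⟩⟩
  have hsum (m : κ) : ∑ j : J, (lam j : ℝ) * v j m = ∑ j, lam j * v j m := by
    rw [Finset.sum_coe_sort J fun j => (lam j : ℝ) * v j m]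
    refine Finset.sum_filter_of_ne fun j _ hj h0 => hj (by rw [h0, Int.cast_zero, zero_mul])
  simpa only [hsum] using hY ⟨J, hJ⟩ (fun j => lam j) (fun j => (Finset.mem_filter.1 j.2).2)
    (fun j => hlamY j) S

theorem exists_tendsto_log_comp_div_id_and_lt_abs_cos [Finite ι] {Q : ℕ → ℝ}
    (hQ : Tendsto Q atTop atTop)
    (hratio : Tendsto (fun n => log (Q (n + 1)) / log (Q n)) atTop (𝓝 1)) {ω φ : ι → ℝ} {n₀ : ℕ}
    (h : ∀ j, cos (n₀ * ω j + φ j) ≠ 0) :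
    ∃ c > 0, ∃ N : ℝ → ℕ, Tendsto N atTop atTop ∧
      Tendsto (fun A => log (Q (N A)) / A) atTop (𝓝 1) ∧ ∀ A j, c < |cos (N A * ω j + φ j)| := by
  have hlog : Tendsto (fun n => log (Q n)) atTop atTop := tendsto_log_atTop.comp hQ
  obtain ⟨c, hc, G, hG⟩ := exists_bounded_gap_lt_abs_cos h
  choose g hng hgn hcos using hG
  obtain ⟨N, hN, hNA⟩ := exists_tendsto_comp_div_id hlog hratio
  refine ⟨c, hc, g ∘ N, (tendsto_atTop_mono hng tendsto_id).comp hN, ?_, fun A => hcos (N A)⟩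
  have hlim := ((tendsto_comp_div_of_le_add hlog hratio
    fun n => ⟨hng n, hgn n⟩).comp hN).mul hNA
  rw [mul_one] at hlim
  refine hlim.congr' ?_
  filter_upwards [(hlog.comp hN).eventually_ne_atTop 0] with A hA
  exact div_mul_div_cancel₀ hA

theorem eventually_rpow_one_add_le_exp {R θ : ℝ → ℝ} (hR : ∀ᶠ A in atTop, 0 < R A)
    (hlog : Tendsto (fun A => log (R A) / A) atTop (𝓝 1)) (hθ : Tendsto θ atTop (𝓝 0)) {δ : ℝ}
    (hδ : 0 < δ) : ∀ᶠ A in atTop, R A ^ (1 + θ A) ≤ exp ((1 + δ) * A) := by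
  have hlim := hlog.mul (hθ.const_add 1)
  filter_upwards [hR, eventually_gt_atTop 0, hlim.eventually_le_const
    (by linarith : 1 * (1 + 0) < 1 + δ)] with A hRA hA hle
  rw [rpow_def_of_pos hRA, exp_le_exp]
  rwa [div_mul_eq_mul_div, div_le_iff₀ hA] at hle

theorem hasIndependenceMeasure_of_oscillating [Fintype ι] [Fintype κ] {τ ω φ : ι → ℝ}
    (hτ : ∀ j, 0 < τ j) (hinj : Function.Injective τ)
    (hosc : ∃ n : ℕ, ∀ j, cos (n * ω j + φ j) ≠ 0) {Q : ℕ → ℝ} (hQ : Tendsto Q atTop atTop)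
    (hratio : Tendsto (fun n => log (Q (n + 1)) / log (Q n)) atTop (𝓝 1))
    {a : ℕ → ι → ℤ} {b : ℕ → κ → ℤ} {v : ι → κ → ℝ} {ε η : ι → ℕ → ℝ} {θ : ℕ → ℝ}
    (hε : ∀ j, Tendsto (ε j) atTop (𝓝 0)) (hη : ∀ j, Tendsto (η j) atTop (𝓝 0))
    (hθ : Tendsto θ atTop (𝓝 0))
    (hL : ∀ᶠ n in atTop, ∀ j,
      |a n j + ∑ m, b n m * v j m| = Q n ^ (-τ j + ε j n) * |cos (n * ω j + φ j) + η j n|)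
    (hb : ∀ᶠ n in atTop, ∀ m, |(b n m : ℝ)| ≤ Q n ^ (1 + θ n)) {C : ℝ} (hC : 1 < C) :
    HasIndependenceMeasure τ v C := by
  obtain ⟨n₀, hn₀⟩ := hosc
  obtain ⟨c, hc, N, hN, hNA, hcos⟩ :=
    exists_tendsto_log_comp_div_id_and_lt_abs_cos hQ hratio hn₀
  have hQN : Tendsto (Q ∘ N) atTop atTop := hQ.comp hN
  refine hasIndependenceMeasure_of_tendsto (a := a ∘ N) (b := b ∘ N) hτ hinj (fun j => ?_)
    (fun δ hδ => ?_) hC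
  · have hηj : ∀ᶠ A in atTop, |η j (N A)| < min 1 (c / 2) :=
      (((hη j).comp hN).abs).eventually_lt_const (by rw [abs_zero]; positivity)
    have hform := tendsto_log_abs_div_log (L := fun A => a (N A) j + ∑ m, b (N A) m * v j m) hQN
      ((hε j).comp hN) (half_pos hc)
      (w := fun A => cos (N A * ω j + φ j) + η j (N A)) (C := 2) ?_ ?_
      ((hN.eventually hL).mono fun A hA => hA j)
    · have hlim := hform.mul hNA
      rw [mul_one] at hlim
      refine hlim.congr' ?_
      filter_upwards [(tendsto_log_atTop.comp hQN).eventually_ne_atTop 0] with A hA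
      exact div_mul_div_cancel₀ hA
    · filter_upwards [hηj] with A hA
      linarith [abs_sub_abs_le_abs_add (cos (N A * ω j + φ j)) (η j (N A)), hcos A j,
        hA.trans_le (min_le_right _ _)]
    · filter_upwards [hηj] with A hA
      linarith [abs_add_le (cos (N A * ω j + φ j)) (η j (N A)),
        abs_cos_le_one (N A * ω j + φ j), hA.trans_le (min_le_left _ _)]
  · filter_upwards [hN.eventually hb, eventually_rpow_one_add_le_exp
      (hQN.eventually_gt_atTop 0) hNA (hθ.comp hN) hδ] with A hbA hle m
    exact (hbA m).trans hle

theorem sum_fin_eq_sum_castLE_add_sum {M : Type*} [AddCommMonoid M] {k p : ℕ} (h : k ≤ p)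
    (f : Fin p → M) :
    ∑ i, f i = ∑ j, f (Fin.castLE h j) + ∑ m : Fin (p - k), f ⟨k + m, by omega⟩ := by
  obtain ⟨d, rfl⟩ := Nat.exists_eq_add_of_le h
  rw [Fin.sum_univ_add]
  congr 1
  exact Fintype.sum_equiv (finCongr (Nat.add_sub_cancel_left k d).symm) _ _ fun _ => rfl

theorem HasIndependenceMeasure.exists_sum_intCast_ne [Fintype ι] {τ : ι → ℝ} (hτ : ∀ j, 0 < τ j)
    {v : ι → κ → ℝ} {C : ℝ} (h : HasIndependenceMeasure τ v C) {lam : ι → ℤ} (hlam : lam ≠ 0)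
    (S : κ → ℤ) : ∃ m, ∑ j, lam j * v j m ≠ S m := by
  have hlarge : ∀ᶠ Y in atTop, ∀ j, |(lam j : ℝ)| ≤ exp (τ j * Y) := eventually_all.2 fun j =>
    (tendsto_exp_atTop.comp (tendsto_id.const_mul_atTop (hτ j))).eventually_ge_atTop _
  obtain ⟨Y, hY, hlamY⟩ := (h.and hlarge).exists
  obtain ⟨m, hm⟩ := hY lam hlam hlamY S
  exact ⟨m, fun heq => ((exp_pos _).trans_le hm).ne' (by rw [heq, sub_self, abs_zero])⟩

theorem sum_smul_euclideanSpace_apply [Fintype ι] (x : ι → ℝ) (v : ι → EuclideanSpace ℝ κ)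
    (m : κ) : (∑ j, x j • v j) m = ∑ j, x j * v j m := by
  simp only [WithLp.ofLp_sum, Finset.sum_apply, PiLp.smul_apply, smul_eq_mul]

theorem HasIndependenceMeasure.eventually_rpow_le_norm [Fintype ι] [Fintype κ] {τ : ι → ℝ}
    {v : ι → EuclideanSpace ℝ κ} {C : ℝ}
    (h : HasIndependenceMeasure τ (fun j m => v j m) C) :
    ∀ᶠ X : ℝ in atTop, ∀ lam : ι → ℤ, lam ≠ 0 → (∀ j, |(lam j : ℝ)| ≤ X ^ τ j) →
      ∀ S : κ → ℤ, X ^ (-C) ≤ ‖∑ j, (lam j : ℝ) • v j - WithLp.toLp 2 fun m => (S m : ℝ)‖ := by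
  filter_upwards [tendsto_log_atTop.eventually h, eventually_gt_atTop 0]
    with X hX hX0 lam hlam hlamX S
  have hpow (t : ℝ) : X ^ t = exp (t * log X) := by rw [rpow_def_of_pos hX0, mul_comm]
  simp only [hpow] at hlamX ⊢
  obtain ⟨m, hm⟩ := hX lam hlam hlamX S
  refine hm.trans (le_of_eq_of_le ?_ (PiLp.norm_apply_le _ m))
  rw [PiLp.sub_apply, sum_smul_euclideanSpace_apply, Real.norm_eq_abs]

theorem stmt7_general {k p : ℕ} (hkp : k ≤ p) (e : Fin k → EuclideanSpace ℝ (Fin p))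
    {τs ωs φs : Fin k → ℝ} (hτpos : ∀ j, 0 < τs j) (hτinj : Function.Injective τs)
    (hosc : {n : ℕ | ∀ j : Fin k, ∀ m : ℤ, (n : ℝ) * ωs j + φs j ≠ π / 2 + m * π}.Nonempty)
    {Q : ℕ → ℝ} (hQ : Tendsto Q atTop atTop)
    (hratio : Tendsto (fun n => log (Q (n + 1)) / log (Q n)) atTop (𝓝 1)) {l : ℕ → Fin p → ℤ}
    {εs ηs : Fin k → ℕ → ℝ} {θs : ℕ → ℝ} (hεs : ∀ j, Tendsto (εs j) atTop (𝓝 0))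
    (hηs : ∀ j, Tendsto (ηs j) atTop (𝓝 0)) (hθs : Tendsto θs atTop (𝓝 0))
    (hL : ∀ᶠ n : ℕ in atTop, ∀ j,
      |∑ i, (l n i : ℝ) * e j i| =
        Q n ^ (-τs j + εs j n) * |cos (n * ωs j + φs j) + ηs j n|)
    (hl : ∀ᶠ n in atTop, ∀ i, |(l n i : ℝ)| ≤ Q n ^ (1 + θs n))
    (e' : Fin k → EuclideanSpace ℝ (Fin (p - k)))
    (hunit : ∀ j j' : Fin k, e j (Fin.castLE hkp j') = if j' = j then 1 else 0)
    (htail : ∀ j : Fin k, ∀ (m : ℕ) (hm : m < p - k), e j ⟨k + m, by omega⟩ = e' j ⟨m, hm⟩) :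
    (∀ q : Fin k → ℚ, (∃ j, q j ≠ 0) →
      ¬ (∀ m : Fin (p - k), ∃ r : ℚ, (∑ j, (q j : ℝ) • e' j) m = (r : ℝ))) ∧
    (∀ ε : ℝ, 0 < ε → ∃ Q0 : ℝ, ∀ Qr : ℝ, Q0 ≤ Qr →
      ∀ lam : Fin k → ℤ, (∃ j, lam j ≠ 0) →
        (∀ j, |(lam j : ℝ)| ≤ Qr ^ τs j) →
        ∀ Sv : Fin (p - k) → ℤ,
          Qr ^ (-1 - ε) ≤
            ‖(∑ j, (lam j : ℝ) • e' j) - WithLp.toLp 2 fun m => (Sv m : ℝ)‖) := by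
  have hform (n : ℕ) (j : Fin k) : ∑ i, (l n i : ℝ) * e j i =
      l n (Fin.castLE hkp j) + ∑ m : Fin (p - k), l n ⟨k + m, by omega⟩ * e' j m := by
    simp only [sum_fin_eq_sum_castLE_add_sum hkp, hunit, htail, mul_ite, mul_one, mul_zero,
      Finset.sum_ite_eq', Finset.mem_univ, if_true, Fin.is_lt, Fin.eta]
  have hcos : ∃ n : ℕ, ∀ j, cos (n * ωs j + φs j) ≠ 0 :=
    hosc.imp fun n hn j => cos_ne_zero_iff.2 fun m hm => hn j m (hm.trans (by ring))
  simp only [hform] at hL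
  have hmain {C : ℝ} (hC : 1 < C) := hasIndependenceMeasure_of_oscillating hτpos hτinj hcos hQ
    hratio hεs hηs hθs hL (hl.mono fun n hn m => hn ⟨k + m, by omega⟩) hC
  refine ⟨fun q hq hr => ?_, fun ε hε => ?_⟩
  · choose r hr using hr
    obtain ⟨m, hm⟩ := exists_sum_ratCast_ne (fun _ hlam =>
      (hmain one_lt_two).exists_sum_intCast_ne hτpos hlam) (Function.ne_iff.2 hq) r
    exact hm ((sum_smul_euclideanSpace_apply _ e' m).symm.trans (hr m))
  · obtain ⟨Q0, hQ0⟩ := eventually_atTop.1 <|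
      (hmain (lt_add_of_pos_right 1 hε)).eventually_rpow_le_norm
    refine ⟨Q0, fun Qr hQr lam hlam hlamQ Sv => ?_⟩
    rw [← neg_add']
    exact hQ0 Qr hQr lam (Function.ne_iff.2 hlam) hlamQ Sv

/-- Under hypotheses (H) with e_j = (0,…,0,1,0,…,0,e′_j) (the 1 in j-th position):
(1) no nontrivial ℚ-linear combination of the e′_j lies in ℚ^{p-k}; and (2) a measure
of linear independence: for ε > 0 and Q large, ‖λ_1e′_1+…+λ_ke′_k − S‖ ≥ Q^{-1-ε} for
integers λ_j, not all zero, with |λ_j| ≤ Q^{τ_j}, and any S ∈ ℤ^{p-k}. -/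
theorem stmt7
    (k p : ℕ) (hk : 1 ≤ k) (hkp : k ≤ p - 1)
    (e : Fin k → EuclideanSpace ℝ (Fin p))
    (τs ωs φs : Fin k → ℝ)
    (hτpos : ∀ j, 0 < τs j) (hτinj : Function.Injective τs)
    (hosc : {n : ℕ | ∀ j : Fin k, ∀ m : ℤ,
      (n : ℝ) * ωs j + φs j ≠ Real.pi / 2 + m * Real.pi}.Infinite)
    (Q : ℕ → ℕ) (hQmono : StrictMono Q) (hQpos : ∀ n, 0 < Q n)
    (hQgrowth :
      (∃ M : ℝ, 0 < M ∧ ∀ n : ℕ, 1 ≤ n →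
        Real.log (Q (n + 1)) ≤ (1 + M / n) * Real.log (Q n)) ∨
      ((∀ j, ωs j = 0) ∧
        Filter.Tendsto (fun n => Real.log (Q (n + 1)) / Real.log (Q n))
          Filter.atTop (nhds 1)))
    (l : ℕ → Fin p → ℤ)
    (εs ηs : Fin k → ℕ → ℝ) (θs : ℕ → ℝ)
    (hεs : ∀ j, Filter.Tendsto (εs j) Filter.atTop (nhds 0))
    (hηs : ∀ j, Filter.Tendsto (ηs j) Filter.atTop (nhds 0))
    (hθs : Filter.Tendsto θs Filter.atTop (nhds 0))
    (hL : ∀ n : ℕ, 1 ≤ n → ∀ j,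
      |∑ i, (l n i : ℝ) * e j i| =
        (Q n : ℝ) ^ (-τs j + εs j n) * |Real.cos ((n : ℝ) * ωs j + φs j) + ηs j n|)
    (hl : ∀ n : ℕ, 1 ≤ n → ∀ i, |(l n i : ℝ)| ≤ (Q n : ℝ) ^ (1 + θs n))
    (e' : Fin k → EuclideanSpace ℝ (Fin (p - k)))
    (hunit : ∀ j j' : Fin k, e j (Fin.castLE (by omega) j') = if j' = j then 1 else 0)
    (htail : ∀ j : Fin k, ∀ (m : ℕ) (hm : m < p - k),
      e j ⟨k + m, by omega⟩ = e' j ⟨m, hm⟩) :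
    (∀ q : Fin k → ℚ, (∃ j, q j ≠ 0) →
      ¬ (∀ m : Fin (p - k), ∃ r : ℚ, (∑ j, (q j : ℝ) • e' j) m = (r : ℝ))) ∧
    (∀ ε : ℝ, 0 < ε → ∃ Q0 : ℝ, ∀ Qr : ℝ, Q0 ≤ Qr →
      ∀ lam : Fin k → ℤ, (∃ j, lam j ≠ 0) →
        (∀ j, |(lam j : ℝ)| ≤ Qr ^ τs j) →
        ∀ Sv : Fin (p - k) → ℤ,
          Qr ^ (-1 - ε) ≤
            ‖(∑ j, (lam j : ℝ) • e' j) -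
              (show EuclideanSpace ℝ (Fin (p - k)) from WithLp.toLp 2 fun m => (Sv m : ℝ))‖) :=
  stmt7_general (by omega) e hτpos hτinj hosc.nonempty
    (tendsto_natCast_atTop_atTop.comp hQmono.tendsto_atTop)
    (hQgrowth.elim (fun ⟨_, _, hM⟩ => tendsto_log_succ_div_log (Nat.mono_cast.comp hQmono.monotone)
      (tendsto_natCast_atTop_atTop.comp hQmono.tendsto_atTop)
      ((eventually_ge_atTop 1).mono hM)) And.right)
    hεs hηs hθs ((eventually_ge_atTop 1).mono hL) ((eventually_ge_atTop 1).mono hl) e' hunit htail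
end

section
/- Assume hypotheses (K). Then the real numbers 1, ξ_1, …, ξ_k are linearly independent over ℚ. -/
/-!
Clear denominators in a rational relation and write it as `b + ∑ c_j ξ_j = 0` with integers `b` and
`c_j`. Multiplying by `q_n` and subtracting integers shows that `∑ c_j (q_n ξ_j - p_{j,n})` is an
integer. Since the errors `q_n ξ_j - p_{j,n}` tend to zero, that integer is eventually `0`. The
errors have pairwise distinct orders of magnitude, so the largest one with a nonzero coefficient
could not be cancelled by the others; hence every `c_j` vanishes, and then so does `b`.
-/

open Filter Asymptotics Topology

section Germ

variable {α ι : Type*} {F : Filter α}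

theorem sum_smul_germ_eq_zero_iff {R M : Type*} [AddCommMonoid M] [SMul R M] {f : ι → α → M}
    {s : Finset ι} {c : ι → R} :
    ∑ i ∈ s, c i • (f i : Germ F M) = 0 ↔ ∑ i ∈ s, c i • f i =ᶠ[F] 0 := by
  rw [← Germ.coe_eq]
  exact (map_sum (Germ.coeAddHom F) (fun i => c i • f i) s).symm.congr_left

theorem exists_mem_forall_isLittleO {E : Type*} [Norm E] {f : ι → α → E} {s : Finset ι}
    (hs : s.Nonempty) (hcomp : Pairwise fun i j => f i =o[F] f j ∨ f j =o[F] f i) :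
    ∃ m ∈ s, ∀ i ∈ s, i ≠ m → f i =o[F] f m := by
  induction hs using Finset.Nonempty.cons_induction with
  | singleton a => simp
  | cons a s has _ ih =>
    obtain ⟨m, hms, hm⟩ := ih
    have hma : m ≠ a := ne_of_mem_of_not_mem hms has
    rcases hcomp hma with hlt | hgt
    · refine ⟨a, Finset.mem_cons_self a s, fun i hi hia => ?_⟩
      have his : i ∈ s := (Finset.mem_cons.1 hi).resolve_left hia
      obtain rfl | him := eq_or_ne i m
      · exact hlt
      · exact (hm i his him).trans hlt
    · refine ⟨m, Finset.mem_cons_of_mem hms, fun i hi him => ?_⟩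
      obtain rfl | his := Finset.mem_cons.1 hi
      · exact hgt
      · exact hm i his him

theorem linearIndependent_germ_of_pairwise_isLittleO {𝕜 E : Type*} [NormedField 𝕜]
    [NormedAddCommGroup E] [NormedSpace 𝕜 E] {f : ι → α → E}
    (hne : ∀ i, (f i : Germ F E) ≠ 0)
    (hcomp : Pairwise fun i j => f i =o[F] f j ∨ f j =o[F] f i) :
    LinearIndependent 𝕜 fun i => (f i : Germ F E) := by
  classical
  rw [linearIndependent_iff']
  intro s c hsum
  by_contra! ⟨i₀, hi₀, hci₀⟩
  obtain ⟨m, hm, hdom⟩ := exists_mem_forall_isLittleO (s := {i ∈ s | c i ≠ 0})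
    ⟨i₀, Finset.mem_filter.2 ⟨hi₀, hci₀⟩⟩ hcomp
  obtain ⟨hms, hcm⟩ := Finset.mem_filter.1 hm
  have hrest : (∑ i ∈ s.erase m, c i • f i) =o[F] f m := by
    refine IsLittleO.sum fun i hi => ?_
    obtain ⟨him, his⟩ := Finset.mem_erase.1 hi
    obtain hci | hci := eq_or_ne (c i) 0
    · exact (isLittleO_zero (f m) F).congr_left fun n => by
        rw [hci, zero_smul, Pi.zero_apply]
    · exact (hdom i (Finset.mem_filter.2 ⟨his, hci⟩) him).const_smul_left (c i)
  have hrel : c m • f m + ∑ i ∈ s.erase m, c i • f i =ᶠ[F] 0 := by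
    rw [Finset.add_sum_erase s (fun i => c i • f i) hms]
    exact sum_smul_germ_eq_zero_iff.1 hsum
  have hself : f m =o[F] f m := by
    refine (isLittleO_const_smul_left hcm).1 (hrest.neg_left.congr' ?_ .rfl)
    filter_upwards [hrel] with n hn
    exact (eq_neg_of_add_eq_zero_left hn).symm
  refine hne m (Germ.coe_eq.2 ?_)
  by_contra hfm
  exact isLittleO_irrefl (not_eventually.1 hfm) hself

end Germ

section Rpow

variable {α : Type*} {F : Filter α} {Q a b : α → ℝ} {x y : ℝ}

theorem tendsto_rpow_nhds_zero (hQ : Tendsto Q F atTop) (ha : Tendsto a F (𝓝 x)) (hx : x < 0) :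
    Tendsto (fun n => Q n ^ a n) F (𝓝 0) := by
  have hexp : Tendsto (fun n => Real.exp (Real.log (Q n) * a n)) F (𝓝 0) :=
    Real.tendsto_exp_atBot.comp ((Real.tendsto_log_atTop.comp hQ).atTop_mul_neg hx ha)
  refine hexp.congr' ?_
  filter_upwards [hQ.eventually_gt_atTop 0] with n hn
  exact (Real.rpow_def_of_pos hn (a n)).symm

theorem isLittleO_rpow_rpow (hQ : Tendsto Q F atTop) (ha : Tendsto a F (𝓝 x))
    (hb : Tendsto b F (𝓝 y)) (hxy : x < y) :
    (fun n => Q n ^ a n) =o[F] fun n => Q n ^ b n := by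
  have hpos : ∀ᶠ n in F, 0 < Q n := hQ.eventually_gt_atTop 0
  refine isLittleO_of_tendsto' ?_ <|
    (tendsto_rpow_nhds_zero hQ (ha.sub hb) (sub_neg.2 hxy)).congr' ?_
  · filter_upwards [hpos] with n hn hzero
    exact absurd hzero (Real.rpow_pos_of_pos hn _).ne'
  · filter_upwards [hpos] with n hn
    exact Real.rpow_sub hn _ _

end Rpow

section SimultaneousApproximation

variable {α ι : Type*} {F : Filter α}

/-- The error `q_n ξ_j - p_{j,n}` of the simultaneous rational approximations `p_{j,n} / q_n` to
`ξ_j`, scaled by the common denominator. It is a sequence in `n` for each `j`, so that the errors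
can be compared by their orders of magnitude. -/
def approxError (ξ : ι → ℝ) (q : α → ℤ) (p : ι → α → ℤ) (j : ι) (n : α) : ℝ :=
  q n * ξ j - p j n

theorem eventuallyEq_zero_of_tendsto_intCast {m : α → ℤ}
    (hm : Tendsto (fun n => (m n : ℝ)) F (𝓝 0)) : m =ᶠ[F] 0 := by
  have : Tendsto m F (𝓝 0) :=
    Int.isClosedEmbedding_coe_real.isInducing.tendsto_nhds_iff.2 (by rwa [Int.cast_zero])
  rwa [nhds_discrete, tendsto_pure] at this

theorem sum_smul_approxError_eq_intCast [Fintype ι] {ξ : ι → ℝ} {b : ℤ} {c : ι → ℤ}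
    (hrel : b + ∑ j, c j * ξ j = 0) (q : α → ℤ) (p : ι → α → ℤ) (n : α) :
    ∑ j, c j • approxError ξ q p j n = ((-(q n * b + ∑ j, c j * p j n) : ℤ) : ℝ) := by
  calc ∑ j, c j • approxError ξ q p j n
      = q n * ∑ j, c j * ξ j - ∑ j, (c j : ℝ) * p j n := by
        rw [Finset.mul_sum, ← Finset.sum_sub_distrib]
        exact Finset.sum_congr rfl fun j _ => by rw [approxError, zsmul_eq_mul]; ring
    _ = ((-(q n * b + ∑ j, c j * p j n) : ℤ) : ℝ) := by
        push_cast
        linear_combination (q n : ℝ) * hrel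

theorem sum_smul_approxError_eventuallyEq_zero [Fintype ι] {ξ : ι → ℝ} {q : α → ℤ}
    {p : ι → α → ℤ} {b : ℤ} {c : ι → ℤ} (htendsto : ∀ j, Tendsto (approxError ξ q p j) F (𝓝 0))
    (hrel : b + ∑ j, c j * ξ j = 0) : ∑ j, c j • approxError ξ q p j =ᶠ[F] 0 := by
  have hsum : Tendsto (fun n => ∑ j, c j • approxError ξ q p j n) F (𝓝 0) := by
    simpa only [smul_zero, Finset.sum_const_zero] using
      tendsto_finsetSum Finset.univ fun j _ => (htendsto j).const_smul (c j)
  simp only [sum_smul_approxError_eq_intCast hrel] at hsum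
  filter_upwards [eventuallyEq_zero_of_tendsto_intCast hsum] with n hn
  simp only [Finset.sum_apply, Pi.smul_apply, sum_smul_approxError_eq_intCast hrel, hn,
    Pi.zero_apply, Int.cast_zero]

theorem linearIndependent_cons_one_of_approxError {k : ℕ} {ξ : Fin k → ℝ} {q : α → ℤ}
    {p : Fin k → α → ℤ} (htendsto : ∀ j, Tendsto (approxError ξ q p j) F (𝓝 0))
    (hindep : LinearIndependent ℤ fun j => (approxError ξ q p j : Germ F ℝ)) :
    LinearIndependent ℚ (Fin.cons 1 ξ : Fin (k + 1) → ℝ) := by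
  rw [← LinearIndependent.iff_fractionRing ℤ ℚ, Fintype.linearIndependent_iff]
  intro g hg
  have hrel : (g 0 : ℝ) + ∑ j : Fin k, (g j.succ : ℝ) * ξ j = 0 := by
    simpa only [Fin.sum_univ_succ, Fin.cons_zero, Fin.cons_succ, zsmul_eq_mul, mul_one] using hg
  have hsucc : ∀ j : Fin k, g j.succ = 0 :=
    Fintype.linearIndependent_iff.1 hindep (fun j => g j.succ) <|
      sum_smul_germ_eq_zero_iff.2 (sum_smul_approxError_eventuallyEq_zero htendsto hrel)
  have hzero : g 0 = 0 := by simpa [hsucc] using hrel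
  exact Fin.cases hzero hsucc

theorem stmt8_general [F.NeBot] {k : ℕ} {ξ τ : Fin k → ℝ} (hτpos : ∀ j, 0 < τ j)
    (hτinj : Function.Injective τ) {Q : α → ℝ} (hQ : Tendsto Q F atTop)
    {q : α → ℤ} {p : Fin k → α → ℤ} {ε : Fin k → α → ℝ} (hε : ∀ j, Tendsto (ε j) F (𝓝 0))
    (herr : ∀ j, ∀ᶠ n in F, |q n * ξ j - p j n| = Q n ^ (-τ j + ε j n)) :
    LinearIndependent ℚ (Fin.cons 1 ξ : Fin (k + 1) → ℝ) := by
  have hexp (j) : Tendsto (fun n => -τ j + ε j n) F (𝓝 (-τ j)) := by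
    simpa only [add_zero] using (hε j).const_add (-τ j)
  have hnorm (j) : (fun n => Q n ^ (-τ j + ε j n)) =ᶠ[F] fun n => ‖approxError ξ q p j n‖ :=
    (herr j).mono fun _ h => h.symm
  have htendsto (j) : Tendsto (approxError ξ q p j) F (𝓝 0) :=
    tendsto_zero_iff_norm_tendsto_zero.2 <|
      (tendsto_rpow_nhds_zero hQ (hexp j) (neg_neg_of_pos (hτpos j))).congr' (hnorm j)
  have hlittleO {i j} (hij : τ j < τ i) : approxError ξ q p i =o[F] approxError ξ q p j :=
    ((isLittleO_rpow_rpow hQ (hexp i) (hexp j) (neg_lt_neg hij)).congr'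
      (hnorm i) (hnorm j)).of_norm_norm
  have hne (j) : (approxError ξ q p j : Germ F ℝ) ≠ 0 := by
    intro h0
    obtain ⟨n, hvanish, hpow, hpos⟩ :=
      ((Germ.coe_eq.1 h0).and ((hnorm j).and (hQ.eventually_gt_atTop 0))).exists
    exact (Real.rpow_pos_of_pos hpos _).ne' (hpow.trans (norm_eq_zero.2 hvanish))
  have hindep := linearIndependent_germ_of_pairwise_isLittleO (𝕜 := ℝ) hne fun i j hij =>
    (hτinj.ne hij).lt_or_gt.symm.imp hlittleO hlittleO
  exact linearIndependent_cons_one_of_approxError htendsto (hindep.restrict_scalars' ℤ)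

end SimultaneousApproximation

/-- Under hypotheses (K), the numbers 1, ξ_1, …, ξ_k are ℚ-linearly independent. -/
theorem stmt8
    (k : ℕ) (hk : 1 ≤ k) (ξ : Fin k → ℝ)
    (τs : Fin k → ℝ) (hτpos : ∀ j, 0 < τs j) (hτinj : Function.Injective τs)
    (Q : ℕ → ℕ) (hQmono : StrictMono Q) (hQpos : ∀ n, 0 < Q n)
    (hQgrowth : Filter.Tendsto (fun n => Real.log (Q (n + 1)) / Real.log (Q n))
      Filter.atTop (nhds 1))
    (l : ℕ → Fin (k + 1) → ℤ)
    (εs : Fin k → ℕ → ℝ) (θs : ℕ → ℝ)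
    (hεs : ∀ j, Filter.Tendsto (εs j) Filter.atTop (nhds 0))
    (hθs : Filter.Tendsto θs Filter.atTop (nhds 0))
    (hl : ∀ n : ℕ, 1 ≤ n → ∀ i, |(l n i : ℝ)| ≤ (Q n : ℝ) ^ (1 + θs n))
    (hL : ∀ n : ℕ, 1 ≤ n → ∀ j : Fin k,
      |(l n (Fin.last k) : ℝ) * ξ j - (l n j.castSucc : ℝ)| =
        (Q n : ℝ) ^ (-τs j + εs j n))
    :
    LinearIndependent ℚ (Fin.cons (1 : ℝ) ξ : Fin (k + 1) → ℝ) := by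
  exact stmt8_general hτpos hτinj (tendsto_natCast_atTop_atTop.comp hQmono.tendsto_atTop) hεs
    fun j => (eventually_ge_atTop 1).mono fun n hn => hL n hn j
end

section
/- Assume hypotheses (K). Then for every ε > 0 there exists Q_0 such that for every Q ≥ Q_0 and every tuple (a_0, a_1, …, a_k) ∈ ℤ^{k+1} with (a_0,…,a_k) ≠ (0,…,0) and |a_j| ≤ Q^{τ_j} for every j ∈ {1,…,k}, one has |a_0 + a_1ξ_1 + … + a_kξ_k| ≥ Q^{−1−ε}. -/
/-!
Write `Λ = a₀ + ∑ aⱼ ξⱼ`, let `(q, p)` be an approximation of `ξ` at scale `U` and put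
`δⱼ = p ξⱼ - qⱼ`, so that `|p| ≤ U ^ (1 + o(1))` and `|δⱼ| = U ^ (-τⱼ + o(1))`. Then `p Λ` and
`∑ aⱼ δⱼ` differ by an integer. If `|aⱼ| ≤ R ^ τⱼ` and `U = R ^ s` with `s > 1` fixed, the sum is
less than `1 / 2` in absolute value, hence `|∑ aⱼ δⱼ| ≤ |p Λ|`.

To bound the sum from below we need its terms not to cancel. The logarithm of `|aⱼ δⱼ|` is nearly
an affine function of `s` with slope proportional to `-τⱼ`; since the slopes are distinct, each pair
of terms can be of comparable size for at most one `s` in a well-spaced finite set. By pigeonhole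
some `s` close to `1` separates all the terms, and then `|∑ aⱼ δⱼ|` is comparable with the largest.

This gives `|Λ| ≥ |aⱼ| R ^ (-τⱼ - 1 - ε)` for every `j`. Applied with the least `R` such that
`|aⱼ| ≤ R ^ τⱼ` for all `j`, where equality holds for some `j`, it yields `|Λ| ≥ R ^ (-1 - ε)`.
-/

open Filter Topology Real

variable {ι : Type*}

/-- The integer vector `(q, p)` approximates `ξ` with exponents `τ` at the logarithmic scale
`u = log U`: up to a factor `exp r`, the common denominator `p` is at most `U` and the errors
`|p * ξ j - q j|` equal `U ^ (-τ j)`. -/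
structure IsSimultaneousApprox (ξ τ : ι → ℝ) (r u : ℝ) (p : ℤ) (q : ι → ℤ) : Prop where
  abs_denom_le : |(p : ℝ)| ≤ exp (u + r)
  le_abs_error : ∀ j, exp (-τ j * u - r) ≤ |p * ξ j - q j|
  abs_error_le : ∀ j, |p * ξ j - q j| ≤ exp (-τ j * u + r)

/-- `ξ` has simultaneous approximations with exponents `τ` at every large scale, in the sense of
hypotheses (K): the slack of `IsSimultaneousApprox` is `o(u)`, i.e. a factor `U ^ o(1)`. -/
def HasApproxExponents (ξ τ : ι → ℝ) : Prop :=
  ∀ c > 0, ∀ᶠ u in atTop, ∃ p q, IsSimultaneousApprox ξ τ (c * u) u p q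

/-! ### From a sequence of approximations to all scales -/

lemma exists_tendsto_div_of_tendsto_succ_div {u : ℕ → ℝ} (hu : Tendsto u atTop atTop)
    (hratio : Tendsto (fun n => u (n + 1) / u n) atTop (𝓝 1)) :
    ∃ ν : ℝ → ℕ, Tendsto ν atTop atTop ∧ Tendsto (fun t => u (ν t) / t) atTop (𝓝 1) := by
  classical
  have exists_ge (t : ℝ) : ∃ n, t ≤ u n := (hu.eventually_ge_atTop t).exists
  let ν (t : ℝ) : ℕ := Nat.find (exists_ge t)
  have le_u (t : ℝ) : t ≤ u (ν t) := Nat.find_spec (exists_ge t)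
  have u_pred_lt {t : ℝ} (ht : 1 ≤ ν t) : u (ν t - 1) < t :=
    not_le.1 (Nat.find_min (exists_ge t) (Nat.sub_one_lt_of_le ht le_rfl))
  have hν : Tendsto ν atTop atTop := by
    refine tendsto_atTop.2 fun N => ?_
    have h : ∀ᶠ t in atTop, ∀ m ∈ Finset.range N, u m < t :=
      (eventually_all_finset _).2 fun m _ => eventually_gt_atTop (u m)
    filter_upwards [h] with t ht
    exact (Nat.le_find_iff _ _).2 fun m hm => not_le.2 (ht m (Finset.mem_range.2 hm))
  have hpred : Tendsto (fun t => ν t - 1) atTop atTop := (tendsto_sub_atTop_nat 1).comp hν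
  have hupper : Tendsto (fun t => u (ν t - 1 + 1) / u (ν t - 1)) atTop (𝓝 1) := hratio.comp hpred
  refine ⟨ν, hν, tendsto_of_tendsto_of_tendsto_of_le_of_le' tendsto_const_nhds hupper ?_ ?_⟩
  · filter_upwards [eventually_gt_atTop 0] with t ht
    exact (one_le_div ht).2 (le_u t)
  · filter_upwards [eventually_gt_atTop 0, hν.eventually_ge_atTop 1,
      hpred.eventually (hu.eventually_gt_atTop 0)] with t ht hνt hpos
    rw [Nat.sub_add_cancel hνt]
    exact div_le_div_of_nonneg_left (ht.le.trans (le_u t)) hpos (u_pred_lt hνt).le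

lemma HasApproxExponents.of_tendsto [Finite ι] {ξ τ : ι → ℝ} {Q : ℕ → ℝ}
    (hQ : Tendsto Q atTop atTop)
    (hratio : Tendsto (fun n => log (Q (n + 1)) / log (Q n)) atTop (𝓝 1))
    {p : ℕ → ℤ} {q : ℕ → ι → ℤ} {ε : ι → ℕ → ℝ} {θ : ℕ → ℝ}
    (hε : ∀ j, Tendsto (ε j) atTop (𝓝 0)) (hθ : Tendsto θ atTop (𝓝 0))
    (hp : ∀ᶠ n in atTop, |(p n : ℝ)| ≤ Q n ^ (1 + θ n))
    (hq : ∀ᶠ n in atTop, ∀ j, |p n * ξ j - q n j| = Q n ^ (-τ j + ε j n)) :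
    HasApproxExponents ξ τ := by
  intro c hc
  obtain ⟨ν, hν, hdiv⟩ :=
    exists_tendsto_div_of_tendsto_succ_div (tendsto_log_atTop.comp hQ) hratio
  have hdenom : Tendsto (fun t => log (Q (ν t)) / t * (1 + θ (ν t))) atTop (𝓝 1) := by
    simpa using hdiv.mul ((hθ.comp hν).const_add 1)
  have herror (j : ι) :
      Tendsto (fun t => log (Q (ν t)) / t * (-τ j + ε j (ν t))) atTop (𝓝 (-τ j)) := by
    simpa using hdiv.mul (((hε j).comp hν).const_add (-τ j))
  filter_upwards [hν.eventually hp, hν.eventually hq,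
    hν.eventually (hQ.eventually_gt_atTop 0), eventually_gt_atTop 0,
    hdenom.eventually_le_const (lt_add_of_pos_right 1 hc),
    eventually_all.2 fun j => (herror j).eventually_const_le (sub_lt_self (-τ j) hc),
    eventually_all.2 fun j => (herror j).eventually_le_const (lt_add_of_pos_right (-τ j) hc)]
    with t hpt hqt hQt ht hdenom_le hle_error herror_le
  have hrpow (x : ℝ) : Q (ν t) ^ x = exp (log (Q (ν t)) / t * x * t) := by
    rw [rpow_def_of_pos hQt]; congr 1; field_simp
  refine ⟨p (ν t), q (ν t), ?_, fun j => ?_, fun j => ?_⟩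
  · rw [← one_add_mul]
    exact hpt.trans ((hrpow _).trans_le (by gcongr))
  · rw [← sub_mul, hqt j, hrpow]
    gcongr
    exact hle_error j
  · rw [← add_mul, hqt j, hrpow]
    gcongr
    exact herror_le j

lemma HasApproxExponents.eventually_exists_approx_mul {ξ τ : ι → ℝ}
    (h : HasApproxExponents ξ τ) {s c : ℝ} (hs : 0 < s) (hc : 0 < c) :
    ∀ᶠ T in atTop, ∃ p q, IsSimultaneousApprox ξ τ (c * T) (s * T) p q := by
  filter_upwards [(tendsto_id.const_mul_atTop hs).eventually (h (c / s) (by positivity))] with T hT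
  rwa [id_eq, ← mul_assoc, div_mul_cancel₀ c hs.ne'] at hT

/-! ### Sums whose terms have separated sizes -/

section OrderedField

variable {𝕜 : Type*} [Field 𝕜] [LinearOrder 𝕜] [IsStrictOrderedRing 𝕜]

lemma one_le_abs_intCast {n : ℤ} (hn : n ≠ 0) : (1 : 𝕜) ≤ |(n : 𝕜)| := by
  exact_mod_cast Int.one_le_abs hn

lemma abs_le_abs_add_intCast {y : 𝕜} (hy : |y| ≤ 1 / 2) (z : ℤ) : |y| ≤ |y + z| := by
  rcases eq_or_ne z 0 with rfl | hz
  · simp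
  · have htri : |(z : 𝕜)| ≤ |y + z| + |y| := by simpa using abs_sub (y + z) y
    linarith [one_le_abs_intCast (𝕜 := 𝕜) hz]

lemma two_mul_abs_sum_le_of_forall [Fintype ι] {x : ι → 𝕜} {M : 𝕜} (hM : 0 ≤ M)
    (h : ∀ j, 2 * Fintype.card ι * |x j| ≤ M) : 2 * |∑ j, x j| ≤ M := by
  rcases isEmpty_or_nonempty ι
  · simpa using hM
  calc 2 * |∑ j, x j| ≤ 2 * ∑ j, |x j| := by gcongr; exact Finset.abs_sum_le_sum_abs _ _
    _ ≤ 2 * ∑ _j : ι, M / (2 * (Fintype.card ι : 𝕜)) := by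
        gcongr with j
        exact (le_div_iff₀' (by positivity)).2 (h j)
    _ = M := by
        rw [Finset.sum_const, Finset.card_univ, nsmul_eq_mul]
        field_simp

lemma abs_le_two_mul_abs_sum_of_dominant [Fintype ι] {x : ι → 𝕜} (i : ι)
    (h : ∀ j ≠ i, 2 * Fintype.card ι * |x j| ≤ |x i|) : |x i| ≤ 2 * |∑ j, x j| := by
  classical
  have hrest : 2 * |∑ j, (x j - Pi.single (M := fun _ => 𝕜) i (x i) j)| ≤ |x i| := by
    refine two_mul_abs_sum_le_of_forall (abs_nonneg _) fun j => ?_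
    rcases eq_or_ne j i with rfl | hj
    · simp
    · simpa [hj] using h j hj
  rw [Finset.sum_sub_distrib, Finset.sum_pi_single', if_pos (Finset.mem_univ i)] at hrest
  linarith [abs_sub_abs_le_abs_sub (x i) (∑ j, x j), abs_sub_comm (x i) (∑ j, x j)]

lemma abs_le_two_mul_abs_sum_of_separated [Fintype ι] {x : ι → 𝕜}
    (h : ∀ i j, i ≠ j →
      2 * Fintype.card ι * |x i| ≤ |x j| ∨ 2 * Fintype.card ι * |x j| ≤ |x i|) (j : ι) :
    |x j| ≤ 2 * |∑ i, x i| := by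
  have : Nonempty ι := ⟨j⟩
  have hcard : (1 : 𝕜) ≤ Fintype.card ι := by exact_mod_cast Fintype.card_pos
  obtain ⟨i, hmax⟩ := Finite.exists_max fun i => |x i|
  refine (hmax j).trans (abs_le_two_mul_abs_sum_of_dominant i fun l hl => ?_)
  rcases h i l hl.symm with hil | hli
  · nlinarith [hcard, hmax l, abs_nonneg (x i), abs_nonneg (x l)]
  · exact hli

lemma exists_pos_forall_lt {α : Type*} [Finite α] {f : α → 𝕜} (hf : ∀ x, 0 < f x) :
    ∃ d > 0, ∀ x, d < f x := by
  simpa using Pi.exists_forall_pos_add_lt hf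

lemma exists_pos_forall_lt_abs_sub {α : Type*} [Finite α] {f : α → 𝕜}
    (hf : Function.Injective f) : ∃ d > 0, ∀ x y, x ≠ y → d < |f x - f y| := by
  obtain ⟨d, hd, hlt⟩ := exists_pos_forall_lt
    (f := fun z : {z : α × α // z.1 ≠ z.2} => |f z.1.1 - f z.1.2|)
    fun z => abs_pos.2 (sub_ne_zero.2 (hf.ne z.2))
  exact ⟨d, hd, fun x y hxy => hlt ⟨(x, y), hxy⟩⟩

lemma exists_pos_forall_exists_mem_separated [Fintype ι] {τ : ι → 𝕜}
    (hτ : Function.Injective τ) {S : Finset 𝕜} (hS : Fintype.card ι ^ 2 < S.card) :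
    ∃ δ > 0, ∀ b : ι → 𝕜, ∃ s ∈ S, ∀ i j, i ≠ j →
      δ ≤ |(b i - τ i * s) - (b j - τ j * s)| := by
  obtain ⟨d, hd, hτd⟩ := exists_pos_forall_lt_abs_sub hτ
  obtain ⟨e, he, hSe⟩ := exists_pos_forall_lt_abs_sub (f := ((↑) : S → 𝕜)) Subtype.val_injective
  refine ⟨d * e / 2, by positivity, fun b => ?_⟩
  suffices h : ∃ s : S, ∀ i j, i ≠ j → d * e / 2 ≤ |(b i - τ i * s) - (b j - τ j * s)| from
    h.elim fun s hs => ⟨s, s.2, hs⟩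
  by_contra! hclose
  choose i j hij hlt using hclose
  obtain ⟨s, s', hne, heq⟩ :=
    Fintype.exists_ne_map_eq_of_card_lt (fun s => (i s, j s)) (by simpa [← sq] using hS)
  obtain ⟨hi, hj⟩ := Prod.mk.inj heq
  have hlt' := hlt s'
  rw [← hi, ← hj] at hlt'
  have hfar : d * e ≤ |(τ (i s) - τ (j s)) * ((s : 𝕜) - s')| := by
    rw [abs_mul]
    gcongr
    · exact (hτd _ _ (hij s)).le
    · exact (hSe s s' hne).le
  have hnear : |(τ (i s) - τ (j s)) * ((s : 𝕜) - s')| < d * e := by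
    obtain ⟨hlower, hupper⟩ := abs_lt.1 (hlt s)
    obtain ⟨hlower', hupper'⟩ := abs_lt.1 hlt'
    exact abs_lt.2 ⟨by linarith, by linarith⟩
  exact hfar.not_gt hnear

end OrderedField

/-! ### Lower bounds for the linear form -/

-- The junk value `log 0 = 0` is harmless for `j`: when `a j = 0` the left-hand side vanishes.
lemma IsSimultaneousApprox.exp_mul_abs_mul_error_le {ξ τ : ι → ℝ} {r u : ℝ} {p : ℤ} {q : ι → ℤ}
    (h : IsSimultaneousApprox ξ τ r u p q) {a : ι → ℤ} {i j : ι} (hi : a i ≠ 0) {L : ℝ}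
    (hij : 2 * r + L ≤ (log |(a i : ℝ)| - τ i * u) - (log |(a j : ℝ)| - τ j * u)) :
    exp L * |a j * (p * ξ j - q j)| ≤ |a i * (p * ξ i - q i)| := by
  rw [abs_mul, abs_mul]
  calc exp L * (|(a j : ℝ)| * |p * ξ j - q j|)
      ≤ exp L * (exp (log |(a j : ℝ)|) * exp (-τ j * u + r)) := by
        gcongr
        exacts [le_exp_log _, h.abs_error_le j]
    _ = exp (L + (log |(a j : ℝ)| + (-τ j * u + r))) := by simp only [exp_add]
    _ ≤ exp (log |(a i : ℝ)| + (-τ i * u - r)) := exp_le_exp.2 (by linarith)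
    _ = |(a i : ℝ)| * exp (-τ i * u - r) := by
        rw [exp_add, exp_log (abs_pos.2 (Int.cast_ne_zero.2 hi))]
    _ ≤ |(a i : ℝ)| * |p * ξ i - q i| := by gcongr; exact h.le_abs_error i

section LinearForm

variable [Fintype ι]

lemma abs_sum_mul_error_le_abs_mul {ξ : ι → ℝ} {p : ℤ} {q : ι → ℤ} {a : ι → ℤ}
    (h : |∑ j, a j * (p * ξ j - q j)| ≤ 1 / 2) (a₀ : ℤ) :
    |∑ j, a j * (p * ξ j - q j)| ≤ |p * (a₀ + ∑ j, a j * ξ j)| := by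
  have hint : (p : ℝ) * (a₀ + ∑ j, a j * ξ j) =
      ∑ j, a j * (p * ξ j - q j) + (p * a₀ + ∑ j, a j * q j : ℤ) := by
    push_cast
    rw [mul_add, Finset.mul_sum, add_left_comm, ← Finset.sum_add_distrib]
    congr! 2 with j
    ring
  rw [hint]
  exact abs_le_abs_add_intCast h _

namespace IsSimultaneousApprox

variable {ξ τ : ι → ℝ} {r u : ℝ} {p : ℤ} {q : ι → ℤ}

lemma abs_mul_exp_le (h : IsSimultaneousApprox ξ τ r u p q) {a : ι → ℤ}
    (hsmall : |∑ i, a i * (p * ξ i - q i)| ≤ 1 / 2) {j : ι}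
    (hlarge : |a j * (p * ξ j - q j)| ≤ 2 * |∑ i, a i * (p * ξ i - q i)|) (a₀ : ℤ) :
    |(a j : ℝ)| * exp (-(τ j + 1) * u - 2 * r) ≤ 2 * |a₀ + ∑ i, a i * ξ i| := by
  have hterm : |(a j : ℝ)| * exp (-τ j * u - r) ≤ 2 * (exp (u + r) * |a₀ + ∑ i, a i * ξ i|) :=
    calc |(a j : ℝ)| * exp (-τ j * u - r) ≤ |(a j : ℝ)| * |p * ξ j - q j| := by
          gcongr; exact h.le_abs_error j
      _ = |a j * (p * ξ j - q j)| := (abs_mul _ _).symm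
      _ ≤ 2 * |∑ i, a i * (p * ξ i - q i)| := hlarge
      _ ≤ 2 * |p * (a₀ + ∑ i, a i * ξ i)| := by
          gcongr ?_ * ?_; exact abs_sum_mul_error_le_abs_mul hsmall a₀
      _ ≤ 2 * (exp (u + r) * |a₀ + ∑ i, a i * ξ i|) := by
          rw [abs_mul]; gcongr; exact h.abs_denom_le
  have hexp : exp (-(τ j + 1) * u - 2 * r) = exp (-τ j * u - r) / exp (u + r) := by
    rw [← exp_sub]; ring_nf
  rw [hexp, ← mul_div_assoc, div_le_iff₀ (exp_pos _)]
  linarith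

lemma abs_mul_exp_le_of_separated (h : IsSimultaneousApprox ξ τ r u p q) {a : ι → ℤ}
    (ha : ∀ j, |(a j : ℝ)| ≤ exp (τ j * u - r - log (2 * Fintype.card ι)))
    (hsep : ∀ i j, i ≠ j → 2 * r + log (2 * Fintype.card ι) ≤
      |(log |(a i : ℝ)| - τ i * u) - (log |(a j : ℝ)| - τ j * u)|) (a₀ : ℤ) (j : ι) :
    |(a j : ℝ)| * exp (-(τ j + 1) * u - 2 * r) ≤ 2 * |a₀ + ∑ i, a i * ξ i| := by
  have : Nonempty ι := ⟨j⟩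
  have hcard : exp (log (2 * Fintype.card ι)) = 2 * Fintype.card ι := exp_log (by positivity)
  have hsmall : |∑ i, a i * (p * ξ i - q i)| ≤ 1 / 2 := by
    suffices 2 * |∑ i, a i * (p * ξ i - q i)| ≤ 1 by linarith
    refine two_mul_abs_sum_le_of_forall zero_le_one fun i => ?_
    calc 2 * Fintype.card ι * |a i * (p * ξ i - q i)|
        ≤ exp (log (2 * Fintype.card ι)) *
            (exp (τ i * u - r - log (2 * Fintype.card ι)) * exp (-τ i * u + r)) := by
          rw [hcard, abs_mul]
          gcongr
          exacts [ha i, h.abs_error_le i]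
      _ = 1 := by rw [← exp_add, ← exp_add, exp_eq_one_iff]; ring
  have hratio (i l : ι) (hle : 2 * r + log (2 * Fintype.card ι) ≤
      (log |(a i : ℝ)| - τ i * u) - (log |(a l : ℝ)| - τ l * u)) (hi : a i ≠ 0) :
      2 * Fintype.card ι * |a l * (p * ξ l - q l)| ≤ |a i * (p * ξ i - q i)| :=
    hcard ▸ h.exp_mul_abs_mul_error_le hi hle
  refine h.abs_mul_exp_le hsmall (abs_le_two_mul_abs_sum_of_separated
    (x := fun i => a i * (p * ξ i - q i)) (fun i l hil => ?_) j) a₀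
  rcases eq_or_ne (a i) 0 with hi | hi
  · exact .inl (by simp [hi, -abs_mul])
  rcases eq_or_ne (a l) 0 with hl | hl
  · exact .inr (by simp [hl, -abs_mul])
  rcases le_abs.1 (hsep i l hil) with hle | hle
  · exact .inr (hratio i l hle hi)
  · exact .inl (hratio l i (by linarith) hl)

end IsSimultaneousApprox

namespace HasApproxExponents

variable {ξ τ : ι → ℝ}

lemma eventually_abs_mul_exp_le_of_separated (h : HasApproxExponents ξ τ) (hτ : ∀ j, 0 < τ j)
    {s δ η : ℝ} (hs : 1 < s) (hδ : 0 < δ) (hη : 0 < η) :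
    ∀ᶠ T in atTop, ∀ (a₀ : ℤ) (a : ι → ℤ), (∀ j, |(a j : ℝ)| ≤ exp (τ j * T)) →
      (∀ i j, i ≠ j → δ * T ≤
        |(log |(a i : ℝ)| - τ i * (s * T)) - (log |(a j : ℝ)| - τ j * (s * T))|) →
      ∀ j, |(a j : ℝ)| * exp (-((τ j + 1) * s + η) * T) ≤ |a₀ + ∑ i, a i * ξ i| := by
  obtain ⟨κ, hκ, hκτ⟩ := exists_pos_forall_lt fun j => mul_pos (hτ j) (sub_pos.2 hs)
  obtain ⟨c, hc, hlt⟩ : ∃ c > 0, c < min (κ / 2) (min (δ / 3) (η / 3)) :=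
    exists_between (by positivity)
  obtain ⟨hcκ, hcδ, hcη⟩ : c < κ / 2 ∧ c < δ / 3 ∧ c < η / 3 := by
    simpa only [lt_min_iff] using hlt
  have hcT : Tendsto (fun T => c * T) atTop atTop := tendsto_id.const_mul_atTop hc
  filter_upwards [h.eventually_exists_approx_mul (zero_lt_one.trans hs) hc, eventually_gt_atTop 0,
    hcT.eventually_ge_atTop (log 2), hcT.eventually_ge_atTop (log (2 * Fintype.card ι))]
    with T ⟨p, q, happrox⟩ hT hlog2 hlogcard a₀ a ha hsep j
  have hbound := happrox.abs_mul_exp_le_of_separated (a := a)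
    (fun i => (ha i).trans (exp_le_exp.2 (by nlinarith [hκτ i])))
    (fun i l hil => le_trans (by nlinarith) (hsep i l hil)) a₀ j
  have hexp : 2 * exp (-((τ j + 1) * s + η) * T) ≤ exp (-(τ j + 1) * (s * T) - 2 * (c * T)) := by
    rw [← exp_log (zero_lt_two' ℝ), ← exp_add, exp_log (zero_lt_two' ℝ)]
    exact exp_le_exp.2 (by nlinarith)
  linarith [mul_le_mul_of_nonneg_left hexp (abs_nonneg (a j : ℝ))]

lemma eventually_abs_mul_exp_le (h : HasApproxExponents ξ τ) (hτ : ∀ j, 0 < τ j)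
    (hinj : Function.Injective τ) {ε : ℝ} (hε : 0 < ε) :
    ∀ᶠ T in atTop, ∀ (a₀ : ℤ) (a : ι → ℤ), (∀ j, |(a j : ℝ)| ≤ exp (τ j * T)) →
      ∀ j, |(a j : ℝ)| * exp (-(τ j + 1 + ε) * T) ≤ |a₀ + ∑ i, a i * ξ i| := by
  have hnear : ∀ᶠ s in 𝓝[>] (1 : ℝ), ∀ j, (τ j + 1) * s < τ j + 1 + ε / 2 := by
    refine (eventually_all.2 fun j => ?_).filter_mono nhdsWithin_le_nhds
    exact (continuous_const_mul (τ j + 1)).continuousAt.eventually_lt_const (by linarith)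
  obtain ⟨σ, hσ, hIoo⟩ := mem_nhdsGT_iff_exists_Ioo_subset.1 hnear
  obtain ⟨S, hS, hScard⟩ :=
    (Set.Ioo_infinite (Set.mem_Ioi.1 hσ)).exists_subset_card_eq (Fintype.card ι ^ 2 + 1)
  obtain ⟨δ, hδ, hpigeon⟩ :=
    exists_pos_forall_exists_mem_separated hinj (S := S) (by lia)
  have hSbound := (eventually_all_finset S).2 fun s hs =>
    h.eventually_abs_mul_exp_le_of_separated hτ (hS hs).1 hδ (half_pos hε)
  filter_upwards [hSbound, eventually_gt_atTop 0] with T hbound hT a₀ a ha j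
  obtain ⟨s, hs, hsep⟩ := hpigeon fun i => log |(a i : ℝ)| / T
  have hscaled (i l : ι) (hil : i ≠ l) : δ * T ≤
      |(log |(a i : ℝ)| - τ i * (s * T)) - (log |(a l : ℝ)| - τ l * (s * T))| :=
    calc δ * T ≤ |(log |(a i : ℝ)| / T - τ i * s) - (log |(a l : ℝ)| / T - τ l * s)| * |T| := by
          rw [abs_of_pos hT]; gcongr; exact hsep i l hil
      _ = _ := by rw [← abs_mul]; congr 1; field_simp
  have hexponent : (τ j + 1) * s < τ j + 1 + ε / 2 := hIoo (hS hs) j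
  refine le_trans ?_ (hbound s hs a₀ a ha hscaled j)
  gcongr ?_ * exp (-?_ * _)
  linarith

end HasApproxExponents

end LinearForm

lemma exists_ge_forall_abs_le_exp [Finite ι] {τ : ι → ℝ} (hτ : ∀ j, 0 < τ j) {T₀ : ℝ}
    (hT₀ : 0 ≤ T₀) (x : ι → ℝ) :
    ∃ T ≥ T₀, (∀ j, |x j| ≤ exp (τ j * T)) ∧ (T = T₀ ∨ ∃ j, |x j| = exp (τ j * T)) := by
  let size (i : Option ι) : ℝ := i.elim T₀ fun j => log |x j| / τ j
  obtain ⟨i, hmax⟩ := Finite.exists_max size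
  refine ⟨size i, hmax none, fun j => ?_, ?_⟩
  · exact (le_exp_log _).trans (exp_le_exp.2 ((div_le_iff₀' (hτ j)).1 (hmax (some j))))
  · rcases (hmax none).eq_or_lt with heq | hlt
    · exact .inl heq.symm
    rcases i with - | j
    · exact .inl rfl
    have hlog : log |x j| = τ j * size (some j) := (mul_div_cancel₀ _ (hτ j).ne').symm
    have hpos : 0 < log |x j| := hlog ▸ mul_pos (hτ j) (hT₀.trans_lt hlt)
    have hx : x j ≠ 0 := by
      intro hx
      simp [hx] at hpos
    exact .inr ⟨j, by rw [← hlog, exp_log (abs_pos.2 hx)]⟩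

theorem stmt9_general [Fintype ι] {ξ τ : ι → ℝ} (h : HasApproxExponents ξ τ)
    (hτ : ∀ j, 0 < τ j) (hinj : Function.Injective τ) {ε : ℝ} (hε : 0 < ε) :
    ∀ᶠ Q : ℝ in atTop, ∀ (a₀ : ℤ) (a : ι → ℤ), (a₀, a) ≠ 0 → (∀ j, |(a j : ℝ)| ≤ Q ^ τ j) →
      Q ^ (-1 - ε) ≤ |a₀ + ∑ j, a j * ξ j| := by
  obtain ⟨T₀, hT₀⟩ := eventually_atTop.1
    ((h.eventually_abs_mul_exp_le hτ hinj hε).and (eventually_ge_atTop 0))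
  have hlogQ : ∀ᶠ Q in atTop, ∀ j, (τ j + 1 + ε) * T₀ ≤ (1 + ε) * log Q :=
    eventually_all.2 fun j =>
      (tendsto_log_atTop.const_mul_atTop (by positivity)).eventually_ge_atTop _
  filter_upwards [eventually_ge_atTop 1, hlogQ] with Q hQ hlogQ a₀ a hne ha
  have hQ0 : 0 < Q := zero_lt_one.trans_le hQ
  by_cases hzero : a = 0
  · subst hzero
    have ha₀ : a₀ ≠ 0 := by rintro rfl; exact hne rfl
    simpa using (rpow_le_one_of_one_le_of_nonpos hQ (by linarith)).trans (one_le_abs_intCast ha₀)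
  obtain ⟨T, hT, haT, hext⟩ := exists_ge_forall_abs_le_exp hτ (hT₀ T₀ le_rfl).2 fun j => (a j : ℝ)
  obtain ⟨j, hj⟩ : ∃ j, exp (log Q * (-1 - ε)) ≤ |(a j : ℝ)| * exp (-(τ j + 1 + ε) * T) := by
    rcases hext with rfl | ⟨j, hj⟩
    · obtain ⟨j, hj⟩ := Function.ne_iff.1 hzero
      refine ⟨j, le_trans (exp_le_exp.2 ?_) (le_mul_of_one_le_left (exp_pos _).le
        (one_le_abs_intCast hj))⟩
      linarith [hlogQ j]
    · have hTQ : T ≤ log Q := by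
        have hle := ha j
        rw [hj, rpow_def_of_pos hQ0, exp_le_exp, mul_comm] at hle
        exact le_of_mul_le_mul_right hle (hτ j)
      refine ⟨j, ?_⟩
      rw [hj, ← exp_add]
      exact exp_le_exp.2 (by nlinarith)
  rw [rpow_def_of_pos hQ0]
  exact hj.trans ((hT₀ T hT).1 a₀ a haT j)

/-- Under hypotheses (K): for ε > 0 and Q sufficiently large, every nonzero integer tuple
(a_0,…,a_k) with |a_j| ≤ Q^{τ_j} (1 ≤ j ≤ k) satisfies |a_0+a_1ξ_1+…+a_kξ_k| ≥ Q^{-1-ε}. -/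
theorem stmt9
    (k : ℕ) (hk : 1 ≤ k) (ξ : Fin k → ℝ)
    (τs : Fin k → ℝ) (hτpos : ∀ j, 0 < τs j) (hτinj : Function.Injective τs)
    (Q : ℕ → ℕ) (hQmono : StrictMono Q) (hQpos : ∀ n, 0 < Q n)
    (hQgrowth : Filter.Tendsto (fun n => Real.log (Q (n + 1)) / Real.log (Q n))
      Filter.atTop (nhds 1))
    (l : ℕ → Fin (k + 1) → ℤ)
    (εs : Fin k → ℕ → ℝ) (θs : ℕ → ℝ)
    (hεs : ∀ j, Filter.Tendsto (εs j) Filter.atTop (nhds 0))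
    (hθs : Filter.Tendsto θs Filter.atTop (nhds 0))
    (hl : ∀ n : ℕ, 1 ≤ n → ∀ i, |(l n i : ℝ)| ≤ (Q n : ℝ) ^ (1 + θs n))
    (hL : ∀ n : ℕ, 1 ≤ n → ∀ j : Fin k,
      |(l n (Fin.last k) : ℝ) * ξ j - (l n j.castSucc : ℝ)| =
        (Q n : ℝ) ^ (-τs j + εs j n))
    :
    ∀ ε : ℝ, 0 < ε → ∃ Q0 : ℝ, ∀ Qr : ℝ, Q0 ≤ Qr →
      ∀ a : Fin (k + 1) → ℤ, a ≠ 0 →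
        (∀ j : Fin k, |(a j.succ : ℝ)| ≤ Qr ^ τs j) →
        Qr ^ (-1 - ε) ≤ |(a 0 : ℝ) + ∑ j : Fin k, (a j.succ : ℝ) * ξ j| := by
  intro ε hε
  obtain ⟨Q0, hQ0⟩ := Filter.eventually_atTop.1 (stmt9_general (HasApproxExponents.of_tendsto
    (tendsto_natCast_atTop_atTop.comp hQmono.tendsto_atTop) hQgrowth hεs hθs
    ((eventually_ge_atTop 1).mono fun n hn => hl n hn (Fin.last k))
    ((eventually_ge_atTop 1).mono hL)) hτpos hτinj hε)
  exact ⟨Q0, fun Qr hQr a ha =>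
    hQ0 Qr hQr (a 0) (Fin.tail a) fun h =>
      ha (funext (Fin.cases (congrArg Prod.fst h) (congrFun (congrArg Prod.snd h))))⟩
end

section
/- Assume hypotheses (H). Let τ = min(τ_1,…,τ_k) and F = Span_ℝ(e_1,…,e_k). For a nonzero point P ∈ ℝ^p, write P = u + f with u ∈ F^⊥ and f ∈ F, and define Dist(P, F) = ‖u‖/‖P‖ (Euclidean norm). Then for every ε > 0 there exists R_0 such that every P ∈ ℤ^p \ {0} with ‖P‖ ≥ R_0 satisfies Dist(P, F) ≥ ‖P‖^{−1−1/τ−ε}. -/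
/-!
Put `q n = log (Q n)`. On a point `f = ∑ j, c j • e j` of the subspace, the `j`-th term of `L n f`
has size `|c j| * exp (-τ j * q n)` up to a factor `exp (o (q n))`, as long as the cosines stay away
from `0`. The functions `log |c j| - τ j * x` are affine with distinct slopes, so they are well
separated on a window of some interval slightly to the right of the point `x₀` where the last of
them vanishes. For `q n` in this window a single term dominates, nothing cancels, and `|L n f|` is
at most `1 / 2` but at least `exp (-o (x₀))`. If `P` is an integer point then `L n P` is an
integer, hence `|L n (P - f)| ≥ |L n f|`, and `‖L n‖ ≤ exp ((1 + o (1)) * q n)` bounds `‖P - f‖`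
from below by `exp (-(1 + o (1)) * x₀)`, while `exp (x₀ * min τ)` is at most a constant times `‖f‖`.

Such `n` exist because the orbit of a rotation of the compact torus visits an open set with bounded
gaps, so the indices at which every cosine stays away from `0` are syndetic, and because
`log (Q (n + 1)) / log (Q n) → 1`, so that along a syndetic set of indices the numbers `q n` come
within `o (x)` of every large `x`.
-/

open Filter Topology

section Syndetic

/-- A set of natural numbers is syndetic if its gaps are bounded. -/
def IsSyndetic (G : Set ℕ) : Prop :=
  ∃ B : ℕ, ∀ m, ∃ n ∈ G, m ≤ n ∧ n ≤ m + B

theorem isSyndetic_setOf_nsmul_mem {A : Type*} [AddGroup A] [TopologicalSpace A]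
    [IsTopologicalAddGroup A] [CompactSpace A] {W : Set A} (hW : IsOpen W) {g : A} {n₀ : ℕ}
    (hn₀ : n₀ • g ∈ W) : IsSyndetic {n : ℕ | n • g ∈ W} := by
  let O (r : ℕ) : Set A := {x | n₀ • g - r • g + x ∈ W}
  have hO : ∀ r, IsOpen (O r) := fun r => hW.preimage (by fun_prop)
  have hcover : closure (Set.range fun r : ℕ => r • g) ⊆ ⋃ r, O r := by
    intro x hx
    have hopen : IsOpen {y | n₀ • g - y + x ∈ W} := hW.preimage (by fun_prop)
    obtain ⟨_, hy, r, rfl⟩ := mem_closure_iff.1 hx _ hopen (by simpa using hn₀)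
    exact Set.mem_iUnion.2 ⟨r, hy⟩
  obtain ⟨t, ht⟩ := isClosed_closure.isCompact.elim_finite_subcover O hO hcover
  refine ⟨n₀ + t.sup id, fun m => ?_⟩
  obtain ⟨r, hr, hmem⟩ := Set.mem_iUnion₂.1 (ht (subset_closure ⟨m + t.sup id, rfl⟩))
  have hle : r ≤ t.sup id := Finset.le_sup (f := id) hr
  obtain ⟨s, hs⟩ : ∃ s, m + t.sup id = r + s := Nat.exists_eq_add_of_le (by omega)
  refine ⟨n₀ + s, ?_, by omega, by omega⟩
  simpa [O, hs, add_nsmul, ← add_assoc] using hmem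

theorem exists_isSyndetic_setOf_lt_abs_cos {ι : Type*} [Finite ι] (ω φ : ι → ℝ) {n₀ : ℕ}
    (hn₀ : ∀ j, Real.cos (n₀ * ω j + φ j) ≠ 0) :
    ∃ κ > 0, IsSyndetic {n : ℕ | ∀ j, κ < |Real.cos (n * ω j + φ j)|} := by
  obtain ⟨κ, hκ, hlt⟩ := Pi.exists_forall_pos_add_lt fun j => abs_pos.2 (hn₀ j)
  simp only [zero_add] at hlt
  have : Fact (0 < 2 * Real.pi) := ⟨Real.two_pi_pos⟩
  have : CompactSpace Real.Angle := inferInstanceAs (CompactSpace (AddCircle (2 * Real.pi)))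
  let W : Set (ι → Real.Angle) := {z | ∀ j, κ < |(z j + φ j).cos|}
  have hW : IsOpen W := by
    simp only [W, Set.ofPred_forall]
    refine isOpen_iInter_of_finite fun j => isOpen_lt continuous_const ?_
    exact (Real.Angle.continuous_cos.comp ((continuous_apply j).add continuous_const)).abs
  have hmem (n : ℕ) : n • (fun j => (ω j : Real.Angle)) ∈ W ↔
      ∀ j, κ < |Real.cos (n * ω j + φ j)| := by
    simp only [W, Set.mem_ofPred_eq, Pi.smul_apply, ← Real.Angle.natCast_mul_eq_nsmul,
      ← Real.Angle.coe_add, Real.Angle.cos_coe]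
  refine ⟨κ, hκ, ?_⟩
  simpa only [hmem] using isSyndetic_setOf_nsmul_mem hW ((hmem n₀).2 hlt)

end Syndetic

section LogDense

variable {I : Type*} {F : Filter I} {q : I → ℝ}

/-- The weights `q` are logarithmically dense along the filter `F`: every large `x` is approximated
by some `q n`, with `n` arbitrarily far along `F`, up to a relative error tending to `0`. For
`q n = log (Q n)` this says that every large number has the form `(Q n) ^ (1 + o(1))`. -/
def IsLogDense (F : Filter I) (q : I → ℝ) : Prop :=
  ∀ s ∈ F, ∀ δ > 0, ∀ᶠ x in atTop, ∃ n ∈ s, |q n - x| ≤ δ * x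

theorem tendsto_succ_div_of_le_one_add_div_mul {q : ℕ → ℝ} (hq : Tendsto q atTop atTop)
    (hmono : ∀ᶠ n in atTop, q n ≤ q (n + 1)) {M : ℝ}
    (hM : ∀ᶠ n : ℕ in atTop, q (n + 1) ≤ (1 + M / n) * q n) :
    Tendsto (fun n => q (n + 1) / q n) atTop (𝓝 1) := by
  have hupper : Tendsto (fun n : ℕ => 1 + M / n) atTop (𝓝 1) := by
    simpa using (tendsto_const_div_atTop_nhds_zero_nat M).const_add 1
  refine tendsto_of_tendsto_of_tendsto_of_le_of_le' tendsto_const_nhds hupper ?_ ?_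
  · filter_upwards [hq.eventually_gt_atTop 0, hmono] with n hn hle
    exact (one_le_div hn).2 hle
  · filter_upwards [hq.eventually_gt_atTop 0, hM] with n hn hle
    rwa [div_le_iff₀ hn]

theorem tendsto_add_div_of_tendsto_succ_div {q : ℕ → ℝ} (hq : Tendsto q atTop atTop)
    (hratio : Tendsto (fun n => q (n + 1) / q n) atTop (𝓝 1)) (b : ℕ) :
    Tendsto (fun n => q (n + b) / q n) atTop (𝓝 1) := by
  induction b with
  | zero =>
    refine tendsto_const_nhds.congr' ?_
    filter_upwards [hq.eventually_ne_atTop 0] with n hn using (div_self hn).symm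
  | succ b ih =>
    have hshift := tendsto_add_atTop_nat b
    have hmul := (hratio.comp hshift).mul ih
    rw [one_mul] at hmul
    refine hmul.congr' ?_
    filter_upwards [hshift.eventually (hq.eventually_ne_atTop 0)] with n hn
    exact div_mul_div_cancel₀ hn

theorem exists_ge_lt_le_succ {q : ℕ → ℝ} (hq : Tendsto q atTop atTop) {N : ℕ} {x : ℝ}
    (hx : q N < x) : ∃ m ≥ N, q m < x ∧ x ≤ q (m + 1) := by
  by_contra! hcon
  have hlt : ∀ m ≥ N, q m < x := Nat.le_induction hx hcon
  obtain ⟨m, hm, hNm⟩ := ((hq.eventually_ge_atTop x).and (eventually_ge_atTop N)).exists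
  exact (hlt m hNm).not_ge hm

theorem IsSyndetic.isLogDense {q : ℕ → ℝ} {G : Set ℕ} (hG : IsSyndetic G)
    (hq : Tendsto q atTop atTop) (hratio : Tendsto (fun n => q (n + 1) / q n) atTop (𝓝 1)) :
    IsLogDense (atTop ⊓ 𝓟 G) q := by
  intro s hs δ hδ
  obtain ⟨B, hB⟩ := hG
  have hclose : ∀ᶠ m in atTop, ∀ b ∈ Finset.range (B + 2), |q (m + b) - q m| < δ / 2 * q m := by
    refine (Finset.eventually_all _).2 fun b _ => ?_
    have hdist := (tendsto_add_div_of_tendsto_succ_div hq hratio b).eventually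
      (Metric.ball_mem_nhds 1 (half_pos hδ))
    filter_upwards [hdist, hq.eventually_gt_atTop 0] with m hm hpos
    rwa [Real.dist_eq, div_sub_one hpos.ne', abs_div, abs_of_pos hpos,
      div_lt_iff₀ hpos] at hm
  obtain ⟨N, hN⟩ := eventually_atTop.1 (hclose.and (mem_inf_principal.1 hs))
  filter_upwards [eventually_gt_atTop (q N)] with x hx
  obtain ⟨m, hm, hlt, hle⟩ := exists_ge_lt_le_succ hq hx
  obtain ⟨n, hnG, hmn, hnm⟩ := hB (m + 1)
  obtain ⟨b, rfl⟩ := Nat.exists_eq_add_of_le (show m ≤ n by omega)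
  have hn := abs_lt.1 ((hN m hm).1 b (Finset.mem_range.2 (by omega)))
  have hsucc := abs_lt.1 ((hN m hm).1 1 (Finset.mem_range.2 (by omega)))
  have hscale : δ / 2 * q m ≤ δ / 2 * x := by gcongr
  exact ⟨m + b, (hN _ (by omega)).2 hnG, abs_le.2 ⟨by linarith, by linarith⟩⟩

theorem IsLogDense.eventually_forall_exists_div_mem_Icc (hq : IsLogDense F q) {s : Set I}
    (hs : s ∈ F) {a b ρ : ℝ} (ha : 0 < a) (hρ : 0 < ρ) :
    ∀ᶠ y in atTop, ∀ t ∈ Set.Icc a b, ∃ n ∈ s, q n / y ∈ Set.Icc (t - ρ) (t + ρ) := by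
  rcases lt_or_ge b a with hab | hab
  · simp [Set.Icc_eq_empty hab.not_ge]
  have hb : 0 < b := ha.trans_le hab
  obtain ⟨X, hX⟩ := eventually_atTop.1 (hq s hs (ρ / b) (by positivity))
  filter_upwards [eventually_gt_atTop 0, eventually_ge_atTop (X / a)] with y hy hyX t ht
  have hXy : X ≤ t * y := by
    rw [div_le_iff₀' ha] at hyX
    exact hyX.trans (by gcongr; exact ht.1)
  obtain ⟨n, hn, hle⟩ := hX _ hXy
  have hle' : ρ / b * (t * y) ≤ ρ * y := by
    calc ρ / b * (t * y) ≤ ρ / b * (b * y) := by gcongr; exact ht.2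
      _ = ρ * y := by field_simp
  have habs := abs_le.1 (hle.trans hle')
  refine ⟨n, hn, ?_, ?_⟩
  · rw [le_div_iff₀ hy]; linarith
  · rw [div_le_iff₀ hy]; linarith

end LogDense

section Separation

variable {ι : Type*} {τ : ι → ℝ}

theorem exists_forall_le_abs_sub_of_card_lt {κ : Type*} [Fintype ι] [Fintype κ]
    (hcard : Fintype.card (ι × ι) < Fintype.card κ) {σ d : ℝ} (hσ : 0 ≤ σ)
    (hτ : ∀ i j, i ≠ j → σ ≤ |τ i - τ j|) {x : κ → ℝ} (hx : ∀ m m', m ≠ m' → d ≤ |x m - x m'|)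
    (h : ι → ℝ) :
    ∃ m, ∀ i j, i ≠ j → σ * d / 2 ≤ |(h i - τ i * x m) - (h j - τ j * x m)| := by
  by_contra! hcon
  choose i j hij hlt using hcon
  obtain ⟨m, m', hne, heq⟩ := Fintype.exists_ne_map_eq_of_card_lt (fun m => (i m, j m)) hcard
  obtain ⟨hi, hj⟩ := Prod.mk.inj heq
  let gap (y : ℝ) : ℝ := (h (i m) - τ (i m) * y) - (h (j m) - τ (j m) * y)
  have hgap : |gap (x m)| < σ * d / 2 := hlt m
  have hgap' : |gap (x m')| < σ * d / 2 := by simpa only [gap, hi, hj] using hlt m'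
  have hge : σ * d ≤ |gap (x m) - gap (x m')| := by
    have hfactor : gap (x m) - gap (x m') = (τ (i m) - τ (j m)) * (x m' - x m) := by
      simp only [gap]; ring
    rw [hfactor, abs_mul]
    exact mul_le_mul_of_nonneg (hτ _ _ (hij m)) (hx _ _ hne.symm) hσ (abs_nonneg _)
  have hsub := abs_sub (gap (x m)) (gap (x m'))
  linarith

theorem exists_separated_Icc_subset {a b : ℝ} (hab : a < b) {N : ℕ} (hN : 0 < N) :
    ∃ ρ > 0, ∃ t : Fin N → ℝ, (∀ m, Set.Icc (t m - ρ) (t m + ρ) ⊆ Set.Icc a b) ∧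
      ∀ x : Fin N → ℝ, (∀ m, x m ∈ Set.Icc (t m - ρ) (t m + ρ)) →
        ∀ m m', m ≠ m' → 2 * ρ ≤ |x m - x m'| := by
  have hρ : 0 < (b - a) / (4 * N) := div_pos (sub_pos.2 hab) (by positivity)
  have hρN : 4 * N * ((b - a) / (4 * N)) = b - a := mul_div_cancel₀ _ (by positivity)
  set ρ := (b - a) / (4 * N)
  refine ⟨ρ, hρ, fun m => a + (4 * (m : ℕ) + 2) * ρ, fun m => ?_, fun x hx => ?_⟩
  · have hm : ((m : ℕ) : ℝ) + 1 ≤ N := by exact_mod_cast m.2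
    have hmρ : 4 * ((m : ℕ) + 1) * ρ ≤ 4 * N * ρ := by gcongr
    have hm0 : 0 ≤ ((m : ℕ) : ℝ) * ρ := by positivity
    refine Set.Icc_subset_Icc ?_ ?_ <;> linarith
  · have hgap (m m' : Fin N) (hlt : m < m') : 2 * ρ ≤ x m' - x m := by
      have hcast : ((m : ℕ) : ℝ) + 1 ≤ (m' : ℕ) := by exact_mod_cast hlt
      have hmρ : ((m : ℕ) + 1) * ρ ≤ (m' : ℕ) * ρ := by gcongr
      linarith [(hx m).2, (hx m').1]
    intro m m' hne
    rcases hne.lt_or_gt with hlt | hlt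
    · rw [abs_sub_comm]
      exact (hgap m m' hlt).trans (le_abs_self _)
    · exact (hgap m' m hlt).trans (le_abs_self _)

theorem exists_uniform_separation [Finite ι] (hτ : Function.Injective τ) {a b : ℝ} (hab : a < b) :
    ∃ ρ > 0, ∃ β > 0, ∀ h : ι → ℝ, ∃ t, Set.Icc (t - ρ) (t + ρ) ⊆ Set.Icc a b ∧
      ∀ x ∈ Set.Icc (t - ρ) (t + ρ), ∀ i j, i ≠ j →
        β ≤ |(h i - τ i * x) - (h j - τ j * x)| := by
  cases nonempty_fintype ι
  obtain ⟨σ, hσ, hτσ⟩ := Pi.exists_forall_pos_add_lt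
    fun r : {r : ι × ι // r.1 ≠ r.2} => abs_pos.2 (sub_ne_zero.2 (hτ.ne r.2))
  simp only [zero_add] at hτσ
  obtain ⟨ρ, hρ, t, htab, hsep⟩ :=
    exists_separated_Icc_subset hab (Nat.succ_pos (Fintype.card (ι × ι)))
  refine ⟨ρ, hρ, σ * (2 * ρ) / 2, by positivity, fun h => ?_⟩
  by_contra! hcon
  choose x hx i j hij hlt using fun m => hcon (t m) (htab m)
  obtain ⟨m, hm⟩ := exists_forall_le_abs_sub_of_card_lt (by simp) hσ.le
    (fun i j hij => (hτσ ⟨(i, j), hij⟩).le) (hsep x hx) h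
  exact (hlt m).not_ge (hm _ _ (hij m))

theorem exists_dominant_exp_term [Finite ι] [Nonempty ι] (hτ : Function.Injective τ) {a b : ℝ}
    (hab : a < b) :
    ∃ ρ > 0, ∃ β > 0, ∀ y > 0, ∀ c : ι → ℝ, ∃ t, Set.Icc (t - ρ) (t + ρ) ⊆ Set.Icc a b ∧
      ∀ x, x / y ∈ Set.Icc (t - ρ) (t + ρ) → ∃ i, ∀ j, j ≠ i →
        |c j| * Real.exp (-τ j * x) ≤
          Real.exp (-β * y) * (|c i| * Real.exp (-τ i * x)) := by
  obtain ⟨ρ, hρ, β, hβ, hsep⟩ := exists_uniform_separation hτ hab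
  refine ⟨ρ, hρ, β, hβ, fun y hy c => ?_⟩
  obtain ⟨t, htab, ht⟩ := hsep fun j => Real.log |c j| / y
  refine ⟨t, htab, fun x hx => ?_⟩
  obtain ⟨i, hi⟩ := Finite.exists_max fun j => |c j| * Real.exp (-τ j * x)
  refine ⟨i, fun j hji => ?_⟩
  rcases eq_or_ne (c j) 0 with hcj | hcj
  · rw [hcj, abs_zero, zero_mul]
    positivity
  have hlog (m : ι) (hm : 0 < |c m|) : |c m| * Real.exp (-τ m * x) =
      Real.exp ((Real.log |c m| / y - τ m * (x / y)) * y) := by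
    rw [sub_mul, mul_assoc, div_mul_cancel₀ _ hy.ne', div_mul_cancel₀ _ hy.ne', sub_eq_add_neg,
      Real.exp_add, Real.exp_log hm, neg_mul]
  have hcj' : 0 < |c j| := abs_pos.2 hcj
  have hci' : 0 < |c i| := pos_of_mul_pos_left
    ((mul_pos hcj' (Real.exp_pos _)).trans_le (hi j)) (Real.exp_pos _).le
  have hmax := hi j
  simp only [hlog j hcj', hlog i hci', Real.exp_le_exp, mul_le_mul_iff_left₀ hy] at hmax
  have hgap := ht _ hx j i hji
  rw [abs_of_nonpos (sub_nonpos.2 hmax)] at hgap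
  rw [hlog j hcj', hlog i hci', ← Real.exp_add, Real.exp_le_exp, ← add_mul]
  gcongr
  linarith

end Separation

section Cancellation

variable {I ι : Type*} {F : Filter I} {q : I → ℝ}

/-- The sequence `A` decays along `F` like `exp (-(τ + o(1)) * q n)`. -/
def HasExpDecay (F : Filter I) (q A : I → ℝ) (τ : ℝ) : Prop :=
  ∀ γ > 0, ∀ᶠ n in F,
    Real.exp (-(τ + γ) * q n) ≤ |A n| ∧ |A n| ≤ Real.exp (-(τ - γ) * q n)

theorem eventually_le_exp_mul {a : ℝ} (ha : 0 < a) (C : ℝ) : ∀ᶠ x in atTop, C ≤ Real.exp (a * x) :=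
  (Real.tendsto_exp_atTop.comp (tendsto_id.const_mul_atTop ha)).eventually_ge_atTop C

theorem hasExpDecay_of_abs_eq {A ε v : I → ℝ} {τ m M : ℝ} (hq : Tendsto q F atTop)
    (hε : Tendsto ε F (𝓝 0)) (hm : 0 < m) (hv : ∀ᶠ n in F, v n ∈ Set.Icc m M)
    (hA : ∀ᶠ n in F, |A n| = Real.exp ((-τ + ε n) * q n) * v n) : HasExpDecay F q A τ := by
  intro γ hγ
  filter_upwards [hA, hv, hε.eventually (Metric.ball_mem_nhds 0 (half_pos hγ)),
    hq.eventually_ge_atTop 0, hq.eventually (eventually_le_exp_mul (half_pos hγ) M),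
    hq.eventually (eventually_le_exp_mul (half_pos hγ) m⁻¹)] with n hAn hvn hεn hq0 hM hm'
  rw [dist_zero_right, Real.norm_eq_abs, abs_lt] at hεn
  have hlower : Real.exp (-(γ / 2) * q n) ≤ v n := by
    rw [neg_mul, Real.exp_neg]
    exact (inv_le_of_inv_le₀ hm hm').trans hvn.1
  rw [hAn]
  constructor
  · calc Real.exp (-(τ + γ) * q n)
        ≤ Real.exp ((-τ + ε n) * q n + -(γ / 2) * q n) := by
          rw [← add_mul]; gcongr; linarith
      _ = Real.exp ((-τ + ε n) * q n) * Real.exp (-(γ / 2) * q n) := Real.exp_add _ _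
      _ ≤ Real.exp ((-τ + ε n) * q n) * v n := by gcongr
  · calc Real.exp ((-τ + ε n) * q n) * v n
        ≤ Real.exp ((-τ + ε n) * q n) * Real.exp (γ / 2 * q n) := by
          gcongr; exact hvn.2.trans hM
      _ = Real.exp ((-τ + ε n) * q n + γ / 2 * q n) := (Real.exp_add _ _).symm
      _ ≤ Real.exp (-(τ - γ) * q n) := by
          rw [← add_mul]; gcongr; linarith

theorem abs_sum_mem_Icc_of_dominant [Fintype ι] {T : ι → ℝ} {i : ι}
    (hT : ∀ j, j ≠ i → 2 * Fintype.card ι * |T j| ≤ |T i|) :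
    |∑ j, T j| ∈ Set.Icc (|T i| / 2) (3 / 2 * |T i|) := by
  classical
  have hcard : (0 : ℝ) < Fintype.card ι := by exact_mod_cast Fintype.card_pos_iff.2 ⟨i⟩
  have hterm : ∀ j ∈ Finset.univ.erase i, |T j| ≤ |T i| / (2 * Fintype.card ι) := fun j hj => by
    rw [le_div_iff₀' (by positivity)]
    exact hT j (Finset.ne_of_mem_erase hj)
  have hrest : |∑ j ∈ Finset.univ.erase i, T j| ≤ |T i| / 2 := by
    calc |∑ j ∈ Finset.univ.erase i, T j|
        ≤ ∑ j ∈ Finset.univ.erase i, |T j| := Finset.abs_sum_le_sum_abs _ _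
      _ ≤ (Finset.univ.erase i).card * (|T i| / (2 * Fintype.card ι)) := by
          rw [← nsmul_eq_mul]; exact Finset.sum_le_card_nsmul _ _ _ hterm
      _ ≤ Fintype.card ι * (|T i| / (2 * Fintype.card ι)) := by
          gcongr; exact Finset.card_le_univ _
      _ = |T i| / 2 := by field_simp
  rw [← Finset.add_sum_erase _ _ (Finset.mem_univ i)]
  constructor
  · linarith [abs_sub_abs_le_abs_add (T i) (∑ j ∈ Finset.univ.erase i, T j)]
  · linarith [abs_add_le (T i) (∑ j ∈ Finset.univ.erase i, T j)]

theorem HasExpDecay.eventually_abs_mul_mem_Icc {A : I → ℝ} {τ b ζ : ℝ} (hA : HasExpDecay F q A τ)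
    (hb : 0 < b) (hζ : 0 < ζ) :
    ∀ᶠ n in F, ∀ y, q n ≤ b * y → ∀ c : ℝ,
      |c * A n| ∈ Set.Icc (Real.exp (-ζ * y) * (|c| * Real.exp (-τ * q n)))
        (Real.exp (ζ * y) * (|c| * Real.exp (-τ * q n))) := by
  filter_upwards [hA (ζ / b) (div_pos hζ hb)] with n ⟨hlower, hupper⟩ y hy c
  have hζq : ζ / b * q n ≤ ζ * y := by
    rw [div_mul_eq_mul_div, div_le_iff₀ hb]
    linarith [mul_le_mul_of_nonneg_left hy hζ.le]
  rw [abs_mul, mul_left_comm, mul_left_comm (Real.exp (ζ * y)), ← Real.exp_add, ← Real.exp_add]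
  constructor
  · gcongr
    exact (Real.exp_le_exp.2 (by linarith)).trans hlower
  · gcongr
    exact hupper.trans (Real.exp_le_exp.2 (by linarith))

variable {τ : ι → ℝ} {A : ι → I → ℝ}

theorem eventually_exists_dominant_term [Fintype ι] [Nonempty ι] (hq : IsLogDense F q)
    (hτ : Function.Injective τ) (hA : ∀ j, HasExpDecay F q (A j) (τ j)) {a b γ : ℝ} (ha : 0 < a)
    (hab : a < b) (hγ : 0 < γ) {s : Set I} (hs : s ∈ F) :
    ∀ᶠ y in atTop, ∀ c : ι → ℝ, ∃ n ∈ s, q n ∈ Set.Icc (a * y) (b * y) ∧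
      ∃ i, (∀ j, |c j| * Real.exp (-τ j * q n) ≤ |c i| * Real.exp (-τ i * q n)) ∧
        |c i * A i n| ∈ Set.Icc (Real.exp (-γ * y) * (|c i| * Real.exp (-τ i * q n)))
          (Real.exp (γ * y) * (|c i| * Real.exp (-τ i * q n))) ∧
        ∀ j, j ≠ i → 2 * Fintype.card ι * |c j * A j n| ≤ |c i * A i n| := by
  obtain ⟨ρ, hρ, β, hβ, hdom⟩ := exists_dominant_exp_term hτ hab
  have hb : 0 < b := ha.trans hab
  let ζ := min (β / 4) γ
  have hζ : 0 < ζ := by positivity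
  have hζβ : ζ ≤ β / 4 := min_le_left _ _
  have hζγ : ζ ≤ γ := min_le_right _ _
  have hs' := inter_mem hs (eventually_all.2 fun j => (hA j).eventually_abs_mul_mem_Icc hb hζ)
  filter_upwards [eventually_gt_atTop 0,
    hq.eventually_forall_exists_div_mem_Icc hs' (b := b) ha hρ,
    eventually_le_exp_mul (half_pos hβ) (2 * Fintype.card ι)] with y hy hwin hcard c
  obtain ⟨t, htab, ht⟩ := hdom y hy c
  obtain ⟨n, ⟨hns, hAn⟩, hnt⟩ := hwin t (htab ⟨by linarith, by linarith⟩)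
  obtain ⟨i, hi⟩ := ht _ hnt
  obtain ⟨hay, hby⟩ := htab hnt
  rw [le_div_iff₀ hy] at hay
  rw [div_le_iff₀ hy] at hby
  have hterm (j : ι) := hAn j y hby (c j)
  refine ⟨n, hns, ⟨hay, hby⟩, i, fun j => ?_, ⟨?_, ?_⟩, fun j hji => ?_⟩
  · rcases eq_or_ne j i with rfl | hji
    · exact le_rfl
    · exact (hi j hji).trans (mul_le_of_le_one_left (by positivity)
        (Real.exp_le_one_iff.2 (by linarith [mul_pos hβ hy])))
  · exact le_trans (by gcongr) (hterm i).1
  · exact (hterm i).2.trans (by gcongr)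
  · set w := |c i| * Real.exp (-τ i * q n)
    calc 2 * Fintype.card ι * |c j * A j n|
        ≤ Real.exp (β / 2 * y) * (Real.exp (ζ * y) * (Real.exp (-β * y) * w)) := by
          gcongr
          exact (hterm j).2.trans (mul_le_mul_of_nonneg_left (hi j hji) (Real.exp_pos _).le)
      _ = Real.exp ((β / 2 + (ζ + -β)) * y) * w := by
          rw [add_mul, add_mul, Real.exp_add, Real.exp_add]; ring
      _ ≤ Real.exp (-ζ * y) * w := by gcongr; linarith
      _ ≤ |c i * A i n| := (hterm i).1

/-- `x` is the logarithmic height of the vector `c` with weights `τ`, that is, the least real number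
with `|c j| ≤ exp (τ j * x)` for all `j`. -/
def IsLogHeight (τ c : ι → ℝ) (x : ℝ) : Prop :=
  (∀ j, |c j| ≤ Real.exp (τ j * x)) ∧ ∃ j, |c j| = Real.exp (τ j * x)

theorem exists_isLogHeight [Finite ι] (hτ : ∀ j, 0 < τ j) {c : ι → ℝ} (hc : c ≠ 0) :
    ∃ x, IsLogHeight τ c x := by
  obtain ⟨i, hi, hmax⟩ := Set.exists_max_image (Function.support c)
    (fun j => Real.log |c j| / τ j) (Set.toFinite _) (Function.support_nonempty_iff.2 hc)
  refine ⟨Real.log |c i| / τ i, fun j => ?_, i, ?_⟩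
  · rcases eq_or_ne (c j) 0 with hj | hj
    · rw [hj, abs_zero]
      positivity
    · rw [← Real.log_le_iff_le_exp (abs_pos.2 hj), ← div_le_iff₀' (hτ j)]
      exact hmax j hj
  · rw [mul_div_cancel₀ _ (hτ i).ne', Real.exp_log (abs_pos.2 hi)]

theorem IsLogHeight.abs_mul_exp_le {c : ι → ℝ} {x μ a r : ℝ} (hc : IsLogHeight τ c x)
    (hμ : ∀ j, μ ≤ τ j) (hμ0 : 0 ≤ μ) (ha : 1 ≤ a) (hx : 0 ≤ x) (hr : a * x ≤ r) (j : ι) :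
    |c j| * Real.exp (-τ j * r) ≤ Real.exp (-(μ * (a - 1)) * x) := by
  have hexponent : μ * ((a - 1) * x) ≤ τ j * (r - x) :=
    mul_le_mul (hμ j) (by linarith) (mul_nonneg (by linarith) hx) (hμ0.trans (hμ j))
  calc |c j| * Real.exp (-τ j * r) ≤ Real.exp (τ j * x) * Real.exp (-τ j * r) := by
        gcongr; exact hc.1 j
    _ = Real.exp (τ j * x + -τ j * r) := (Real.exp_add _ _).symm
    _ ≤ Real.exp (-(μ * (a - 1)) * x) := Real.exp_le_exp.2 (by linarith)

theorem IsLogHeight.exists_le_abs_mul_exp {c : ι → ℝ} {x S b r : ℝ} (hc : IsLogHeight τ c x)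
    (hτ : ∀ j, 0 ≤ τ j) (hS : ∀ j, τ j ≤ S) (hb : 1 ≤ b) (hx : 0 ≤ x) (hr : r ≤ b * x) :
    ∃ j, Real.exp (-(S * (b - 1)) * x) ≤ |c j| * Real.exp (-τ j * r) := by
  obtain ⟨j, hj⟩ := hc.2
  have hexponent : τ j * (r - x) ≤ S * ((b - 1) * x) :=
    (mul_le_mul_of_nonneg_left (by linarith) (hτ j)).trans
      (mul_le_mul_of_nonneg_right (hS j) (mul_nonneg (by linarith) hx))
  refine ⟨j, ?_⟩
  rw [hj, ← Real.exp_add, Real.exp_le_exp]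
  linarith

theorem eventually_exists_dominant_term_of_isLogHeight [Fintype ι] [Nonempty ι]
    (hq : IsLogDense F q) (hτinj : Function.Injective τ)
    (hA : ∀ j, HasExpDecay F q (A j) (τ j)) {μ S a b γ : ℝ} (hμ : 0 ≤ μ) (hμτ : ∀ j, μ ≤ τ j)
    (hτS : ∀ j, τ j ≤ S) (ha : 1 < a) (hab : a < b) (hγ : 0 < γ) {s : Set I} (hs : s ∈ F) :
    ∀ᶠ x in atTop, ∀ c, IsLogHeight τ c x → ∃ n ∈ s, q n ∈ Set.Icc 0 (b * x) ∧
      ∃ i, |c i * A i n| ∈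
          Set.Icc (Real.exp (-(S * (b - 1) + γ) * x)) (Real.exp (-(μ * (a - 1) - γ) * x)) ∧
        ∀ j, j ≠ i → 2 * Fintype.card ι * |c j * A j n| ≤ |c i * A i n| := by
  filter_upwards [eventually_ge_atTop 0,
    eventually_exists_dominant_term hq hτinj hA (by positivity) hab hγ hs] with x hx hdom c hc
  obtain ⟨n, hns, ⟨hqa, hqb⟩, i, hmax, ⟨hlower, hupper⟩, hsmall⟩ := hdom c
  obtain ⟨j, hj⟩ :=
    hc.exists_le_abs_mul_exp (fun j => hμ.trans (hμτ j)) hτS (ha.trans hab).le hx hqb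
  have hi := hc.abs_mul_exp_le hμτ hμ ha.le hx hqa i
  refine ⟨n, hns, ⟨le_trans (by positivity) hqa, hqb⟩, i, ⟨?_, ?_⟩, hsmall⟩
  · calc Real.exp (-(S * (b - 1) + γ) * x)
        = Real.exp (-γ * x) * Real.exp (-(S * (b - 1)) * x) := by
          rw [← Real.exp_add]; ring_nf
      _ ≤ |c i * A i n| := le_trans (by gcongr; exact hj.trans (hmax j)) hlower
  · calc |c i * A i n| ≤ Real.exp (γ * x) * Real.exp (-(μ * (a - 1)) * x) :=
          hupper.trans (by gcongr)
      _ = Real.exp (-(μ * (a - 1) - γ) * x) := by rw [← Real.exp_add]; ring_nf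

theorem eventually_exists_abs_sum_mem_Icc_of_isLogHeight [Fintype ι] (hq : IsLogDense F q)
    (hτ : ∀ j, 0 < τ j) (hτinj : Function.Injective τ) (hA : ∀ j, HasExpDecay F q (A j) (τ j))
    {δ : ℝ} (hδ : 0 < δ) {s : Set I} (hs : s ∈ F) :
    ∀ᶠ x in atTop, ∀ c, IsLogHeight τ c x → ∃ n ∈ s, q n ∈ Set.Icc 0 ((1 + δ) * x) ∧
      |∑ j, c j * A j n| ∈ Set.Icc (Real.exp (-δ * x)) (1 / 2) := by
  rcases isEmpty_or_nonempty ι with hι | hι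
  · exact Eventually.of_forall fun x c hc => isEmptyElim hc.2.choose
  obtain ⟨i₀, hμτ⟩ := Finite.exists_min τ
  obtain ⟨i₁, hτS⟩ := Finite.exists_max τ
  have hμ := hτ i₀
  have hS := hτ i₁
  obtain ⟨α, hα, hαδ, hαS⟩ : ∃ α > 0, 2 * α ≤ δ ∧ τ i₁ * (2 * α) ≤ δ / 2 := by
    refine ⟨min (δ / 2) (δ / (4 * τ i₁)), by positivity, ?_, ?_⟩
    · linarith [min_le_left (δ / 2) (δ / (4 * τ i₁))]
    · have hmin := min_le_right (δ / 2) (δ / (4 * τ i₁))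
      rw [le_div_iff₀ (by positivity)] at hmin
      linarith
  obtain ⟨γ, hγ, hγδ, hγμ⟩ : ∃ γ > 0, γ ≤ δ / 4 ∧ γ ≤ τ i₀ * α / 2 :=
    ⟨min (δ / 4) (τ i₀ * α / 2), by positivity, min_le_left _ _, min_le_right _ _⟩
  filter_upwards [eventually_ge_atTop 0,
    eventually_exists_dominant_term_of_isLogHeight hq hτinj hA hμ.le hμτ hτS (a := 1 + α)
      (b := 1 + 2 * α) (by linarith) (by linarith) hγ hs,
    eventually_le_exp_mul (show 0 < δ / 4 by positivity) 2,
    eventually_le_exp_mul (show 0 < τ i₀ * α / 2 by positivity) 3] with x hx hdom hexp₂ hexp₃ c hc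
  obtain ⟨n, hns, ⟨hq₀, hqn⟩, i, ⟨hlower, hupper⟩, hsmall⟩ := hdom c hc
  obtain ⟨hsum_lower, hsum_upper⟩ := abs_sum_mem_Icc_of_dominant hsmall
  have hterm_lower : 2 * Real.exp (-δ * x) ≤ |c i * A i n| := by
    calc 2 * Real.exp (-δ * x) ≤ Real.exp (δ / 4 * x) * Real.exp (-δ * x) := by gcongr
      _ = Real.exp (-(δ / 2 + δ / 4) * x) := by rw [← Real.exp_add]; ring_nf
      _ ≤ Real.exp (-(τ i₁ * (1 + 2 * α - 1) + γ) * x) := by gcongr; linarith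
      _ ≤ |c i * A i n| := hlower
  have hterm_upper : 3 * |c i * A i n| ≤ 1 := by
    calc 3 * |c i * A i n|
        ≤ Real.exp (τ i₀ * α / 2 * x) * Real.exp (-(τ i₀ * (1 + α - 1) - γ) * x) := by gcongr
      _ = Real.exp ((γ - τ i₀ * α / 2) * x) := by rw [← Real.exp_add]; ring_nf
      _ ≤ 1 := Real.exp_le_one_iff.2 (mul_nonpos_of_nonpos_of_nonneg (by linarith) hx)
  refine ⟨n, hns, ⟨hq₀, hqn.trans (by gcongr)⟩, ?_, ?_⟩ <;> linarith

end Cancellation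

section Approximation

variable {I ι E : Type*} [NormedAddCommGroup E] [NormedSpace ℝ E] {F : Filter I}
  {q : I → ℝ} {e : ι → E} {τ : ι → ℝ} {L : I → E →L[ℝ] ℝ} {Λ : Set E}

theorem abs_le_abs_intCast_sub {y : ℝ} (hy : |y| ≤ 1 / 2) (m : ℤ) : |y| ≤ |m - y| := by
  rcases eq_or_ne m 0 with rfl | hm
  · simp
  · have hone : (1 : ℝ) ≤ |(m : ℝ)| := by exact_mod_cast Int.one_le_abs hm
    linarith [abs_sub_abs_le_abs_sub (m : ℝ) y]

theorem exists_forall_mem_span_range_eq_sum_le [Fintype ι] (e : ι → E) :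
    ∃ C > 0, ∀ f ∈ Submodule.span ℝ (Set.range e),
      ∃ c : ι → ℝ, f = ∑ j, c j • e j ∧ ∀ j, |c j| ≤ C * ‖f‖ := by
  obtain ⟨g, hg⟩ := (Fintype.linearCombination ℝ e).rangeRestrict.exists_rightInverse_of_surjective
    (LinearMap.range_rangeRestrict _)
  obtain ⟨C, hC, hbound⟩ := (LinearMap.toContinuousLinearMap g).bound
  refine ⟨C, hC, fun f hf => ?_⟩
  rw [← Fintype.range_linearCombination] at hf
  refine ⟨g ⟨f, hf⟩, ?_, fun j => (norm_le_pi_norm _ j).trans (hbound ⟨f, hf⟩)⟩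
  exact (congrArg Subtype.val (LinearMap.congr_fun hg ⟨f, hf⟩)).symm

theorem eventually_exp_le_norm_sub_of_isLogHeight [Fintype ι] (hq : IsLogDense F q)
    (hτ : ∀ j, 0 < τ j) (hτinj : Function.Injective τ)
    (hA : ∀ j, HasExpDecay F q (fun n => L n (e j)) (τ j))
    (hL : ∀ γ > 0, ∀ᶠ n in F, ‖L n‖ ≤ Real.exp ((1 + γ) * q n))
    (hΛ : ∀ n, ∀ P ∈ Λ, ∃ m : ℤ, L n P = m) {δ : ℝ} (hδ : 0 < δ) :
    ∀ᶠ x in atTop, ∀ c, IsLogHeight τ c x → ∀ P ∈ Λ,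
      Real.exp (-(1 + δ) * x) ≤ ‖P - ∑ j, c j • e j‖ := by
  obtain ⟨γ, hγ, hγ₁, hγδ⟩ : ∃ γ > 0, γ ≤ 1 ∧ 4 * γ ≤ δ :=
    ⟨min 1 (δ / 4), by positivity, min_le_left _ _, by linarith [min_le_right 1 (δ / 4)]⟩
  filter_upwards [eventually_ge_atTop 0,
    eventually_exists_abs_sum_mem_Icc_of_isLogHeight hq hτ hτinj hA hγ (hL γ hγ)]
    with x hx hforms c hc P hP
  obtain ⟨n, hLn, ⟨-, hqn⟩, hlower, hupper⟩ := hforms c hc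
  set f := ∑ j, c j • e j with hf
  have hLf : ∑ j, c j * L n (e j) = L n f := by simp [hf]
  rw [hLf] at hlower hupper
  obtain ⟨m, hm⟩ := hΛ n P hP
  have hexponent : γ + (1 + γ) * (1 + γ) ≤ 1 + δ := by
    linarith [mul_le_mul_of_nonneg_left hγ₁ hγ.le]
  have hprod : Real.exp (-γ * x) ≤ Real.exp ((1 + γ) * ((1 + γ) * x)) * ‖P - f‖ := by
    calc Real.exp (-γ * x) ≤ |L n f| := hlower
      _ ≤ |m - L n f| := abs_le_abs_intCast_sub hupper m
      _ = ‖L n (P - f)‖ := by rw [map_sub, hm, Real.norm_eq_abs]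
      _ ≤ ‖L n‖ * ‖P - f‖ := (L n).le_opNorm _
      _ ≤ Real.exp ((1 + γ) * q n) * ‖P - f‖ := by gcongr
      _ ≤ Real.exp ((1 + γ) * ((1 + γ) * x)) * ‖P - f‖ := by gcongr
  calc Real.exp (-(1 + δ) * x)
      ≤ Real.exp (-(γ + (1 + γ) * (1 + γ)) * x) := by gcongr
    _ = Real.exp (-γ * x) / Real.exp ((1 + γ) * ((1 + γ) * x)) := by
        rw [← Real.exp_sub]; ring_nf
    _ ≤ ‖P - f‖ := by rwa [div_le_iff₀' (Real.exp_pos _)]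

theorem IsLogHeight.lt_of_sum_lt_norm [Fintype ι] {c : ι → ℝ} {x y : ℝ}
    (hc : IsLogHeight τ c x) (hτ : ∀ j, 0 ≤ τ j)
    (hy : ∑ j, Real.exp (τ j * y) * ‖e j‖ < ‖∑ j, c j • e j‖) : y < x := by
  contrapose! hy
  refine norm_sum_le_of_le _ fun j _ => ?_
  rw [norm_smul, Real.norm_eq_abs]
  gcongr
  exact (hc.1 j).trans (Real.exp_le_exp.2 (mul_le_mul_of_nonneg_left hy (hτ j)))

theorem exists_eventually_rpow_le_norm_sub [Finite ι] (hq : IsLogDense F q)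
    (hτinj : Function.Injective τ) (hA : ∀ j, HasExpDecay F q (fun n => L n (e j)) (τ j))
    (hL : ∀ γ > 0, ∀ᶠ n in F, ‖L n‖ ≤ Real.exp ((1 + γ) * q n))
    (hΛ : ∀ n, ∀ P ∈ Λ, ∃ m : ℤ, L n P = m) {μ δ : ℝ} (hμ : 0 < μ) (hμτ : ∀ j, μ ≤ τ j)
    (hδ : 0 < δ) :
    ∃ C > 0, ∀ᶠ f in Bornology.cobounded E, f ∈ Submodule.span ℝ (Set.range e) → ∀ P ∈ Λ,
      (C * ‖f‖) ^ (-((1 + δ) / μ)) ≤ ‖P - f‖ := by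
  cases nonempty_fintype ι
  have hτ (j : ι) : 0 < τ j := hμ.trans_le (hμτ j)
  obtain ⟨C, hC, hcoord⟩ := exists_forall_mem_span_range_eq_sum_le e
  obtain ⟨X, hX⟩ := eventually_atTop.1 ((eventually_ge_atTop 0).and
    (eventually_exp_le_norm_sub_of_isLogHeight hq hτ hτinj hA hL hΛ hδ))
  refine ⟨C, hC, ?_⟩
  filter_upwards [tendsto_norm_cobounded_atTop.eventually_gt_atTop
    (∑ j, Real.exp (τ j * X) * ‖e j‖)] with f hf hmem P hP
  obtain ⟨c, rfl, hcC⟩ := hcoord f hmem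
  have hc : c ≠ 0 := by
    rintro rfl
    refine hf.not_ge ?_
    simpa using Finset.sum_nonneg fun j _ => by positivity
  obtain ⟨x, hx⟩ := exists_isLogHeight hτ hc
  obtain ⟨hx₀, hdist⟩ := hX x (hx.lt_of_sum_lt_norm (fun j => (hτ j).le) hf).le
  obtain ⟨j, hj⟩ := hx.2
  have hheight : Real.exp (μ * x) ≤ C * ‖∑ j, c j • e j‖ :=
    calc Real.exp (μ * x) ≤ Real.exp (τ j * x) := by gcongr; exact hμτ j
      _ ≤ C * ‖∑ j, c j • e j‖ := hj ▸ hcC j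
  calc (C * ‖∑ j, c j • e j‖) ^ (-((1 + δ) / μ))
      ≤ Real.exp (μ * x) ^ (-((1 + δ) / μ)) :=
        Real.rpow_le_rpow_of_nonpos (Real.exp_pos _) hheight
          (neg_nonpos.2 (by positivity))
    _ = Real.exp (-(1 + δ) * x) := by rw [← Real.exp_mul]; field_simp
    _ ≤ ‖P - ∑ j, c j • e j‖ := hdist c hx P hP

theorem eventually_rpow_le_mul_rpow {C s t : ℝ} (hC : 0 < C) (hst : s < t) :
    ∀ᶠ r in atTop, r ^ s ≤ (C * r) ^ t := by
  filter_upwards [eventually_gt_atTop 0,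
    (tendsto_rpow_neg_atTop (sub_pos.2 hst)).eventually_le_const (Real.rpow_pos_of_pos hC t)]
    with r hr hle
  calc r ^ s = r ^ (-(t - s)) * r ^ t := by rw [← Real.rpow_add hr]; ring_nf
    _ ≤ C ^ t * r ^ t := by gcongr
    _ = (C * r) ^ t := (Real.mul_rpow hC.le hr.le).symm

theorem eventually_rpow_le_norm_sub [Finite ι] (hq : IsLogDense F q)
    (hτinj : Function.Injective τ) (hA : ∀ j, HasExpDecay F q (fun n => L n (e j)) (τ j))
    (hL : ∀ γ > 0, ∀ᶠ n in F, ‖L n‖ ≤ Real.exp ((1 + γ) * q n))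
    (hΛ : ∀ n, ∀ P ∈ Λ, ∃ m : ℤ, L n P = m) {μ ε : ℝ} (hμ : 0 < μ) (hμτ : ∀ j, μ ≤ τ j)
    (hε : 0 < ε) :
    ∀ᶠ P in Bornology.cobounded E, P ∈ Λ → ∀ f ∈ Submodule.span ℝ (Set.range e),
      ‖P‖ ^ (-(1 / μ) - ε) ≤ ‖P - f‖ := by
  have hδ : 0 < ε * μ / 2 := by positivity
  obtain ⟨C, hC, hdist⟩ := exists_eventually_rpow_le_norm_sub hq hτinj hA hL hΛ hμ hμτ hδ
  obtain ⟨R, -, hR⟩ := hasBasis_cobounded_norm.eventually_iff.1 hdist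
  have hexponent : -(1 / μ) - ε < -((1 + ε * μ / 2) / μ) := by
    have : (1 + ε * μ / 2) / μ = 1 / μ + ε / 2 := by field_simp
    linarith
  have hnorm := tendsto_norm_cobounded_atTop (E := E)
  filter_upwards [hnorm.eventually_ge_atTop 2, hnorm.eventually_ge_atTop (R + 1),
    hnorm.eventually (eventually_rpow_le_mul_rpow (C := C * 2) (by positivity) hexponent)]
    with P hP₂ hPR hPC hP f hf
  rcases le_or_gt 1 ‖P - f‖ with hfar | hnear
  · refine (Real.rpow_le_one_of_one_le_of_nonpos (by linarith) ?_).trans hfar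
    linarith [one_div_pos.2 hμ]
  have hfP : ‖f‖ ≤ 2 * ‖P‖ := by linarith [norm_le_insert P f]
  have hPf : ‖P‖ - 1 ≤ ‖f‖ := by linarith [norm_sub_norm_le P f]
  calc ‖P‖ ^ (-(1 / μ) - ε) ≤ (C * 2 * ‖P‖) ^ (-((1 + ε * μ / 2) / μ)) := hPC
    _ ≤ (C * ‖f‖) ^ (-((1 + ε * μ / 2) / μ)) := by
        refine Real.rpow_le_rpow_of_nonpos (mul_pos hC (by linarith)) ?_
          (neg_nonpos.2 (by positivity))
        rw [mul_assoc]
        gcongr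
    _ ≤ ‖P - f‖ := hR (show R ≤ ‖f‖ by linarith) hf P hP

end Approximation

section IntegerForms

variable {ι κ : Type*} [Fintype κ]

/-- The linear form on Euclidean space with integer coefficients `l`. -/
noncomputable def integerForm (l : κ → ℤ) : EuclideanSpace ℝ κ →L[ℝ] ℝ :=
  ∑ i, (l i : ℝ) • EuclideanSpace.proj i

theorem integerForm_apply (l : κ → ℤ) (P : EuclideanSpace ℝ κ) :
    integerForm l P = ∑ i, (l i : ℝ) * P i := by
  simp [integerForm]

theorem norm_integerForm_le {l : κ → ℤ} {M : ℝ} (hl : ∀ i, |(l i : ℝ)| ≤ M) :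
    ‖integerForm l‖ ≤ Fintype.card κ * M := by
  have hproj (i : κ) : ‖(EuclideanSpace.proj i : EuclideanSpace ℝ κ →L[ℝ] ℝ)‖ ≤ 1 :=
    ContinuousLinearMap.opNorm_le_bound _ zero_le_one fun P => by
      simpa using PiLp.norm_apply_le P i
  have hterm (i : κ) :
      ‖(l i : ℝ) • (EuclideanSpace.proj i : EuclideanSpace ℝ κ →L[ℝ] ℝ)‖ ≤ M := by
    rw [norm_smul, Real.norm_eq_abs]
    exact (mul_le_of_le_one_right (abs_nonneg _) (hproj i)).trans (hl i)
  simpa [integerForm] using norm_sum_le_of_le Finset.univ fun i _ => hterm i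

theorem exists_integerForm_eq_intCast (l : κ → ℤ) {P : EuclideanSpace ℝ κ}
    (hP : ∀ i, ∃ m : ℤ, P i = m) : ∃ m : ℤ, integerForm l P = m := by
  choose m hm using hP
  exact ⟨∑ i, l i * m i, by simp [integerForm_apply, hm]⟩

theorem eventually_norm_integerForm_le_exp {Q θ : ℕ → ℝ} {l : ℕ → κ → ℤ}
    (hQ : Tendsto Q atTop atTop) (hθ : Tendsto θ atTop (𝓝 0))
    (hl : ∀ᶠ n in atTop, ∀ i, |(l n i : ℝ)| ≤ Q n ^ (1 + θ n)) {γ : ℝ} (hγ : 0 < γ) :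
    ∀ᶠ n in atTop, ‖integerForm (l n)‖ ≤ Real.exp ((1 + γ) * Real.log (Q n)) := by
  have hlog := Real.tendsto_log_atTop.comp hQ
  filter_upwards [hl, hQ.eventually_gt_atTop 1, hθ.eventually_lt_const (half_pos hγ),
    hlog.eventually (eventually_le_exp_mul (half_pos hγ) (Fintype.card κ))] with n hln hQn hθn hcard
  have hlogn : 0 ≤ Real.log (Q n) := (Real.log_pos hQn).le
  calc ‖integerForm (l n)‖ ≤ Fintype.card κ * Q n ^ (1 + θ n) := norm_integerForm_le hln
    _ ≤ Real.exp (γ / 2 * Real.log (Q n)) * Real.exp (Real.log (Q n) * (1 + θ n)) := by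
        rw [← Real.rpow_def_of_pos (by linarith)]
        gcongr
        exact hcard
    _ = Real.exp ((γ / 2 + (1 + θ n)) * Real.log (Q n)) := by rw [← Real.exp_add]; ring_nf
    _ ≤ Real.exp ((1 + γ) * Real.log (Q n)) := by
        gcongr Real.exp (?_ * _); linarith

theorem hasExpDecay_integerForm {Q ψ η : ℕ → ℝ} {l : ℕ → κ → ℤ} {e : EuclideanSpace ℝ κ}
    {ε : ℕ → ℝ} {τ β : ℝ} {G : Set ℕ} (hQ : Tendsto Q atTop atTop) (hε : Tendsto ε atTop (𝓝 0))
    (hη : Tendsto η atTop (𝓝 0)) (hβ : 0 < β) (hG : ∀ n ∈ G, β < |Real.cos (ψ n)|)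
    (hL : ∀ᶠ n in atTop,
      |∑ i, (l n i : ℝ) * e i| = Q n ^ (-τ + ε n) * |Real.cos (ψ n) + η n|) :
    HasExpDecay (atTop ⊓ 𝓟 G) (fun n => Real.log (Q n)) (fun n => integerForm (l n) e) τ := by
  refine hasExpDecay_of_abs_eq (v := fun n => |Real.cos (ψ n) + η n|) (m := β / 2) (M := 2)
    ((Real.tendsto_log_atTop.comp hQ).mono_left inf_le_left) (hε.mono_left inf_le_left)
    (half_pos hβ) ?_ ?_
  · rw [eventually_inf_principal]
    have hball := Metric.ball_mem_nhds (0 : ℝ) (lt_min (half_pos hβ) one_pos)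
    filter_upwards [hη.eventually hball] with n hn hnG
    rw [dist_zero_right, Real.norm_eq_abs, lt_min_iff] at hn
    constructor
    · linarith [hG n hnG, abs_sub_abs_le_abs_add (Real.cos (ψ n)) (η n)]
    · linarith [abs_add_le (Real.cos (ψ n)) (η n), Real.abs_cos_le_one (ψ n)]
  · refine Eventually.filter_mono inf_le_left ?_
    filter_upwards [hL, hQ.eventually_gt_atTop 0] with n hn hQn
    rw [integerForm_apply, hn, Real.rpow_def_of_pos hQn, mul_comm (Real.log _)]

theorem stmt10_general [Finite ι] [Nonempty ι] (e : ι → EuclideanSpace ℝ κ) {τ ω φ : ι → ℝ}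
    (hτpos : ∀ j, 0 < τ j) (hτinj : Function.Injective τ) {n₀ : ℕ}
    (hosc : ∀ j, Real.cos (n₀ * ω j + φ j) ≠ 0) {Q : ℕ → ℝ} (hQ : Tendsto Q atTop atTop)
    (hratio : Tendsto (fun n => Real.log (Q (n + 1)) / Real.log (Q n)) atTop (𝓝 1))
    {l : ℕ → κ → ℤ} {ε η : ι → ℕ → ℝ} {θ : ℕ → ℝ} (hε : ∀ j, Tendsto (ε j) atTop (𝓝 0))
    (hη : ∀ j, Tendsto (η j) atTop (𝓝 0)) (hθ : Tendsto θ atTop (𝓝 0))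
    (hL : ∀ᶠ n in atTop, ∀ j, |∑ i, (l n i : ℝ) * e j i| =
      Q n ^ (-τ j + ε j n) * |Real.cos (n * ω j + φ j) + η j n|)
    (hl : ∀ᶠ n in atTop, ∀ i, |(l n i : ℝ)| ≤ Q n ^ (1 + θ n)) {ε' : ℝ} (hε' : 0 < ε') :
    ∀ᶠ P in Bornology.cobounded (EuclideanSpace ℝ κ), (∀ i, ∃ m : ℤ, P i = (m : ℝ)) →
      ∀ f ∈ Submodule.span ℝ (Set.range e),
        ‖P‖ ^ (-1 - 1 / (⨅ j, τ j) - ε') ≤ ‖P - f‖ / ‖P‖ := by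
  obtain ⟨β, hβ, hG⟩ := exists_isSyndetic_setOf_lt_abs_cos ω φ hosc
  have hdense := hG.isLogDense (Real.tendsto_log_atTop.comp hQ) hratio
  set G := {n : ℕ | ∀ j, β < |Real.cos (n * ω j + φ j)|}
  have hdecay (j : ι) := hasExpDecay_integerForm (G := G) hQ (hε j) (hη j) hβ (fun n hn => hn j)
    (hL.mono fun n hn => hn j)
  have hnorm (γ : ℝ) (hγ : 0 < γ) :=
    (eventually_norm_integerForm_le_exp hQ hθ hl hγ).filter_mono (inf_le_left (b := 𝓟 G))
  obtain ⟨j₀, hj₀⟩ := exists_eq_ciInf_of_finite (f := τ)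
  have hdist := eventually_rpow_le_norm_sub hdense hτinj hdecay hnorm
    (fun n P hP => exists_integerForm_eq_intCast (l n) hP) (hj₀ ▸ hτpos j₀)
    (ciInf_le (Set.finite_range τ).bddBelow) hε'
  filter_upwards [hdist, tendsto_norm_cobounded_atTop.eventually_gt_atTop 0]
    with P hP hpos hint f hf
  calc ‖P‖ ^ (-1 - 1 / (⨅ j, τ j) - ε') = ‖P‖ ^ (-(1 / ⨅ j, τ j) - ε') / ‖P‖ := by
        rw [← Real.rpow_sub_one hpos.ne']; ring_nf
    _ ≤ ‖P - f‖ / ‖P‖ := by gcongr; exact hP hint f hf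

end IntegerForms

/-- Under hypotheses (H), with τ = min(τ_1,…,τ_k) and F = Span_ℝ(e_1,…,e_k): for every
ε > 0 and every nonzero integer point P with ‖P‖ large enough, writing P = u + f with
u ∈ F^⊥ and f ∈ F, one has ‖u‖/‖P‖ ≥ ‖P‖^{-1-1/τ-ε}. -/
theorem stmt10
    (k p : ℕ) (hk : 1 ≤ k) (hkp : k ≤ p - 1)
    (e : Fin k → EuclideanSpace ℝ (Fin p))
    (τs ωs φs : Fin k → ℝ)
    (hτpos : ∀ j, 0 < τs j) (hτinj : Function.Injective τs)
    (hosc : {n : ℕ | ∀ j : Fin k, ∀ m : ℤ,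
      (n : ℝ) * ωs j + φs j ≠ Real.pi / 2 + m * Real.pi}.Infinite)
    (Q : ℕ → ℕ) (hQmono : StrictMono Q) (hQpos : ∀ n, 0 < Q n)
    (hQgrowth :
      (∃ M : ℝ, 0 < M ∧ ∀ n : ℕ, 1 ≤ n →
        Real.log (Q (n + 1)) ≤ (1 + M / n) * Real.log (Q n)) ∨
      ((∀ j, ωs j = 0) ∧
        Filter.Tendsto (fun n => Real.log (Q (n + 1)) / Real.log (Q n))
          Filter.atTop (nhds 1)))
    (l : ℕ → Fin p → ℤ)
    (εs ηs : Fin k → ℕ → ℝ) (θs : ℕ → ℝ)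
    (hεs : ∀ j, Filter.Tendsto (εs j) Filter.atTop (nhds 0))
    (hηs : ∀ j, Filter.Tendsto (ηs j) Filter.atTop (nhds 0))
    (hθs : Filter.Tendsto θs Filter.atTop (nhds 0))
    (hL : ∀ n : ℕ, 1 ≤ n → ∀ j,
      |∑ i, (l n i : ℝ) * e j i| =
        (Q n : ℝ) ^ (-τs j + εs j n) * |Real.cos ((n : ℝ) * ωs j + φs j) + ηs j n|)
    (hl : ∀ n : ℕ, 1 ≤ n → ∀ i, |(l n i : ℝ)| ≤ (Q n : ℝ) ^ (1 + θs n))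
    :
    ∀ ε : ℝ, 0 < ε → ∃ R0 : ℝ, ∀ P : EuclideanSpace ℝ (Fin p),
      (∀ i, ∃ m : ℤ, P i = (m : ℝ)) → P ≠ 0 → R0 ≤ ‖P‖ →
      ∀ u f : EuclideanSpace ℝ (Fin p),
        u ∈ (Submodule.span ℝ (Set.range e))ᗮ →
        f ∈ Submodule.span ℝ (Set.range e) →
        P = u + f →
        ‖P‖ ^ (-1 - 1 / (⨅ j, τs j) - ε) ≤ ‖u‖ / ‖P‖ := by
  have : Nonempty (Fin k) := Fin.pos_iff_nonempty.1 hk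
  obtain ⟨n₀, hn₀⟩ := hosc.nonempty
  have hcos (j : Fin k) : Real.cos (n₀ * ωs j + φs j) ≠ 0 :=
    Real.cos_ne_zero_iff.2 fun m h => hn₀ j m (by rw [h]; ring)
  have hQ : Tendsto (fun n => (Q n : ℝ)) atTop atTop :=
    tendsto_natCast_atTop_atTop.comp hQmono.tendsto_atTop
  have hlog (n : ℕ) : Real.log (Q n) ≤ Real.log (Q (n + 1)) :=
    Real.log_le_log (mod_cast hQpos n) (mod_cast hQmono.monotone n.le_succ)
  have hratio : Tendsto (fun n => Real.log (Q (n + 1)) / Real.log (Q n)) atTop (𝓝 1) := by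
    rcases hQgrowth with ⟨M, -, hM⟩ | ⟨-, hlim⟩
    · exact tendsto_succ_div_of_le_one_add_div_mul (Real.tendsto_log_atTop.comp hQ)
        (.of_forall hlog) (eventually_atTop.2 ⟨1, hM⟩)
    · exact hlim
  intro ε hε
  obtain ⟨R₀, -, hR₀⟩ := hasBasis_cobounded_norm.eventually_iff.1
    (stmt10_general e hτpos hτinj hcos hQ hratio hεs hηs hθs (eventually_atTop.2 ⟨1, hL⟩)
      (eventually_atTop.2 ⟨1, hl⟩) hε)
  exact ⟨R₀, fun P hP _ hPR u f _ hf hPuf => eq_sub_of_add_eq hPuf.symm ▸ hR₀ hPR hP f hf⟩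
end

section
/- Let M be a k × p real matrix with k, p ≥ 1. Denote by e_1,…,e_k ∈ ℝ^p the rows of M and by C_1,…,C_p ∈ ℝ^k its columns. Then the rank over ℚ of the family C_1,…,C_p, in ℝ^k viewed as a vector space over ℚ, is equal to the dimension (over ℝ) of the smallest subspace of ℝ^p that is defined over ℚ and contains e_1,…,e_k. -/
/-- A subspace of ℝ^p is defined over ℚ if it is spanned over ℝ by vectors with rational
coordinates. -/
def DefinedOverQ {p : ℕ} (F : Submodule ℝ (Fin p → ℝ)) : Prop :=
  ∃ s : Set (Fin p → ℝ), (∀ v ∈ s, ∀ i, ∃ q : ℚ, v i = (q : ℝ)) ∧ Submodule.span ℝ s = F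

/-!
Applying a `K`-linear form `φ : L → K` to every coordinate of `x ∈ L^κ` gives a vector
`φ ∘ x ∈ K^κ`, and `x` lies in the `L`-span of a subspace `V` of `K^κ` exactly when all the `φ ∘ x`
lie in `V`. Hence the smallest subspace defined over `K` containing the rows of `M` is the `L`-span
of the space `V ⊆ K^κ` generated by all `φ ∘ (row of M)`. Since linear forms separate the elements
of `L`, the orthogonal of `V` is the space of `K`-linear relations between the columns of `M`, so
both dimensions equal `|κ|` minus the dimension of that space.
-/

open Module Submodule

section ScalarExtension

variable {K κ : Type*} (L : Type*) [CommRing K] [Ring L] [Algebra K L]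

/-- The `L`-submodule of `L^κ` spanned by a subspace `V` of `K^κ`, that is, the image of `L ⊗ V`
in `L^κ`. -/
def scalarExtension (V : Submodule K (κ → K)) : Submodule L (κ → L) :=
  span L (Pi.algebraMap κ K L '' V)

variable {L}

theorem dual_comp_mem_of_mem_scalarExtension {V : Submodule K (κ → K)} {x : κ → L}
    (hx : x ∈ scalarExtension L V) (φ : Dual K L) : φ ∘ x ∈ V := by
  induction hx using span_induction generalizing φ with
  | mem x hx =>
    obtain ⟨v, hv, rfl⟩ := hx
    convert V.smul_mem (φ 1) hv using 1
    ext i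
    simp [Algebra.algebraMap_eq_smul_one, Pi.algebraMap, mul_comm]
  | zero =>
    have comp_zero : φ ∘ (0 : κ → L) = 0 := funext fun _ => map_zero φ
    exact comp_zero ▸ V.zero_mem
  | add x y _ _ hx hy =>
    have comp_add : φ ∘ (x + y) = φ ∘ x + φ ∘ y := funext fun i => map_add φ (x i) (y i)
    exact comp_add ▸ V.add_mem (hx φ) (hy φ)
  | smul l _ _ hx => exact hx (φ ∘ₗ LinearMap.mulLeft K l)

theorem mem_scalarExtension_iff [Free K L] [Finite κ] {V : Submodule K (κ → K)} {x : κ → L} :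
    x ∈ scalarExtension L V ↔ ∀ φ : Dual K L, φ ∘ x ∈ V := by
  classical
  refine ⟨dual_comp_mem_of_mem_scalarExtension, fun hx => ?_⟩
  have := Fintype.ofFinite κ
  let b := Free.chooseBasis K L
  let t := Finset.univ.biUnion fun j => (b.repr (x j)).support
  have expand : x = ∑ i ∈ t, b i • Pi.algebraMap κ K L (b.coord i ∘ x) := by
    ext j
    have hsupp : (b.repr (x j)).support ⊆ t :=
      Finset.subset_biUnion_of_mem (fun j => (b.repr (x j)).support) (Finset.mem_univ j)
    conv_lhs => rw [← b.linearCombination_repr (x j),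
      Finsupp.linearCombination_apply_of_mem_supported K hsupp]
    simp [Pi.algebraMap, Algebra.smul_def, Algebra.commutes]
  rw [expand]
  exact sum_mem fun i _ => smul_mem _ _ (subset_span ⟨_, hx (b.coord i), rfl⟩)

theorem linearIndependent_pi_algebraMap_comp [Projective K L] {ι : Type*} {v : ι → κ → K}
    (hv : LinearIndependent K v) : LinearIndependent L (Pi.algebraMap κ K L ∘ v) := by
  rw [linearIndependent_iff'] at hv ⊢
  intro s c hc i hi
  refine (forall_dual_apply_eq_zero_iff K (c i)).1 fun φ => hv s (φ ∘ c) ?_ i hi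
  ext j
  simpa [Pi.algebraMap, ← Algebra.commutes, ← Algebra.smul_def, mul_comm] using
    congrArg φ (congrFun hc j)

theorem span_image_pi_algebraMap (s : Set (κ → K)) :
    span L (Pi.algebraMap κ K L '' s) = scalarExtension L (span K s) := by
  rw [scalarExtension, ← map_coe, map_span, span_span_of_tower]

theorem finrank_scalarExtension [StrongRankCondition K] [StrongRankCondition L] [Projective K L]
    (V : Submodule K (κ → K)) [Free K V] :
    finrank L (scalarExtension L V) = finrank K V := by
  let b := Free.chooseBasis K V
  have hspan : span L (Set.range (Pi.algebraMap κ K L ∘ V.subtype ∘ b)) = scalarExtension L V := by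
    rw [Set.range_comp, span_image_pi_algebraMap, Set.range_comp, span_image, b.span_eq,
      map_subtype_top]
  have hli := linearIndependent_pi_algebraMap_comp (L := L)
    (b.linearIndependent.map' V.subtype V.ker_subtype)
  rw [← hspan, finrank_eq_nat_card_basis (Basis.span hli), finrank_eq_nat_card_basis b]

variable (K) in
/-- An `L`-submodule of `L^κ` is defined over `K` if it is spanned by vectors with coordinates
in `K`. -/
def IsDefinedOver (F : Submodule L (κ → L)) : Prop :=
  ∃ s : Set (κ → K), span L (Pi.algebraMap κ K L '' s) = F

theorem isDefinedOver_iff_exists_scalarExtension {F : Submodule L (κ → L)} :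
    IsDefinedOver K F ↔ ∃ V : Submodule K (κ → K), scalarExtension L V = F :=
  ⟨fun ⟨s, hs⟩ => ⟨span K s, (span_image_pi_algebraMap s).symm.trans hs⟩,
    fun ⟨V, hV⟩ => ⟨V, hV⟩⟩

end ScalarExtension

section Matrix

variable (K : Type*) {L ι κ : Type*} [CommRing K] [Ring L] [Algebra K L]

/-- The subspace of `K^κ` spanned by the coordinate vectors `φ ∘ e` of the rows `e` of `M`, for all
`K`-linear forms `φ` on `L`. -/
def rowCoordinateSpan (M : Matrix ι κ L) : Submodule K (κ → K) :=
  span K (Set.range fun q : Dual K L × ι => q.1 ∘ M.row q.2)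

variable {K}

theorem rowCoordinateSpan_le_iff [Free K L] [Finite κ] {M : Matrix ι κ L}
    {V : Submodule K (κ → K)} :
    rowCoordinateSpan K M ≤ V ↔ ∀ j, M.row j ∈ scalarExtension L V := by
  simp only [rowCoordinateSpan, span_le, Set.range_subset_iff, Prod.forall, SetLike.mem_coe,
    mem_scalarExtension_iff]
  exact forall_comm

variable (K)

theorem sInf_isDefinedOver_eq_scalarExtension [Free K L] [Finite κ] (M : Matrix ι κ L) :
    sInf {F : Submodule L (κ → L) | IsDefinedOver K F ∧ ∀ j, M.row j ∈ F} =
      scalarExtension L (rowCoordinateSpan K M) := by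
  refine IsLeast.csInf_eq ⟨⟨⟨_, rfl⟩, rowCoordinateSpan_le_iff.1 le_rfl⟩, ?_⟩
  rintro F ⟨hF, hM⟩
  obtain ⟨V, rfl⟩ := isDefinedOver_iff_exists_scalarExtension.1 hF
  exact span_mono (Set.image_mono (rowCoordinateSpan_le_iff.2 hM))

theorem mem_ker_linearCombination_col_iff [Projective K L] [Fintype κ] (M : Matrix ι κ L)
    (d : κ → K) :
    d ∈ (Fintype.linearCombination K M.col).ker ↔ ∀ v ∈ rowCoordinateSpan K M, v ⬝ᵥ d = 0 := by
  have dual_sum (φ : Dual K L) (j : ι) : φ (∑ i, d i • M j i) = (φ ∘ M.row j) ⬝ᵥ d := by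
    simp [dotProduct, mul_comm]
  calc d ∈ (Fintype.linearCombination K M.col).ker
    _ ↔ ∀ j, ∑ i, d i • M j i = 0 := by
      simp [Fintype.linearCombination_apply, funext_iff]
    _ ↔ ∀ (φ : Dual K L) (j : ι), (φ ∘ M.row j) ⬝ᵥ d = 0 := by
      simp only [← forall_dual_apply_eq_zero_iff K (∑ i, d i • M _ i), dual_sum]
      exact forall_comm
    _ ↔ rowCoordinateSpan K M ≤ ((dotProductBilin K K).flip d).ker := by
      simp [rowCoordinateSpan, span_le, Set.range_subset_iff]

end Matrix

section Rank

variable (K : Type*) {L ι κ : Type*} [Field K] [Ring L] [Algebra K L] [Finite κ]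

theorem finrank_rowCoordinateSpan (M : Matrix ι κ L) :
    finrank K (rowCoordinateSpan K M) = finrank K (span K (Set.range M.col)) := by
  classical
  have := Fintype.ofFinite κ
  have hker : ((rowCoordinateSpan K M).map (dotProductEquiv K κ).toLinearMap).dualCoannihilator =
      (Fintype.linearCombination K M.col).ker := by
    ext d
    rw [mem_ker_linearCombination_col_iff]
    simp only [mem_dualCoannihilator, mem_map, forall_exists_index, and_imp,
      forall_apply_eq_imp_iff₂]
    rfl
  have hrow := Subspace.finrank_add_finrank_dualCoannihilator_eq
    ((rowCoordinateSpan K M).map (dotProductEquiv K κ).toLinearMap)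
  rw [hker, LinearEquiv.finrank_map_eq] at hrow
  have hcol := (Fintype.linearCombination K M.col).finrank_range_add_finrank_ker
  rw [Fintype.range_linearCombination] at hcol
  omega

theorem stmt11_general [StrongRankCondition L] (M : Matrix ι κ L) :
    finrank K (span K (Set.range M.col)) =
      finrank L ↥(sInf {F : Submodule L (κ → L) | IsDefinedOver K F ∧ ∀ j, M.row j ∈ F}) := by
  rw [sInf_isDefinedOver_eq_scalarExtension, finrank_scalarExtension, finrank_rowCoordinateSpan]

end Rank

theorem definedOverQ_iff_isDefinedOver {p : ℕ} {F : Submodule ℝ (Fin p → ℝ)} :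
    DefinedOverQ F ↔ IsDefinedOver ℚ F := by
  constructor
  · rintro ⟨s, hs, rfl⟩
    have hrange : s ⊆ Set.range (Pi.algebraMap (Fin p) ℚ ℝ) := fun v hv => by
      choose q hq using hs v hv
      exact ⟨q, (funext hq).symm⟩
    obtain ⟨t, rfl⟩ := Set.subset_range_iff_exists_image_eq.1 hrange
    exact ⟨t, rfl⟩
  · rintro ⟨t, rfl⟩
    refine ⟨_, ?_, rfl⟩
    rintro _ ⟨q, -, rfl⟩ i
    exact ⟨q i, rfl⟩

/-- For a k × p real matrix M with rows e_1,…,e_k and columns C_1,…,C_p, the rank over ℚ of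
the family C_1,…,C_p in ℝ^k (viewed as a ℚ-vector space) equals the dimension of the smallest
subspace of ℝ^p defined over ℚ containing the rows e_1,…,e_k. -/
theorem stmt11 (k p : ℕ) (hk : 1 ≤ k) (hp : 1 ≤ p) (M : Matrix (Fin k) (Fin p) ℝ) :
    Module.finrank ℚ
      (Submodule.span ℚ (Set.range (fun i : Fin p => fun j : Fin k => M j i))) =
    Module.finrank ℝ
      ↥(sInf {F : Submodule ℝ (Fin p → ℝ) | DefinedOverQ F ∧ ∀ j : Fin k, M j ∈ F}) := by
  have definedOver_eq : DefinedOverQ (p := p) = IsDefinedOver ℚ :=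
    funext fun _ => propext definedOverQ_iff_isDefinedOver
  exact definedOver_eq ▸ stmt11_general ℚ M
end

section
/- Let a ≥ 3 be an odd integer and let ξ = (ξ_3, ξ_5, …, ξ_{a+2}) be real numbers indexed by the odd integers from 3 to a+2. Define n(ξ) = dim_ℚ Span_ℚ(1, ξ_3, ξ_5, …, ξ_a) and define N(ξ) as the rank over ℚ, in ℝ² viewed as a ℚ-vector space, of the family of vectors (1,0), (0,1), and (ξ_i, (i(i+1)/2)·ξ_{i+2}) for all odd i with 3 ≤ i ≤ a. Then n(ξ) + 1 ≤ N(ξ) ≤ 2·n(ξ) + 1. -/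
/-- n(ξ) = dim_ℚ Span_ℚ(1, ξ_3, ξ_5, …, ξ_a) (ξ indexed by odd integers). -/
noncomputable def nrank (a : ℕ) (ξ : ℕ → ℝ) : ℕ :=
  Module.finrank ℚ (Submodule.span ℚ
    (({1} : Set ℝ) ∪ {x : ℝ | ∃ i : ℕ, Odd i ∧ 3 ≤ i ∧ i ≤ a ∧ x = ξ i}))

/-- N(ξ) = rank over ℚ, in ℝ² viewed as a ℚ-vector space, of the family (1,0), (0,1), and
(ξ_i, (i(i+1)/2)·ξ_{i+2}) for odd 3 ≤ i ≤ a. -/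
noncomputable def Nrank (a : ℕ) (ξ : ℕ → ℝ) : ℕ :=
  Module.finrank ℚ (Submodule.span ℚ
    (({((1:ℝ), (0:ℝ)), ((0:ℝ), (1:ℝ))} : Set (ℝ × ℝ)) ∪
      {x : ℝ × ℝ | ∃ i : ℕ, Odd i ∧ 3 ≤ i ∧ i ≤ a ∧
        x = (ξ i, ((i : ℝ) * (i + 1) / 2) * ξ (i + 2))}))

/-!
Let `A` be the span of `1, ξ₃, …, ξ_a` and `P ⊆ ℝ²` the span of the family defining `N(ξ)`.
The first projection maps `P` onto `A` and kills `(0, 1) ≠ 0`, so `dim A + 1 ≤ dim P`.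
Conversely `P ⊆ A × B`, where `B` is the span of `1` and the second coordinates; all of these except
a multiple of `ξ_{a+2}` lie in `A`, so `dim B ≤ dim A + 1`. All this needs of `i ↦ i + 2` is that it
maps all but one of the indices to indices.
-/

universe v

section DivisionRing

variable {K : Type*} {V W : Type v} {ι : Type*} [DivisionRing K]
  [AddCommGroup V] [Module K V] [AddCommGroup W] [Module K W]

theorem rank_span_insert_le (z : V) (S : Set V) :
    Module.rank K (Submodule.span K (insert z S)) ≤ Module.rank K (Submodule.span K S) + 1 := by
  rw [Submodule.span_insert, add_comm]
  calc Module.rank K ↥(Submodule.span K {z} ⊔ Submodule.span K S)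
      ≤ Module.rank K (Submodule.span K {z}) + Module.rank K (Submodule.span K S) :=
        Submodule.rank_add_le_rank_add_rank _ _
    _ ≤ 1 + Module.rank K (Submodule.span K S) := by
        gcongr
        simpa only [Cardinal.mk_singleton] using rank_span_le ({z} : Set V)

theorem rank_submodule_prod_le (A : Submodule K V) (B : Submodule K W) :
    Module.rank K (A.prod B) ≤ Module.rank K A + Module.rank K B := by
  rw [LinearMap.prod_eq_sup_map]
  exact (Submodule.rank_add_le_rank_add_rank _ _).trans
    (add_le_add (rank_map_le _ _) (rank_map_le _ _))

theorem rank_map_fst_add_one_le {P : Submodule K (V × W)} {w : W} (hw : w ≠ 0)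
    (hwP : ((0 : V), w) ∈ P) :
    Module.rank K (P.map (LinearMap.fst K V W)) + 1 ≤ Module.rank K P := by
  let π : P →ₗ[K] V := (LinearMap.fst K V W).domRestrict P
  have ker_pos : 0 < Module.rank K π.ker :=
    rank_pos_iff_exists_ne_zero.mpr ⟨⟨⟨(0, w), hwP⟩, rfl⟩, fun h ↦ hw <|
      congrArg (fun p : π.ker ↦ (p : V × W).2) h⟩
  calc Module.rank K (P.map (LinearMap.fst K V W)) + 1
      ≤ Module.rank K π.range + Module.rank K π.ker := by
        rw [LinearMap.range_domRestrict]
        gcongr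
        exact Cardinal.one_le_iff_pos.mpr ker_pos
    _ = Module.rank K P := π.rank_range_add_rank_ker

theorem rank_span_add_one_le_rank_span_pairs (e : V) {f : W} (hf : f ≠ 0)
    (x : ι → V) (y : ι → W) (I : Set ι) :
    Module.rank K (Submodule.span K (insert e (x '' I))) + 1 ≤
      Module.rank K (Submodule.span K ({(e, 0), (0, f)} ∪ (fun i ↦ (x i, y i)) '' I)) := by
  set P := Submodule.span K ({(e, 0), (0, f)} ∪ (fun i ↦ (x i, y i)) '' I)
  have span_le : Submodule.span K (insert e (x '' I)) ≤ P.map (LinearMap.fst K V W) := by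
    rw [Submodule.span_le, Set.insert_subset_iff, Set.image_subset_iff]
    exact ⟨⟨(e, 0), Submodule.subset_span (by simp), rfl⟩,
      fun i hi ↦ ⟨(x i, y i), Submodule.subset_span (Or.inr ⟨i, hi, rfl⟩), rfl⟩⟩
  calc Module.rank K (Submodule.span K (insert e (x '' I))) + 1
      ≤ Module.rank K (P.map (LinearMap.fst K V W)) + 1 := by
        gcongr
        exact Submodule.rank_mono span_le
    _ ≤ Module.rank K P := rank_map_fst_add_one_le hf (Submodule.subset_span (by simp))

theorem rank_span_pairs_le (e : V) (f : W) (x : ι → V) (y : ι → W) (I : Set ι) :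
    Module.rank K (Submodule.span K ({(e, 0), (0, f)} ∪ (fun i ↦ (x i, y i)) '' I)) ≤
      Module.rank K (Submodule.span K (insert e (x '' I))) +
        Module.rank K (Submodule.span K (insert f (y '' I))) := by
  refine (Submodule.rank_mono ?_).trans (rank_submodule_prod_le _ _)
  rw [Submodule.span_le]
  rintro _ ((rfl | rfl) | ⟨i, hi, rfl⟩)
  · exact ⟨Submodule.subset_span (Set.mem_insert _ _), zero_mem _⟩
  · exact ⟨zero_mem _, Submodule.subset_span (Set.mem_insert _ _)⟩
  · exact ⟨Submodule.subset_span (Or.inr ⟨i, hi, rfl⟩),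
      Submodule.subset_span (Or.inr ⟨i, hi, rfl⟩)⟩

theorem rank_span_smul_shift_le (e : V) (x : ι → V) (c : ι → K) {s : ι → ι} {I : Set ι} {m : ι}
    (hs : ∀ i ∈ I, i ≠ m → s i ∈ I) :
    Module.rank K (Submodule.span K (insert e ((fun i ↦ c i • x (s i)) '' I))) ≤
      Module.rank K (Submodule.span K (insert e (x '' I))) + 1 := by
  refine (Submodule.rank_mono ?_).trans (rank_span_insert_le (x (s m)) _)
  rw [Submodule.span_le, Set.insert_subset_iff, Set.image_subset_iff]
  refine ⟨Submodule.subset_span (by simp), fun i hi ↦ Submodule.smul_mem _ _ ?_⟩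
  apply Submodule.subset_span
  obtain rfl | him := eq_or_ne i m
  · exact Set.mem_insert _ _
  · exact Or.inr (Or.inr ⟨s i, hs i hi him, rfl⟩)

theorem stmt12_general {e : V} (he : e ≠ 0) (x : ι → V) (c : ι → K) {s : ι → ι} {I : Set ι} {m : ι}
    (hs : ∀ i ∈ I, i ≠ m → s i ∈ I) :
    Module.rank K (Submodule.span K (insert e (x '' I))) + 1 ≤
        Module.rank K (Submodule.span K ({(e, 0), (0, e)} ∪ (fun i ↦ (x i, c i • x (s i))) '' I)) ∧
      Module.rank K (Submodule.span K ({(e, 0), (0, e)} ∪ (fun i ↦ (x i, c i • x (s i))) '' I)) ≤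
        2 * Module.rank K (Submodule.span K (insert e (x '' I))) + 1 := by
  refine ⟨rank_span_add_one_le_rank_span_pairs e he x _ I, (rank_span_pairs_le e e x _ I).trans ?_⟩
  rw [two_mul, add_assoc]
  gcongr
  exact rank_span_smul_shift_le e x c hs

end DivisionRing

/-- The odd integers from 3 to `a`, that is, the indices of the families spanning the subspaces in
`nrank` and `Nrank`; with it these families are images of a set. -/
def oddIndices (a : ℕ) : Set ℕ := {i | Odd i ∧ 3 ≤ i ∧ i ≤ a}

theorem image_oddIndices {α : Type*} (a : ℕ) (f : ℕ → α) :
    f '' oddIndices a = {x | ∃ i, Odd i ∧ 3 ≤ i ∧ i ≤ a ∧ x = f i} := by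
  ext x
  simp only [oddIndices, Set.mem_image, Set.mem_ofPred_eq, and_assoc, eq_comm]

theorem finite_oddIndices (a : ℕ) : (oddIndices a).Finite :=
  (Set.finite_Iic a).subset fun _ hi ↦ hi.2.2

theorem add_two_mem_oddIndices {a i : ℕ} (ha : Odd a) (hi : i ∈ oddIndices a) (hia : i ≠ a) :
    i + 2 ∈ oddIndices a := by
  obtain ⟨hodd, h3, hle⟩ := hi
  exact ⟨hodd.add_even even_two, by lia, by grind⟩

theorem cast_nrank (a : ℕ) (ξ : ℕ → ℝ) :
    (nrank a ξ : Cardinal) =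
      Module.rank ℚ (Submodule.span ℚ (insert 1 (ξ '' oddIndices a))) := by
  have := FiniteDimensional.span_of_finite ℚ (((finite_oddIndices a).image ξ).insert 1)
  rw [← Module.finrank_eq_rank, image_oddIndices]
  rfl

theorem cast_Nrank (a : ℕ) (ξ : ℕ → ℝ) :
    (Nrank a ξ : Cardinal) =
      Module.rank ℚ (Submodule.span ℚ ({((1 : ℝ), (0 : ℝ)), ((0 : ℝ), (1 : ℝ))} ∪
        (fun i : ℕ ↦ (ξ i, ((i : ℚ) * (i + 1) / 2) • ξ (i + 2))) '' oddIndices a)) := by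
  have family_eq : (fun i : ℕ ↦ (ξ i, ((i : ℚ) * (i + 1) / 2) • ξ (i + 2))) =
      fun i : ℕ ↦ (ξ i, ((i : ℝ) * (i + 1) / 2) * ξ (i + 2)) := by
    ext i <;> simp [Rat.smul_def]
  rw [family_eq]
  have := FiniteDimensional.span_of_finite ℚ ((Set.toFinite {((1 : ℝ), (0 : ℝ)), (0, 1)}).union
    ((finite_oddIndices a).image fun i : ℕ ↦ (ξ i, ((i : ℝ) * (i + 1) / 2) * ξ (i + 2))))
  rw [← Module.finrank_eq_rank, image_oddIndices]
  rfl

/-- For odd a ≥ 3 and any real tuple ξ: n(ξ) + 1 ≤ N(ξ) ≤ 2n(ξ) + 1. -/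
theorem stmt12 (a : ℕ) (ha : Odd a) (ha3 : 3 ≤ a) (ξ : ℕ → ℝ) :
    nrank a ξ + 1 ≤ Nrank a ξ ∧ Nrank a ξ ≤ 2 * nrank a ξ + 1 := by
  have h := stmt12_general (one_ne_zero' ℝ) ξ (fun i ↦ (i : ℚ) * (i + 1) / 2)
    fun _ ↦ add_two_mem_oddIndices ha
  rw [← cast_nrank, ← cast_Nrank] at h
  exact_mod_cast h
end

section
/- Let a ≥ 3 be an odd integer. For real numbers ξ = (ξ_3, ξ_5, …, ξ_{a+2}) indexed by the odd integers from 3 to a+2, define n(ξ) = dim_ℚ Span_ℚ(1, ξ_3, ξ_5, …, ξ_a) and define N(ξ) as the rank over ℚ, in ℝ² viewed as a ℚ-vector space, of the family of vectors (1,0), (0,1), and (ξ_i, (i(i+1)/2)·ξ_{i+2}) for all odd i with 3 ≤ i ≤ a. Then for all positive integers n and N with N ≤ (a+3)/2 and n+1 ≤ N ≤ 2n+1, there exists such a tuple ξ of real numbers with n(ξ) = n and N(ξ) = N. -/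
/-!
Prepend `0, 1` to the tuple: for `y = (0, 1, ξ₃, ξ₅, …)`, `n(ξ)` is the rank of `y₀, …, y_{m+1}`
with `a = 2m + 1`, and `N(ξ)` is the rank of the links `(y_k, c_k y_{k+1})` for `0 ≤ k ≤ m + 1`,
since `(0, 1)` and `(1, 0)` are the links `k = 0` and `k = 1` with `c₀ = 1` and `c₁ = 0`. If the
nonzero entries of `y` are linearly independent, then so are the nonzero links: those with
`y_k ≠ 0` have independent first coordinates, and the others have first coordinate `0` and
independent second coordinates. So `n(ξ)` counts the `k ≤ m + 1` in the support `S` of `y`, `N(ξ)`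
counts those with `k ∈ S` or `k + 1 ∈ S`, and it remains to choose `S`, with `0 ∉ S` and `1 ∈ S`.
-/

open Function Module Set Submodule

section Module

variable {R V W ι : Type*} [Ring R] [AddCommGroup V] [Module R V] [AddCommGroup W] [Module R W]

lemma span_image_inter_support (x : ι → V) (T : Set ι) :
    span R (x '' (T ∩ support x)) = span R (x '' T) := by
  have image_eq : x '' (T ∩ support x) = x '' T \ {0} := image_inter_preimage x T {0}ᶜ
  rw [image_eq, span_sdiff_singleton_zero]

lemma finrank_span_image_of_linearIndepOn [StrongRankCondition R] {x : ι → V} {T : Set ι}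
    (hx : LinearIndepOn R x (T ∩ support x)) :
    finrank R (span R (x '' T)) = (T ∩ support x).ncard := by
  rw [← span_image_inter_support]
  exact congrArg ENat.toNat (toENat_rank_span_set hx)

lemma linearIndepOn_union_prodMk {f : ι → V} {g : ι → W} {s t : Set ι}
    (hf : LinearIndepOn R f s) (hg : LinearIndepOn R g t) (hft : ∀ i ∈ t, f i = 0) :
    LinearIndepOn R (fun i ↦ (f i, g i)) (s ∪ t) := by
  have span_le_ker : span R ((fun i ↦ (f i, g i)) '' t) ≤ LinearMap.ker (LinearMap.fst R V W) := by
    rw [span_le]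
    rintro _ ⟨i, hi, rfl⟩
    exact hft i hi
  rw [union_comm]
  refine LinearIndepOn.union_of_quotient (.of_comp (LinearMap.snd R V W) hg) ?_
  exact .of_comp (liftQ _ (LinearMap.fst R V W) span_le_ker) hf

end Module

section DivisionRing

variable {K V ι : Type*} [DivisionRing K] [AddCommGroup V] [Module K V]

lemma support_prodMk_smul (x : ι → V) {σ : ι → ι} {c : ι → K} (hc : ∀ i, x i = 0 → c i ≠ 0) :
    support (fun i ↦ (x i, c i • x (σ i))) = support x ∪ σ ⁻¹' support x := by
  ext i
  by_cases hi : x i = 0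
  · simp [hi, hc i hi]
  · simp [hi]

lemma linearIndepOn_prodMk_smul {x : ι → V} (hx : LinearIndepOn K x (support x))
    {σ : ι → ι} (hσ : Injective σ) {c : ι → K} (hc : ∀ i, x i = 0 → c i ≠ 0) :
    LinearIndepOn K (fun i ↦ (x i, c i • x (σ i))) (support x ∪ σ ⁻¹' support x) := by
  have shifted : LinearIndepOn K (x ∘ σ) (σ ⁻¹' support x \ support x) :=
    (hx.mono ((image_mono sdiff_subset).trans (image_preimage_subset _ _))).comp_of_image hσ.injOn
  have scaled : LinearIndepOn K (fun i ↦ c i • x (σ i)) (σ ⁻¹' support x \ support x) := by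
    have hc' (i : ↥(σ ⁻¹' support x \ support x)) : c i ≠ 0 := hc i (notMem_support.1 i.2.2)
    exact shifted.linearIndependent.units_smul fun i ↦ Units.mk0 (c i) (hc' i)
  rw [← union_sdiff_self]
  exact linearIndepOn_union_prodMk hx scaled fun i hi ↦ notMem_support.1 hi.2

lemma finrank_span_image_prodMk_smul {x : ι → V} (hx : LinearIndepOn K x (support x))
    {σ : ι → ι} (hσ : Injective σ) {c : ι → K} (hc : ∀ i, x i = 0 → c i ≠ 0) (T : Set ι) :
    finrank K (span K ((fun i ↦ (x i, c i • x (σ i))) '' T)) =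
      (T ∩ (support x ∪ σ ⁻¹' support x)).ncard := by
  have support_eq := support_prodMk_smul x (σ := σ) hc
  have independent := (linearIndepOn_prodMk_smul hx hσ hc).mono (inter_subset_right (s := T))
  rw [← support_eq] at independent ⊢
  exact finrank_span_image_of_linearIndepOn independent

end DivisionRing

lemma linearIndependent_pow_of_transcendental {R A : Type*} [CommRing R] [Ring A] [Algebra R A]
    {x : A} (hx : Transcendental R x) :
    LinearIndependent R (fun k : ℕ ↦ x ^ k) := by
  have := (Polynomial.basisMonomials R).linearIndependent.map'
    (Polynomial.aeval x).toLinearMap (LinearMap.ker_eq_bot.2 (transcendental_iff_injective.1 hx))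
  simpa [comp_def] using this

lemma exists_linearIndepOn_support_eq {R A ι : Type*} [CommRing R] [Nontrivial R] [Field A]
    [Algebra R A] [Countable ι] {x : A} (hx : Transcendental R x) {S : Set ι} {i : ι} (hi : i ∈ S) :
    ∃ y : ι → A, y i = 1 ∧ support y = S ∧ LinearIndepOn R y (support y) := by
  obtain ⟨f, hf⟩ := Countable.exists_injective_nat ι
  have hx0 : x ≠ 0 := fun h ↦ hx (h ▸ isAlgebraic_zero)
  let e (j : ι) : A := x ^ f j * (x ^ f i)⁻¹
  have he0 (j : ι) : e j ≠ 0 := mul_ne_zero (pow_ne_zero _ hx0) (inv_ne_zero (pow_ne_zero _ hx0))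
  have he : LinearIndependent R e :=
    ((linearIndependent_pow_of_transcendental hx).comp f hf).map_injOn
      (LinearMap.mulRight R (x ^ f i)⁻¹)
      (mul_left_injective₀ (inv_ne_zero (pow_ne_zero _ hx0))).injOn
  have support_eq : support (S.indicator e) = S := by
    rw [support_indicator, support_eq_univ he0, inter_univ]
  refine ⟨S.indicator e, ?_, support_eq, ?_⟩
  · rw [indicator_of_mem hi]
    exact mul_inv_cancel₀ (pow_ne_zero _ hx0)
  · rw [support_eq]
    exact (he.linearIndepOn S).congr eqOn_indicator.symm

lemma transcendental_rat_liouvilleNumber_two : Transcendental ℚ (liouvilleNumber (2 : ℕ)) :=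
  fun h ↦ transcendental_liouvilleNumber le_rfl ((IsFractionRing.isAlgebraic_iff ℤ ℚ ℝ).2 h)

/-- The sequence `0, 1, ξ₃, ξ₅, ξ₇, …`, whose consecutive terms give all the vectors of `nrank` and
`Nrank`: the leading `0, 1` account for `1`, `(0, 1)` and `(1, 0)`. -/
def augment (ξ : ℕ → ℝ) : ℕ → ℝ
  | 0 => 0
  | 1 => 1
  | k + 2 => ξ (2 * k + 3)

/-- The weights `1, 0, 3·4/2, 5·6/2, …` for which the vectors of `Nrank`, starting with `(0, 1)`
and `(1, 0)`, are the pairs `(y k, linkWeight k • y (k + 1))` of `y = augment ξ`. -/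
def linkWeight : ℕ → ℚ
  | 0 => 1
  | 1 => 0
  | k + 2 => (2 * k + 3) * (2 * k + 4) / 2

lemma linkWeight_ne_zero {k : ℕ} (hk : k ≠ 1) : linkWeight k ≠ 0 := by
  match k with
  | 0 => exact one_ne_zero
  | k + 2 => rw [linkWeight]; positivity

lemma exists_augment_eq {y : ℕ → ℝ} (hy0 : y 0 = 0) (hy1 : y 1 = 1) : ∃ ξ, augment ξ = y := by
  refine ⟨fun i ↦ y ((i + 1) / 2), funext fun k ↦ ?_⟩
  match k with
  | 0 => exact hy0.symm
  | 1 => exact hy1.symm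
  | k + 2 => exact congrArg y (by omega)

lemma image_Iio_add_two {α : Type*} (f : ℕ → α) (m : ℕ) :
    f '' Iio (m + 2) = {f 0, f 1} ∪ {x | ∃ k < m, x = f (k + 2)} := by
  ext x
  constructor
  · rintro ⟨_ | _ | k, hk, rfl⟩
    · exact .inl (.inl rfl)
    · exact .inl (.inr rfl)
    · exact .inr ⟨k, by simpa using hk, rfl⟩
  · rintro ((rfl | rfl) | ⟨k, hk, rfl⟩)
    · exact ⟨0, by simp, rfl⟩
    · exact ⟨1, by simp, rfl⟩
    · exact ⟨k + 2, by simpa using hk, rfl⟩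

lemma setOf_odd_index_eq {α : Type*} (f : ℕ → α) (m : ℕ) :
    {x | ∃ i, Odd i ∧ 3 ≤ i ∧ i ≤ 2 * m + 1 ∧ x = f i} = {x | ∃ k < m, x = f (2 * k + 3)} := by
  ext x
  constructor
  · rintro ⟨_, ⟨k, rfl⟩, hk, hkm, rfl⟩
    exact ⟨k - 1, by omega, congrArg f (by omega)⟩
  · rintro ⟨k, hk, rfl⟩
    exact ⟨2 * k + 3, ⟨k + 1, rfl⟩, by omega, by omega, rfl⟩

lemma nrank_eq_finrank_span_augment (m : ℕ) (ξ : ℕ → ℝ) :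
    nrank (2 * m + 1) ξ = finrank ℚ (span ℚ (augment ξ '' Iio (m + 2))) := by
  have image_eq : augment ξ '' Iio (m + 2) =
      insert 0 ({1} ∪ {x | ∃ i, Odd i ∧ 3 ≤ i ∧ i ≤ 2 * m + 1 ∧ x = ξ i}) := by
    rw [image_Iio_add_two, setOf_odd_index_eq, insert_union]
    rfl
  rw [nrank, image_eq, span_insert_zero]

lemma Nrank_eq_finrank_span_augment (m : ℕ) (ξ : ℕ → ℝ) :
    Nrank (2 * m + 1) ξ = finrank ℚ (span ℚ
      ((fun k ↦ (augment ξ k, linkWeight k • augment ξ (k + 1))) '' Iio (m + 2))) := by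
  have link_zero : (augment ξ 0, linkWeight 0 • augment ξ (0 + 1)) = (0, 1) := by
    simp [augment, linkWeight]
  have link_one : (augment ξ 1, linkWeight 1 • augment ξ (1 + 1)) = (1, 0) := by
    simp [augment, linkWeight]
  have link_add_two (k : ℕ) :
      (augment ξ (k + 2), linkWeight (k + 2) • augment ξ (k + 2 + 1)) = (ξ (2 * k + 3),
        ((2 * k + 3 : ℕ) : ℝ) * ((2 * k + 3 : ℕ) + 1) / 2 * ξ (2 * k + 3 + 2)) := by
    refine Prod.ext rfl ?_
    simp only [augment, linkWeight, Rat.smul_def]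
    push_cast
    ring_nf
  have image_eq : (fun k ↦ (augment ξ k, linkWeight k • augment ξ (k + 1))) '' Iio (m + 2) =
      {(1, 0), (0, 1)} ∪ {x | ∃ i : ℕ, Odd i ∧ 3 ≤ i ∧ i ≤ 2 * m + 1 ∧
        x = (ξ i, (i : ℝ) * (i + 1) / 2 * ξ (i + 2))} := by
    rw [image_Iio_add_two, pair_comm,
      setOf_odd_index_eq fun i ↦ (ξ i, (i : ℝ) * (i + 1) / 2 * ξ (i + 2))]
    simp only [link_zero, link_one, link_add_two]
  rw [Nrank, image_eq]

lemma ncard_odd_lt_two_mul (s : ℕ) : {k | k < 2 * s ∧ Odd k}.ncard = s := by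
  have h : {k | k < 2 * s ∧ Odd k} = (fun j ↦ 2 * j + 1) '' Iio s := by
    ext k
    constructor
    · rintro ⟨hk, j, rfl⟩
      exact ⟨j, mem_Iio.2 (by omega), rfl⟩
    · rintro ⟨j, hj, rfl⟩
      exact ⟨by dsimp only; rw [mem_Iio] at hj; omega, j, rfl⟩
  rw [h, ncard_image_of_injective _ fun i j hij ↦ by simpa using hij]
  simp

lemma exists_ncard_eq_of_le_two_mul {n N M : ℕ} (hnN : n + 1 ≤ N) (hN : N ≤ 2 * n) (hM : N ≤ M) :
    ∃ S : Set ℕ, 0 ∉ S ∧ 1 ∈ S ∧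
      (Iio M ∩ S).ncard = n ∧ (Iio M ∩ (S ∪ (· + 1) ⁻¹' S)).ncard = N := by
  obtain ⟨s, rfl⟩ := Nat.exists_eq_add_of_le (Nat.le_of_succ_le hnN)
  let S : Set ℕ := {k | k < 2 * s ∧ Odd k} ∪ Ico (2 * s) (n + s)
  have mem_S (k : ℕ) : k ∈ S ↔ k < 2 * s ∧ k % 2 = 1 ∨ 2 * s ≤ k ∧ k < n + s := by
    rw [← Nat.odd_iff]
    rfl
  have inter_eq : Iio M ∩ S = S := inter_eq_right.2 fun k hk ↦ by grind
  have cover_eq : Iio M ∩ (S ∪ (· + 1) ⁻¹' S) = Iio (n + s) := by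
    ext k
    simp only [mem_inter_iff, mem_union, mem_preimage, mem_S, mem_Iio]
    omega
  refine ⟨S, by grind, by grind, ?_, by rw [cover_eq, ncard_Iio_nat]⟩
  have disjoint : Disjoint {k | k < 2 * s ∧ Odd k} (Ico (2 * s) (n + s)) :=
    disjoint_left.2 fun k hk hk' ↦ hk'.1.not_gt hk.1
  rw [inter_eq, ncard_union_eq disjoint ((finite_Iio _).subset fun k hk ↦ hk.1),
    ncard_odd_lt_two_mul, ← Finset.coe_Ico, ncard_coe_finset, Nat.card_Ico]
  omega

-- The last element of `S` lies just outside the range, so it covers `M - 1` without being counted.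
lemma exists_ncard_eq_two_mul_add_one {n M : ℕ} (hn : 1 ≤ n) (hM : 2 * n + 1 ≤ M) :
    ∃ S : Set ℕ, 0 ∉ S ∧ 1 ∈ S ∧
      (Iio M ∩ S).ncard = n ∧ (Iio M ∩ (S ∪ (· + 1) ⁻¹' S)).ncard = 2 * n + 1 := by
  let S : Set ℕ := insert M {k | k < 2 * n ∧ Odd k}
  have mem_S (k : ℕ) : k ∈ S ↔ k = M ∨ k < 2 * n ∧ k % 2 = 1 := by
    rw [← Nat.odd_iff]
    rfl
  have inter_eq : Iio M ∩ S = {k | k < 2 * n ∧ Odd k} := by grind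
  have cover_eq : Iio M ∩ (S ∪ (· + 1) ⁻¹' S) = insert (M - 1) (Iio (2 * n)) := by
    ext k
    simp only [mem_inter_iff, mem_union, mem_preimage, mem_insert_iff, mem_S, mem_Iio]
    omega
  refine ⟨S, by grind, by grind, by rw [inter_eq, ncard_odd_lt_two_mul], ?_⟩
  rw [cover_eq, ncard_insert_of_notMem (by rw [mem_Iio]; omega), ncard_Iio_nat]

lemma exists_ncard_eq {n N M : ℕ} (hn : 1 ≤ n) (hnN : n + 1 ≤ N) (hN : N ≤ 2 * n + 1)
    (hM : N ≤ M) :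
    ∃ S : Set ℕ, 0 ∉ S ∧ 1 ∈ S ∧
      (Iio M ∩ S).ncard = n ∧ (Iio M ∩ (S ∪ (· + 1) ⁻¹' S)).ncard = N := by
  obtain h | rfl := hN.lt_or_eq
  · exact exists_ncard_eq_of_le_two_mul hnN (by omega) hM
  · exact exists_ncard_eq_two_mul_add_one hn hM

/-- For odd a ≥ 3 and all positive integers n, N with N ≤ (a+3)/2 and n+1 ≤ N ≤ 2n+1, there
is a tuple ξ with n(ξ) = n and N(ξ) = N. -/
theorem stmt13 (a : ℕ) (ha : Odd a) (ha3 : 3 ≤ a) (n N : ℕ) (hn : 1 ≤ n) (hN : 1 ≤ N)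
    (hNa : 2 * N ≤ a + 3) (h1 : n + 1 ≤ N) (h2 : N ≤ 2 * n + 1) :
    ∃ ξ : ℕ → ℝ, nrank a ξ = n ∧ Nrank a ξ = N := by
  obtain ⟨m, rfl⟩ := ha
  obtain ⟨S, hS0, hS1, hSn, hSN⟩ := exists_ncard_eq hn h1 h2 (show N ≤ m + 2 by omega)
  obtain ⟨y, hy1, rfl, hy⟩ :=
    exists_linearIndepOn_support_eq transcendental_rat_liouvilleNumber_two hS1
  obtain ⟨ξ, rfl⟩ := exists_augment_eq (notMem_support.1 hS0) hy1
  have weight_ne_zero (k : ℕ) (hk : augment ξ k = 0) : linkWeight k ≠ 0 :=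
    linkWeight_ne_zero fun h ↦ hS1 (h ▸ hk)
  refine ⟨ξ, ?_, ?_⟩
  · rw [nrank_eq_finrank_span_augment,
      finrank_span_image_of_linearIndepOn (hy.mono inter_subset_right), hSn]
  · rw [Nrank_eq_finrank_span_augment,
      finrank_span_image_prodMk_smul hy (add_left_injective 1) weight_ne_zero, hSN]
end

section
/- Assume hypotheses (S). Then every subspace F of ℝ^p that is defined over ℚ and contains e_1,…,e_k satisfies dim_ℝ F ≥ k + τ_1 + … + τ_k. -/
/-!
Let `d = dim F`, let `f` be a basis of `F` made of integer vectors, and let `g` be a basis of `F`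
extending `e_1, …, e_k`. For each `n`, some `d` of the forms are linearly independent on `F`.
Their values at `f` form an integer matrix of nonzero determinant, so their values at `g` form a
matrix whose determinant is bounded away from zero. On the other hand the column of `e_j` has size
`Q_n ^ (-τ_j + o(1))` and each of the other `d - k` columns has size `Q_n ^ (1 + o(1))`.
Letting `n → ∞` gives `0 ≤ d - k - ∑ τ_j`.
-/

open Filter Module Topology

theorem exists_basis_sum_inl_eq {κ K V : Type*} [DivisionRing K] [AddCommGroup V] [Module K V]
    {v : κ → V} (hv : LinearIndependent K v) :
    ∃ (μ : Set V) (g : Basis (κ ⊕ μ) K V), ∀ j, g (Sum.inl j) = v j := by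
  refine ⟨_, Basis.sumExtend hv, fun j => ?_⟩
  rw [Basis.sumExtend, Basis.reindex_apply]
  exact Basis.extend_apply_self _ _

section Determinants

variable {ι T R K V : Type*} [Fintype ι] [DecidableEq ι]

theorem abs_det_le_factorial_mul_prod [CommRing R] [LinearOrder R] [IsStrictOrderedRing R]
    {A : Matrix ι ι R} {b : ι → R} (hA : ∀ i j, |A i j| ≤ b j) :
    |A.det| ≤ (Fintype.card ι).factorial * ∏ j, b j :=
  calc |A.det| = |∑ σ : Equiv.Perm ι, (σ.sign : R) * ∏ j, A (σ j) j| := by rw [A.det_apply']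
    _ ≤ ∑ σ : Equiv.Perm ι, |(σ.sign : R) * ∏ j, A (σ j) j| := Finset.abs_sum_le_sum_abs _ _
    _ = ∑ σ : Equiv.Perm ι, ∏ j, |A (σ j) j| := by
      simp only [abs_mul, Finset.abs_prod, ← Int.cast_abs,
        Int.isUnit_iff_abs_eq.mp (Units.isUnit _), Int.cast_one, one_mul]
    _ ≤ ∑ _σ : Equiv.Perm ι, ∏ j, b j :=
      Finset.sum_le_sum fun σ _ => Finset.prod_le_prod (fun _ _ => abs_nonneg _) fun j _ => hA _ j
    _ = (Fintype.card ι).factorial * ∏ j, b j := by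
      rw [Finset.sum_const, Finset.card_univ, Fintype.card_perm, nsmul_eq_mul]

theorem one_le_abs_det_of_intCast [CommRing R] [LinearOrder R] [IsStrictOrderedRing R]
    {A : Matrix ι ι R} (hA : ∀ i j, ∃ z : ℤ, A i j = z) (hdet : A.det ≠ 0) : 1 ≤ |A.det| := by
  choose Z hZ using hA
  have hcast : A.det = ((Matrix.of Z).det : ℤ) := by
    rw [Int.cast_det]
    exact congrArg Matrix.det (Matrix.ext hZ)
  rw [hcast] at hdet ⊢
  exact_mod_cast Int.one_le_abs (Int.cast_ne_zero.mp hdet)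

theorem span_range_eq_top_of_forall_eq_zero [Field K] [AddCommGroup V] [Module K V]
    [FiniteDimensional K V] {φ : T → Dual K V} (hφ : ∀ v, (∀ t, φ t v = 0) → v = 0) :
    Submodule.span K (Set.range φ) = ⊤ := by
  have hbot : (Submodule.span K (Set.range φ)).dualCoannihilator = ⊥ := by
    refine (Submodule.eq_bot_iff _).mpr fun v hv => hφ v fun t => ?_
    exact (Submodule.mem_dualCoannihilator v).mp hv _ (Submodule.subset_span ⟨t, rfl⟩)
  rw [← Subspace.dualCoannihilator_dualAnnihilator_eq (W := Submodule.span K (Set.range φ)), hbot,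
    Submodule.dualAnnihilator_bot]

theorem exists_det_apply_ne_zero [Field K] [AddCommGroup V] [Module K V] (f : Basis ι K V)
    {φ : T → Dual K V} (hφ : ∀ v, (∀ t, φ t v = 0) → v = 0) :
    ∃ r : ι → T, (Matrix.of fun i j => φ (r i) (f j)).det ≠ 0 := by
  have : FiniteDimensional K V := f.finiteDimensional_of_finite
  obtain ⟨κ, a, -, hspan, hli⟩ := exists_linearIndependent' K φ
  rw [span_range_eq_top_of_forall_eq_zero hφ] at hspan
  let B : Basis κ K (Dual K V) := Basis.mk hli hspan.ge
  let B' : Basis ι K (Dual K V) := B.reindex (B.indexEquiv f.dualBasis)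
  refine ⟨fun i => a ((B.indexEquiv f.dualBasis).symm i), ?_⟩
  have hB' : (Matrix.of fun i j => φ (a ((B.indexEquiv f.dualBasis).symm i)) (f j)) =
      (f.dualBasis.toMatrix B').transpose := by
    ext i j
    simp [B', B, Basis.toMatrix_apply]
  rw [hB', Matrix.det_transpose, ← Basis.det_apply]
  exact (f.dualBasis.isUnit_det B').ne_zero

theorem abs_basis_det_le_of_intValued [Field K] [LinearOrder K] [IsStrictOrderedRing K]
    [AddCommGroup V] [Module K V] (f g : Basis ι K V) {φ : T → Dual K V} {b : ι → K}
    (hφ : ∀ v, (∀ t, φ t v = 0) → v = 0) (hint : ∀ t i, ∃ z : ℤ, φ t (f i) = z)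
    (hb : ∀ t i, |φ t (g i)| ≤ b i) :
    |f.det g| ≤ (Fintype.card ι).factorial * ∏ i, b i := by
  obtain ⟨r, hr⟩ := exists_det_apply_ne_zero f hφ
  have hmul : (Matrix.of fun i j => φ (r i) (g j)) =
      (Matrix.of fun i j => φ (r i) (f j)) * f.toMatrix g := by
    ext i j
    simp only [Matrix.of_apply, Matrix.mul_apply]
    rw [← f.sum_toMatrix_smul_self g j, map_sum]
    simp only [map_smul, smul_eq_mul, mul_comm]
  calc |f.det g|
      ≤ |(Matrix.of fun i j => φ (r i) (f j)).det| * |f.det g| :=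
        le_mul_of_one_le_left (abs_nonneg _) (one_le_abs_det_of_intCast (fun i => hint (r i)) hr)
    _ = |(Matrix.of fun i j => φ (r i) (g j)).det| := by
      rw [hmul, Matrix.det_mul, abs_mul, Basis.det_apply]
    _ ≤ (Fintype.card ι).factorial * ∏ i, b i := abs_det_le_factorial_mul_prod fun i => hb (r i)

end Determinants

section Asymptotics

variable {α : Type*} {L : Filter α} {Q : α → ℝ}

theorem tendsto_rpow_add_zero_of_neg {A : ℝ} {δ : α → ℝ} (hQ : Tendsto Q L atTop)
    (hδ : Tendsto δ L (𝓝 0)) (hA : A < 0) : Tendsto (fun n => Q n ^ (A + δ n)) L (𝓝 0) := by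
  have hexp : Tendsto (fun n => A + δ n) L (𝓝 A) := by simpa using hδ.const_add A
  have hlog : Tendsto (fun n => Real.log (Q n) * (A + δ n)) L atBot :=
    (Real.tendsto_log_atTop.comp hQ).atTop_mul_neg hA hexp
  refine (Real.tendsto_exp_atBot.comp hlog).congr' ?_
  filter_upwards [hQ.eventually_gt_atTop 0] with n hn using (Real.rpow_def_of_pos hn _).symm

theorem sum_exponents_nonneg_of_intValued [L.NeBot] {ι T V : Type*} [Fintype ι] [AddCommGroup V]
    [Module ℝ V] (f g : Basis ι ℝ V) {φ : α → T → Dual ℝ V} {a : ι → ℝ} {δ : α → ι → ℝ}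
    (hQ : Tendsto Q L atTop) (hδ : ∀ i, Tendsto (fun n => δ n i) L (𝓝 0))
    (hφ : ∀ᶠ n in L, ∀ v, (∀ t, φ n t v = 0) → v = 0)
    (hint : ∀ n t i, ∃ z : ℤ, φ n t (f i) = z)
    (hbound : ∀ i, ∃ C, ∀ᶠ n in L, ∀ t, |φ n t (g i)| ≤ C * Q n ^ (a i + δ n i)) :
    0 ≤ ∑ i, a i := by
  classical
  choose C hC using hbound
  by_contra! hneg
  have hδsum : Tendsto (fun n => ∑ i, δ n i) L (𝓝 0) := by
    simpa using tendsto_finsetSum Finset.univ fun i _ => hδ i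
  have hlim := (tendsto_rpow_add_zero_of_neg hQ hδsum hneg).const_mul
    ((Fintype.card ι).factorial * ∏ i, C i)
  rw [mul_zero] at hlim
  have hdet : ∀ᶠ n in L, |f.det g| ≤
      (Fintype.card ι).factorial * (∏ i, C i) * Q n ^ (∑ i, a i + ∑ i, δ n i) := by
    filter_upwards [hφ, eventually_all.mpr hC, hQ.eventually_gt_atTop 0] with n hsep hbd hpos
    calc |f.det g| ≤ (Fintype.card ι).factorial * ∏ i, C i * Q n ^ (a i + δ n i) :=
          abs_basis_det_le_of_intValued f g hsep (hint n) fun t i => hbd i t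
      _ = (Fintype.card ι).factorial * (∏ i, C i) * Q n ^ (∑ i, a i + ∑ i, δ n i) := by
        rw [Finset.prod_mul_distrib, ← Real.rpow_sum_of_pos hpos, Finset.sum_add_distrib, mul_assoc]
  have hzero : |f.det g| ≤ 0 := ge_of_tendsto hlim hdet
  exact (f.isUnit_det g).ne_zero (abs_nonpos_iff.mp hzero)

end Asymptotics

section RationalSubspaces

variable {ι : Type*}

/-- A subspace of `ℝ^ι` is defined over `ℚ` if it is spanned by vectors with rational
coordinates. -/
def IsDefinedOverRat (F : Submodule ℝ (EuclideanSpace ℝ ι)) : Prop :=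
  ∃ s : Set (EuclideanSpace ℝ ι),
    (∀ v ∈ s, ∀ i, ∃ q : ℚ, v i = (q : ℝ)) ∧ Submodule.span ℝ s = F

theorem exists_int_smul_eq_intCast [Finite ι] {v : EuclideanSpace ℝ ι}
    (hv : ∀ i, ∃ q : ℚ, v i = (q : ℝ)) :
    ∃ D : ℤ, D ≠ 0 ∧ ∀ i, ∃ z : ℤ, ((D : ℝ) • v) i = z := by
  choose q hq using hv
  obtain ⟨D, hD⟩ := IsLocalization.exist_integer_multiples_of_finite (nonZeroDivisors ℤ) q
  refine ⟨D, nonZeroDivisors.coe_ne_zero D, fun i => ?_⟩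
  obtain ⟨z, hz⟩ := hD i
  refine ⟨z, ?_⟩
  have hz' : (z : ℚ) = (D : ℤ) * q i := by simpa using hz
  rw [PiLp.smul_apply, smul_eq_mul, hq i]
  exact_mod_cast hz'.symm

theorem IsDefinedOverRat.exists_basis_intCast [Finite ι]
    {F : Submodule ℝ (EuclideanSpace ℝ ι)} (hF : IsDefinedOverRat F) :
    ∃ (B : Set (EuclideanSpace ℝ ι)) (f : Basis B ℝ F),
      ∀ b i, ∃ z : ℤ, (f b : EuclideanSpace ℝ ι) i = z := by
  obtain ⟨s, hs, rfl⟩ := hF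
  obtain ⟨B, hBs, hspan, hli⟩ := exists_linearIndependent ℝ s
  rw [← hspan]
  choose D hD hint using fun b : B => exists_int_smul_eq_intCast (hs b (hBs b.2))
  let f₀ : Basis B ℝ (Submodule.span ℝ B) :=
    (Basis.span hli).map (LinearEquiv.ofEq _ _ (by rw [Subtype.range_coe]))
  have hf₀ (b : B) : (f₀ b : EuclideanSpace ℝ ι) = b := by
    simp [f₀, Basis.span_apply]
  refine ⟨B, f₀.isUnitSMul fun b => (Int.cast_ne_zero.mpr (hD b) : (D b : ℝ) ≠ 0).isUnit, ?_⟩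
  intro b
  rw [Basis.isUnitSMul_apply, Submodule.coe_smul, hf₀]
  exact hint b

end RationalSubspaces

section LinearForms

variable {ι : Type*} [Fintype ι]

/-- The linear form `∑ i, c i * X_i` on `ℝ^ι` with integer coefficients `c`. -/
noncomputable def intLinearForm (c : ι → ℤ) : Dual ℝ (EuclideanSpace ℝ ι) :=
  ∑ i, (c i : ℝ) • (EuclideanSpace.proj i : EuclideanSpace ℝ ι →L[ℝ] ℝ).toLinearMap

theorem intLinearForm_apply (c : ι → ℤ) (v : EuclideanSpace ℝ ι) :
    intLinearForm c v = ∑ i, (c i : ℝ) * v i := by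
  simp [intLinearForm]

theorem exists_intLinearForm_eq_intCast (c : ι → ℤ) {v : EuclideanSpace ℝ ι}
    (hv : ∀ i, ∃ z : ℤ, v i = z) : ∃ z : ℤ, intLinearForm c v = z := by
  choose z hz using hv
  exact ⟨∑ i, c i * z i, by simp [intLinearForm_apply, hz]⟩

theorem abs_intLinearForm_le {c : ι → ℤ} {H : ℝ} (hc : ∀ i, |(c i : ℝ)| ≤ H)
    (v : EuclideanSpace ℝ ι) : |intLinearForm c v| ≤ (∑ i, |v i|) * H :=
  calc |intLinearForm c v| ≤ ∑ i, |(c i : ℝ) * v i| := by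
        rw [intLinearForm_apply]
        exact Finset.abs_sum_le_sum_abs _ _
    _ ≤ ∑ i, |v i| * H := Finset.sum_le_sum fun i _ => by
        rw [abs_mul, mul_comm]
        exact mul_le_mul_of_nonneg_left (hc i) (abs_nonneg _)
    _ = (∑ i, |v i|) * H := (Finset.sum_mul _ _ _).symm

theorem eq_zero_of_linearIndependent_of_intLinearForm_eq_zero {c : ι → ι → ℤ}
    (hc : LinearIndependent ℝ fun t i => (c t i : ℝ)) {v : EuclideanSpace ℝ ι}
    (hv : ∀ t, intLinearForm (c t) v = 0) : v = 0 := by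
  classical
  let M : Matrix ι ι ℝ := fun t i => c t i
  have hM : IsUnit M := Matrix.linearIndependent_rows_iff_isUnit.mp hc
  have hMv : M.mulVec v = M.mulVec 0 := by
    ext t
    simpa [M, Matrix.mulVec, dotProduct, intLinearForm_apply] using hv t
  exact WithLp.ofLp_injective 2 (Matrix.mulVec_injective_of_isUnit hM hMv)

end LinearForms

theorem stmt14_general {α ι κ T : Type*} [Fintype ι] [Fintype κ] {L : Filter α} [L.NeBot]
    {e : κ → EuclideanSpace ℝ ι} (he : LinearIndependent ℝ e) {τs : κ → ℝ} {Q εs θs : α → ℝ}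
    (hQ : Tendsto Q L atTop) (hεs : Tendsto εs L (𝓝 0)) (hθs : Tendsto θs L (𝓝 0))
    {F : Submodule ℝ (EuclideanSpace ℝ ι)} (hF : IsDefinedOverRat F) (heF : ∀ j, e j ∈ F)
    {l : α → T → ι → ℤ}
    (hsep : ∀ᶠ n in L, ∀ v ∈ F, (∀ t, intLinearForm (l n t) v = 0) → v = 0)
    (hL : ∀ᶠ n in L, ∀ t j, |intLinearForm (l n t) (e j)| ≤ Q n ^ (-τs j + εs n))
    (hl : ∀ᶠ n in L, ∀ t i, |(l n t i : ℝ)| ≤ Q n ^ (1 + θs n)) :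
    (Fintype.card κ : ℝ) + ∑ j, τs j ≤ finrank ℝ F := by
  have heF' : LinearIndependent ℝ fun j => (⟨e j, heF j⟩ : F) := .of_comp F.subtype he
  obtain ⟨μ, g, hg⟩ := exists_basis_sum_inl_eq heF'
  obtain ⟨B, f, hf⟩ := hF.exists_basis_intCast
  have : Finite (κ ⊕ μ) := Module.Finite.finite_basis g
  have : Fintype μ := @Fintype.ofFinite μ (Finite.sum_right κ)
  let φ (n : α) (t : T) : Dual ℝ F := (intLinearForm (l n t)).domRestrict F
  have hnonneg : 0 ≤ ∑ i, (Sum.elim (fun j => -τs j) (fun _ => 1) : κ ⊕ μ → ℝ) i := by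
    refine sum_exponents_nonneg_of_intValued (f.reindex (f.indexEquiv g)) g (φ := φ)
      (δ := fun n => Sum.elim (fun _ => εs n) (fun _ => θs n)) hQ ?_ ?_ ?_ ?_
    · exact Sum.rec (fun _ => hεs) (fun _ => hθs)
    · exact hsep.mono fun n hn v hv => Subtype.ext (hn v v.2 hv)
    · intro n t i
      rw [Basis.reindex_apply]
      exact exists_intLinearForm_eq_intCast _ (hf _)
    · rintro (j | m)
      · refine ⟨1, hL.mono fun n hn t => ?_⟩
        simpa [φ, hg] using hn t j
      · exact ⟨_, hl.mono fun n hn t => abs_intLinearForm_le (hn t) _⟩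
  have hdim : (finrank ℝ F : ℝ) = Fintype.card κ + Fintype.card μ := by
    rw [finrank_eq_card_basis g]
    simp
  simp only [Fintype.sum_sum_type, Sum.elim_inl, Sum.elim_inr, Finset.sum_neg_distrib,
    Finset.sum_const, Finset.card_univ, nsmul_eq_mul, mul_one] at hnonneg
  linarith

/-- Siegel-type criterion: under hypotheses (S), every subspace F of ℝ^p defined over ℚ
containing e_1,…,e_k satisfies dim F ≥ k + τ_1 + … + τ_k. -/
theorem stmt14
    (k p : ℕ) (hk : 1 ≤ k) (hkp : k ≤ p - 1)
    (e : Fin k → EuclideanSpace ℝ (Fin p)) (he : LinearIndependent ℝ e)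
    (τs : Fin k → ℝ) (hτpos : ∀ j, 0 < τs j)
    (Q : ℕ → ℕ) (hQmono : StrictMono Q) (hQpos : ∀ n, 0 < Q n)
    (l : ℕ → Fin p → Fin p → ℤ)
    (hind : ∀ n : ℕ, 1 ≤ n →
      LinearIndependent ℝ (fun t : Fin p => fun i : Fin p => (l n t i : ℝ)))
    (εs θs : ℕ → ℝ)
    (hεs : Filter.Tendsto εs Filter.atTop (nhds 0))
    (hθs : Filter.Tendsto θs Filter.atTop (nhds 0))
    (hL : ∀ n : ℕ, 1 ≤ n → ∀ t : Fin p, ∀ j : Fin k,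
      |∑ i, (l n t i : ℝ) * e j i| ≤ (Q n : ℝ) ^ (-τs j + εs n))
    (hl : ∀ n : ℕ, 1 ≤ n → ∀ t i, |(l n t i : ℝ)| ≤ (Q n : ℝ) ^ (1 + θs n))
    :
    ∀ F : Submodule ℝ (EuclideanSpace ℝ (Fin p)),
      (∃ s : Set (EuclideanSpace ℝ (Fin p)),
        (∀ v ∈ s, ∀ i, ∃ q : ℚ, v i = (q : ℝ)) ∧ Submodule.span ℝ s = F) →
      (∀ j, e j ∈ F) →
      (k : ℝ) + ∑ j, τs j ≤ (Module.finrank ℝ F : ℝ) := by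
  intro F hF heF
  have hQ : Tendsto (fun n => (Q n : ℝ)) atTop atTop :=
    tendsto_natCast_atTop_atTop.comp hQmono.tendsto_atTop
  have hpos : ∀ᶠ n : ℕ in atTop, 1 ≤ n := eventually_ge_atTop 1
  simpa only [Fintype.card_fin] using stmt14_general he hQ hεs hθs hF heF
    (hpos.mono fun n hn v _ => eq_zero_of_linearIndependent_of_intLinearForm_eq_zero (hind n hn))
    (hpos.mono fun n hn t j => by simpa only [intLinearForm_apply] using hL n hn t j) (hpos.mono hl)
end
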